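/- arXiv:2601.18590 — 2 statements merged into one kernel-verified Lean document; each statement's English description precedes it below -/
import Mathlib

section
/- Let q be a prime power and let δ ∈ (0, 1 − 1/q²) be a constant. Then there exists a constant c_δ > 0, depending only on q and δ, such that for all sufficiently large n the following holds with d = ⌊δn⌋: if k is an integer with 1 ≤ k ≤ n satisfying (q^{2n−k} − 1)/(q − 1) < c_δ · √n · q^{2n} / ∑_{i=0}^{d−1} C(n,i)(q²−1)^i, then there exists a k-dimensional linear subspace C ⊆ 𝔽_q^{2n} that is symplectic self-orthogonal (C ⊆ C^{⊥_S}) and such that every nonzero vector of C^{⊥_S} has symplectic weight at least d, i.e., d_S(C^{⊥_S}) ≥ d. -/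
open Finset
open scoped Classical

/-- Symplectic weight of a vector in `F^{2n}`, written as `Fin n → F × F`. -/
noncomputable def sympWt {F : Type} [Zero F] [DecidableEq F] {n : ℕ} (u : Fin n → F × F) : ℕ :=
  hammingNorm u

/-- The symplectic inner product on `F^{2n}`: `⟨(a|b),(a'|b')⟩_S = ⟨a,b'⟩ - ⟨b,a'⟩`. -/
def sympInner {F : Type} [Field F] {n : ℕ} (u v : Fin n → F × F) : F :=
  ∑ i, ((u i).1 * (v i).2 - (u i).2 * (v i).1)

set_option linter.all false

section Core1

variable {F : Type} [Field F] [Fintype F] {ι : Type} [Fintype ι]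

def qgvOm (x y : ι → F × F) : F := ∑ i, ((x i).1 * (y i).2 - (x i).2 * (y i).1)

def qgvAl : (ι → F × F) →ₗ[F] (ι → F) where
  toFun x := fun i => (x i).1
  map_add' x y := by ext i; simp
  map_smul' c x := by ext i; simp

def qgvBe : (ι → F × F) →ₗ[F] (ι → F) where
  toFun x := fun i => (x i).2
  map_add' x y := by ext i; simp
  map_smul' c x := by ext i; simp

lemma qgvOm_eq (x y : ι → F × F) : qgvOm x y = qgvAl x ⬝ᵥ qgvBe y - qgvBe x ⬝ᵥ qgvAl y := by
  simp [qgvOm, qgvAl, qgvBe, dotProduct]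

lemma qgv_ext (x : ι → F × F) (h1 : qgvAl x = 0) (h2 : qgvBe x = 0) : x = 0 := by
  funext i
  have := congrFun h1 i
  have := congrFun h2 i
  simp_all [qgvAl, qgvBe, Prod.ext_iff]

noncomputable def qgvSym (t : Finset (ι → F × F)) : Finset (Matrix ι ι F) :=
  univ.filter (fun A => A.IsSymm ∧ ∀ x ∈ t, A.mulVec (qgvAl x) = qgvBe x)

lemma qgv_dual (s : Set (ι → F)) (v : ι → F) (hv : v ∉ Submodule.span F s) :
    ∃ f : ι → F, f ⬝ᵥ v = 1 ∧ ∀ y ∈ s, f ⬝ᵥ y = 0 := by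
  obtain ⟨φ, h1, h2⟩ := Submodule.exists_le_ker_of_notMem hv
  have key : ∀ w : ι → F, (fun i => φ (Pi.single i 1)) ⬝ᵥ w = φ w := by
    intro w
    rw [LinearMap.pi_apply_eq_sum_univ φ w]
    simp only [dotProduct, smul_eq_mul]
    refine Finset.sum_congr rfl fun i _ => ?_
    rw [mul_comm]
    congr 2
    funext j
    simp [Pi.single_apply, eq_comm]
  refine ⟨(φ v)⁻¹ • fun i => φ (Pi.single i 1), ?_, ?_⟩
  · rw [smul_dotProduct, key, smul_eq_mul, inv_mul_cancel₀ h1]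
  · intro y hy
    rw [smul_dotProduct, key, show φ y = 0 from h2 (Submodule.subset_span hy), smul_zero]

lemma qgv_fiber {A B : Type} [DecidableEq B] (s : Finset A) (t : Finset B) (g : A → B)
    (hg : ∀ a ∈ s, g a ∈ t) (b₀ : B)
    (h : ∀ b ∈ t, (s.filter (fun a => g a = b)).card = (s.filter (fun a => g a = b₀)).card) :
    s.card = t.card * (s.filter (fun a => g a = b₀)).card := by
  rw [Finset.card_eq_sum_card_fiberwise hg, Finset.sum_congr rfl h, Finset.sum_const, smul_eq_mul]

lemma qgv_affine (t : Finset (ι → F × F)) (ht : LinearIndepOn F (qgvAl (F := F) (ι := ι)) (t : Set _))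
    (c : (ι → F × F) → F) :
    (univ.filter (fun b : ι → F => ∀ y ∈ t, b ⬝ᵥ qgvAl y = c y)).card * Fintype.card F ^ t.card
      = Fintype.card F ^ Fintype.card ι := by
  induction t using Finset.induction_on with
  | empty => simp
  | insert x t hx ih =>
    rw [Finset.coe_insert, linearIndepOn_insert (by simpa using hx)] at ht
    obtain ⟨f, hf1, hf2⟩ := qgv_dual _ _ ht.2
    rw [← ih ht.1, Finset.card_insert_of_notMem hx]
    have := qgv_fiber (univ.filter (fun b : ι → F => ∀ y ∈ t, b ⬝ᵥ qgvAl y = c y)) (univ : Finset F)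
      (fun b => b ⬝ᵥ qgvAl x) (by simp) (c x) (by
        intro e _
        refine Finset.card_bij' (fun b _ => b + (c x - e) • f) (fun b _ => b - (c x - e) • f) ?_ ?_ ?_ ?_
        · intro b hb
          simp only [Finset.mem_filter, Finset.mem_univ, true_and] at hb ⊢
          refine ⟨fun y hy => ?_, ?_⟩
          · rw [add_dotProduct, smul_dotProduct, hf2 _ ⟨y, hy, rfl⟩, hb.1 y hy]; simp
          · rw [add_dotProduct, smul_dotProduct, hf1, hb.2]; simp
        · intro b hb
          simp only [Finset.mem_filter, Finset.mem_univ, true_and] at hb ⊢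
          refine ⟨fun y hy => ?_, ?_⟩
          · rw [sub_dotProduct, smul_dotProduct, hf2 _ ⟨y, hy, rfl⟩, hb.1 y hy]; simp
          · rw [sub_dotProduct, smul_dotProduct, hf1, hb.2]; simp
        · intro b _; simp
        · intro b _; simp)
    rw [this, Finset.card_univ, Finset.filter_filter, pow_succ]
    have h2 : (univ.filter (fun b : ι → F => ∀ y ∈ insert x t, b ⬝ᵥ qgvAl y = c y)) =
      (univ.filter (fun b : ι → F => (∀ y ∈ t, b ⬝ᵥ qgvAl y = c y) ∧ b ⬝ᵥ qgvAl x = c x)) := by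
      ext b; simp [and_comm]
    rw [h2]; ring

lemma qgv_sym_insert (t : Finset (ι → F × F)) (x : ι → F × F) (hx : x ∉ t)
    (ht : LinearIndepOn F (qgvAl (F := F) (ι := ι)) (insert x t : Finset _))
    (ho : ∀ y ∈ t, qgvOm x y = 0) :
    (qgvSym (insert x t)).card * Fintype.card F ^ Fintype.card ι
      = (qgvSym t).card * Fintype.card F ^ t.card := by
  rw [Finset.coe_insert, linearIndepOn_insert (by simpa using hx)] at ht
  obtain ⟨f, hf1, hf2⟩ := qgv_dual _ _ ht.2
  have haff := qgv_affine t ht.1 (fun y => qgvAl x ⬝ᵥ qgvBe y)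
  have hbx : ∀ y ∈ t, qgvBe x ⬝ᵥ qgvAl y = qgvAl x ⬝ᵥ qgvBe y := by
    intro y hy
    have := ho y hy
    rw [qgvOm_eq, sub_eq_zero] at this
    exact this.symm
  have := qgv_fiber (qgvSym t)
    (univ.filter (fun b : ι → F => ∀ y ∈ t, b ⬝ᵥ qgvAl y = qgvAl x ⬝ᵥ qgvBe y))
      (fun A => A.mulVec (qgvAl x)) (by
        intro A hA
        simp only [qgvSym, Finset.mem_filter, Finset.mem_univ, true_and] at hA ⊢
        intro y hy
        rw [← hA.2 y hy, Matrix.dotProduct_mulVec, ← Matrix.mulVec_transpose, hA.1.eq]) (qgvBe x) (by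
        intro e he
        simp only [Finset.mem_filter, Finset.mem_univ, true_and] at he
        set d : ι → F := qgvBe x - e with hd
        have hdy : ∀ y ∈ t, d ⬝ᵥ qgvAl y = 0 := by
          intro y hy
          rw [hd, sub_dotProduct, he y hy, hbx y hy, sub_self]
        set A₀ : Matrix ι ι F := Matrix.vecMulVec d f + Matrix.vecMulVec f d
          - (d ⬝ᵥ qgvAl x) • Matrix.vecMulVec f f with hA₀
        have hs : A₀.IsSymm := by
          ext i j
          simp [hA₀, Matrix.vecMulVec_apply]; ring
        have hm : ∀ v, A₀.mulVec v = (f ⬝ᵥ v) • d + (d ⬝ᵥ v) • f - ((d ⬝ᵥ qgvAl x) * (f ⬝ᵥ v)) • f := by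
          intro v
          rw [hA₀, Matrix.sub_mulVec, Matrix.add_mulVec, Matrix.smul_mulVec]
          simp only [Matrix.vecMulVec_mulVec]
          ext i; simp; ring
        have h1 : A₀.mulVec (qgvAl x) = d := by
          rw [hm, hf1]; ext i; simp
        have h2 : ∀ y ∈ t, A₀.mulVec (qgvAl y) = 0 := by
          intro y hy
          rw [hm, hf2 _ ⟨y, hy, rfl⟩, hdy y hy]; ext i; simp
        refine Finset.card_bij' (fun A _ => A + A₀) (fun A _ => A - A₀) ?_ ?_ ?_ ?_
        · intro A hA
          simp only [qgvSym, Finset.mem_filter, Finset.mem_univ, true_and] at hA ⊢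
          refine ⟨⟨hA.1.1.add hs, fun y hy => ?_⟩, ?_⟩
          · rw [Matrix.add_mulVec, hA.1.2 y hy, h2 y hy, add_zero]
          · rw [Matrix.add_mulVec, hA.2, h1, hd]; abel
        · intro A hA
          simp only [qgvSym, Finset.mem_filter, Finset.mem_univ, true_and] at hA ⊢
          refine ⟨⟨hA.1.1.sub hs, fun y hy => ?_⟩, ?_⟩
          · rw [Matrix.sub_mulVec, hA.1.2 y hy, h2 y hy, sub_zero]
          · rw [Matrix.sub_mulVec, hA.2, h1, hd]; abel
        · intro b _; simp
        · intro b _; simp)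
  have h2 : qgvSym (insert x t) = (qgvSym t).filter (fun A => A.mulVec (qgvAl x) = qgvBe x) := by
    ext A; simp [qgvSym]; tauto
  rw [h2, this, ← haff]; ring

/-- exact count -/
lemma qgv_sym_card (t : Finset (ι → F × F))
    (ht : LinearIndepOn F (qgvAl (F := F) (ι := ι)) (t : Set _))
    (ho : ∀ x ∈ t, ∀ y ∈ t, qgvOm x y = 0) :
    (qgvSym t).card * Fintype.card F ^ (t.card * Fintype.card ι)
      = (qgvSym (∅ : Finset (ι → F × F))).card * Fintype.card F ^ (t.card.choose 2) := by
  induction t using Finset.induction_on with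
  | empty => simp
  | insert x t hx ih =>
    have h1 := qgv_sym_insert t x hx ht (fun y hy => ho x (by simp) y (by simp [hy]))
    have h2 := ih (ht.mono (by simp)) (fun a ha b hb => ho a (by simp [ha]) b (by simp [hb]))
    rw [Finset.card_insert_of_notMem hx, Nat.choose_succ_succ' t.card 1, Nat.choose_one_right, pow_add,
      add_mul, pow_add, one_mul]
    calc _ = (qgvSym (insert x t)).card * Fintype.card F ^ Fintype.card ι * Fintype.card F ^ (t.card * Fintype.card ι) := by ring
      _ = (qgvSym t).card * Fintype.card F ^ (t.card * Fintype.card ι) * Fintype.card F ^ t.card := by rw [h1]; ring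
      _ = _ := by rw [h2]; ring

lemma qgv_sym_nonempty : 0 < (qgvSym (∅ : Finset (ι → F × F))).card := by
  apply Finset.card_pos.mpr
  exact ⟨0, by simp [qgvSym, Matrix.IsSymm]⟩

/-- upper bound for linearly independent sets -/
lemma qgv_sym_card_le (t : Finset (ι → F × F))
    (ht : LinearIndepOn F (id : (ι → F × F) → (ι → F × F)) (t : Set _)) :
    (qgvSym t).card * Fintype.card F ^ (t.card * Fintype.card ι)
      ≤ (qgvSym (∅ : Finset (ι → F × F))).card * Fintype.card F ^ (t.card.choose 2) := by
  by_cases hne : (qgvSym t).card = 0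
  · rw [hne]; simp
  obtain ⟨A, hA⟩ := Finset.card_pos.mp (Nat.pos_of_ne_zero hne)
  simp only [qgvSym, Finset.mem_filter, Finset.mem_univ, true_and] at hA
  refine (qgv_sym_card t ?_ ?_).le
  · rw [linearIndepOn_finset_iff] at ht ⊢
    intro g hg i hi
    refine ht g ?_ i hi
    apply qgv_ext
    · simpa using hg
    · rw [map_sum]
      have : ∑ i ∈ t, g i • A.mulVec (qgvAl i) = 0 := by
        have h := congrArg (fun v => A.mulVec v) hg
        simpa [Matrix.mulVec_sum, Matrix.mulVec_smul] using h
      rw [← this]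
      refine Finset.sum_congr rfl fun x hx => ?_
      rw [hA.2 x hx]; simp
  · intro x hx y hy
    rw [qgvOm_eq, ← hA.2 x hx, ← hA.2 y hy, Matrix.dotProduct_mulVec, ← Matrix.mulVec_transpose,
      hA.1.eq, sub_self]

end Core1



section Core2

variable {F : Type} [Field F] [Fintype F] {ι : Type} [Fintype ι]

def qgvGood (I Z : Set (ι → F × F)) (t : Finset (ι → F × F)) : Prop :=
  ∀ l : (ι → F × F) → F, (∃ x ∈ t, l x ≠ 0) →
    (∑ x ∈ t, l x • x) ∉ Z ∧ (2 ≤ (t.filter (fun x => l x ≠ 0)).card → (∑ x ∈ t, l x • x) ∉ I)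

structure QgvHyp (I' : Finset (ι → F × F)) (I Z : Set (ι → F × F)) (θ : ℝ) : Prop where
  sub : ∀ x ∈ I', x ∈ I
  nz : (0 : ι → F × F) ∉ I'
  Zal : ∀ x, qgvAl x = 0 → x ∈ Z
  Zs : ∀ c : F, c ≠ 0 → ∀ x ∈ Z, c • x ∈ Z
  Is : ∀ c : F, c ≠ 0 → ∀ x ∈ I, c • x ∈ I
  prop : ∀ x ∈ I', ∀ y ∈ I', ∀ c : F, x = c • y → x = y
  b1 : ∀ y, ((I'.filter (fun x => x + y ∈ Z)).card : ℝ) ≤ θ * I'.card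
  b3 : ∀ y, y ∉ Z → ((I'.filter (fun x => x + y ∈ I)).card : ℝ) ≤ θ * I'.card
  eq : ∀ t, qgvGood I Z t →
    |((I'.filter (fun x => ∀ y ∈ t, qgvOm x y = 0)).card : ℝ)
      - I'.card / (Fintype.card F : ℝ) ^ t.card| ≤ θ * I'.card

variable {I' : Finset (ι → F × F)} {I Z : Set (ι → F × F)} {θ : ℝ}

lemma qgvGood_empty : qgvGood I Z ∅ := by
  intro l h; simp at h

lemma qgvGood_mono {s t : Finset (ι → F × F)} (hst : s ⊆ t) (h : qgvGood I Z t) : qgvGood I Z s := by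
  intro l hl
  obtain ⟨x, hx, hlx⟩ := hl
  have := h (fun x => if x ∈ s then l x else 0) ⟨x, hst hx, by simp [hx, hlx]⟩
  have e1 : ∑ x ∈ t, (if x ∈ s then l x else 0) • x = ∑ x ∈ s, l x • x := by
    simp only [ite_smul, zero_smul]
    rw [← Finset.sum_filter]
    congr 1
    ext y; simp; exact fun h => hst h
  have e2 : t.filter (fun x => (if x ∈ s then l x else 0) ≠ 0) = s.filter (fun x => l x ≠ 0) := by
    ext y
    simp only [Finset.mem_filter, ne_eq, ite_eq_right_iff, not_forall]
    constructor
    · rintro ⟨_, h1, h2⟩; exact ⟨h1, h2⟩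
    · rintro ⟨h1, h2⟩; exact ⟨hst h1, h1, h2⟩
  rw [e1, e2] at this
  exact this

lemma QgvHyp.good_indep (H : QgvHyp I' I Z θ) {t : Finset (ι → F × F)} (h : qgvGood I Z t) :
    LinearIndepOn F (qgvAl (F := F) (ι := ι)) (t : Set _) := by
  rw [linearIndepOn_finset_iff]
  intro g hg i hi
  by_contra hne
  refine (h g ⟨i, hi, hne⟩).1 (H.Zal _ ?_)
  simpa using hg

lemma QgvHyp.good_span (H : QgvHyp I' I Z θ) {t : Finset (ι → F × F)} (h : qgvGood I Z t) (ht : t ⊆ I')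
    {x : ι → F × F} (hx : x ∈ I') (hs : x ∈ Submodule.span F (t : Set (ι → F × F))) : x ∈ t := by
  rw [Submodule.mem_span_finset] at hs
  obtain ⟨l, hl, hsum⟩ := hs
  have hne : ∃ y ∈ t, l y ≠ 0 := by
    by_contra hcon
    push Not at hcon
    apply H.nz
    rw [Finset.sum_eq_zero (fun y hy => by rw [hcon y hy, zero_smul])] at hsum
    rwa [hsum]
  have h2 := (h l hne).2
  rw [hsum] at h2
  have h3 : (t.filter (fun x => l x ≠ 0)).card < 2 := by
    by_contra hcon
    exact h2 (by omega) (H.sub x hx)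
  obtain ⟨y, hy, hly⟩ := hne
  have h4 : ∀ z ∈ t, z ≠ y → l z • z = 0 := by
    intro z hz hzy
    by_contra hcon
    have hlz : l z ≠ 0 := fun h0 => hcon (by rw [h0, zero_smul])
    have : ({z, y} : Finset (ι → F × F)) ⊆ t.filter (fun x => l x ≠ 0) := by
      intro w hw
      simp only [Finset.mem_insert, Finset.mem_singleton] at hw
      rcases hw with rfl | rfl <;> simp [*]
    have := Finset.card_le_card this
    rw [Finset.card_pair hzy] at this
    omega
  rw [Finset.sum_eq_single_of_mem y hy h4] at hsum
  rw [H.prop x hx y (ht hy) (l y) hsum.symm]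
  exact hy

noncomputable def qgvBad (I' : Finset (ι → F × F)) (I Z : Set (ι → F × F)) (t : Finset (ι → F × F)) :
    Finset (ι → F × F) :=
  I'.filter (fun x => ∃ g : t → F, x + ∑ y, g y • (y : ι → F × F) ∈ Z ∨
    ((∑ y, g y • (y : ι → F × F)) ∉ Z ∧ x + ∑ y, g y • (y : ι → F × F) ∈ I))

lemma QgvHyp.bad_card (H : QgvHyp I' I Z θ) (t : Finset (ι → F × F)) :
    ((qgvBad I' I Z t).card : ℝ) ≤ 2 * θ * I'.card * (Fintype.card F : ℝ) ^ t.card := by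
  have hsub : qgvBad I' I Z t ⊆ (univ : Finset (t → F)).biUnion (fun g =>
      (I'.filter (fun x => x + ∑ y, g y • (y : ι → F × F) ∈ Z)) ∪
      (I'.filter (fun x => (∑ y, g y • (y : ι → F × F)) ∉ Z ∧ x + ∑ y, g y • (y : ι → F × F) ∈ I))) := by
    intro x hx
    simp only [qgvBad, Finset.mem_filter] at hx
    obtain ⟨hx, g, hg⟩ := hx
    simp only [Finset.mem_biUnion, Finset.mem_univ, true_and, Finset.mem_union, Finset.mem_filter]
    refine ⟨g, ?_⟩
    tauto
  have hθ : 0 ≤ θ * I'.card := le_trans (Nat.cast_nonneg _) (H.b1 0)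
  have h1 : ((qgvBad I' I Z t).card : ℝ) ≤ ∑ g : t → F, (2 * θ * I'.card) := by
    refine le_trans (Nat.cast_le.mpr ((Finset.card_le_card hsub).trans Finset.card_biUnion_le)) ?_
    push_cast
    refine Finset.sum_le_sum fun g _ => ?_
    refine le_trans (Nat.cast_le.mpr (Finset.card_union_le _ _)) ?_
    push_cast
    have a1 := H.b1 (∑ y, g y • (y : ι → F × F))
    by_cases hz : (∑ y, g y • (y : ι → F × F)) ∈ Z
    · simp only [hz, not_true_eq_false, false_and, Finset.filter_false, Finset.card_empty]
      push_cast; linarith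
    · have a2 := H.b3 _ hz
      simp only [hz, not_false_eq_true, true_and]
      linarith
  refine h1.trans (le_of_eq ?_)
  rw [Finset.sum_const, Finset.card_univ, Fintype.card_fun, Fintype.card_coe]
  simp; ring

lemma QgvHyp.not_bad (H : QgvHyp I' I Z θ) {t : Finset (ι → F × F)} (h : qgvGood I Z t) 
    {x : ι → F × F} (hx : x ∈ I') (hb : x ∉ qgvBad I' I Z t) : x ∉ t ∧ qgvGood I Z (insert x t) := by
  have hb' : ∀ g : (ι → F × F) → F, x + ∑ y ∈ t, g y • y ∉ Z ∧
      ((∑ y ∈ t, g y • y) ∉ Z → x + ∑ y ∈ t, g y • y ∉ I) := by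
    intro g
    by_contra hcon
    apply hb
    simp only [qgvBad, Finset.mem_filter]
    refine ⟨hx, fun y => g y, ?_⟩
    rw [Finset.sum_coe_sort t (fun y => g y • y)]
    tauto
  have hxt : x ∉ t := by
    intro hxt
    have := (hb' (fun y => if y = x then -1 else 0)).1
    apply this
    simp only [ite_smul, zero_smul, Finset.sum_ite_eq', hxt, if_true]
    apply H.Zal
    simp
  refine ⟨hxt, ?_⟩
  intro l hl
  by_cases hlx : l x = 0
  · obtain ⟨y, hy, hly⟩ := hl
    have hyt : y ∈ t := by
      rcases Finset.mem_insert.mp hy with rfl | h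
      · exact absurd hlx hly
      · exact h
    have := h l ⟨y, hyt, hly⟩
    rw [Finset.sum_insert hxt, hlx, zero_smul, zero_add, Finset.filter_insert]
    simpa [hlx] using this
  · have e : ∑ y ∈ insert x t, l y • y = l x • (x + ∑ y ∈ t, ((l x)⁻¹ * l y) • y) := by
      rw [Finset.sum_insert hxt, smul_add, Finset.smul_sum]
      congr 1
      refine Finset.sum_congr rfl fun y _ => ?_
      rw [smul_smul, mul_inv_cancel_left₀ hlx]
    have hbb := hb' (fun y => (l x)⁻¹ * l y)
    have hinv : (l x)⁻¹ ≠ 0 := inv_ne_zero hlx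
    refine ⟨fun hz => hbb.1 ?_, fun h2 hI => hbb.2 ?_ ?_⟩
    · have := H.Zs _ hinv _ hz
      rwa [e, smul_smul, inv_mul_cancel₀ hlx, one_smul] at this
    · rw [Finset.filter_insert, if_pos hlx, Finset.card_insert_of_notMem (by simp [hxt])] at h2
      have : 0 < (t.filter (fun x => l x ≠ 0)).card := by omega
      obtain ⟨y, hy⟩ := Finset.card_pos.mp this
      simp only [Finset.mem_filter] at hy
      exact (h (fun y => (l x)⁻¹ * l y) ⟨y, hy.1, mul_ne_zero hinv hy.2⟩).1
    · have := H.Is _ hinv _ hI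
      rwa [e, smul_smul, inv_mul_cancel₀ hlx, one_smul] at this

lemma qgvOm_self (x : ι → F × F) : qgvOm x x = 0 := by
  rw [qgvOm]
  exact Finset.sum_eq_zero fun i _ => by ring

lemma qgvOm_symm {x y : ι → F × F} (h : qgvOm x y = 0) : qgvOm y x = 0 := by
  rw [← neg_eq_zero, ← h, qgvOm, qgvOm, ← Finset.sum_neg_distrib]
  exact Finset.sum_congr rfl fun i _ => by ring

def qgvIso (t : Finset (ι → F × F)) : Prop := ∀ x ∈ t, ∀ y ∈ t, qgvOm x y = 0

noncomputable def qgvG (I' : Finset (ι → F × F)) (I Z : Set (ι → F × F)) (j : ℕ) :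
    Finset (Finset (ι → F × F)) :=
  (I'.powersetCard j).filter (fun t => qgvGood I Z t ∧ qgvIso t)

noncomputable def qgvExt (I' : Finset (ι → F × F)) (I Z : Set (ι → F × F)) (t : Finset (ι → F × F)) :
    Finset (ι → F × F) :=
  I'.filter (fun x => x ∉ t ∧ qgvGood I Z (insert x t) ∧ qgvIso (insert x t))

lemma qgvIso_insert {t : Finset (ι → F × F)} (ht : qgvIso t) {x : ι → F × F}
    (h : ∀ y ∈ t, qgvOm x y = 0) : qgvIso (insert x t) := by
  intro a ha b hb
  rw [Finset.mem_insert] at ha hb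
  rcases ha with rfl | ha <;> rcases hb with rfl | hb
  · exact qgvOm_self _
  · exact h b hb
  · exact qgvOm_symm (h a ha)
  · exact ht a ha b hb

lemma QgvHyp.ext_card (H : QgvHyp I' I Z θ) {t : Finset (ι → F × F)} (h : qgvGood I Z t) (hi : qgvIso t) :
    |((qgvExt I' I Z t).card : ℝ) - I'.card / (Fintype.card F : ℝ) ^ t.card| ≤
      θ * I'.card + 2 * θ * I'.card * (Fintype.card F : ℝ) ^ t.card := by
  have h1 := H.eq t h
  have h2 := H.bad_card t
  set E := I'.filter (fun x => ∀ y ∈ t, qgvOm x y = 0) with hE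
  have s1 : qgvExt I' I Z t ⊆ E := by
    intro x hx
    simp only [qgvExt, Finset.mem_filter, hE] at hx ⊢
    exact ⟨hx.1, fun y hy => hx.2.2.2 x (by simp) y (by simp [hy])⟩
  have s2 : E ⊆ qgvExt I' I Z t ∪ qgvBad I' I Z t := by
    intro x hx
    simp only [hE, Finset.mem_filter] at hx
    rw [Finset.mem_union]
    by_cases hb : x ∈ qgvBad I' I Z t
    · exact Or.inr hb
    · left
      have := H.not_bad h hx.1 hb
      simp only [qgvExt, Finset.mem_filter]
      exact ⟨hx.1, this.1, this.2, qgvIso_insert hi hx.2⟩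
  have c1 : ((qgvExt I' I Z t).card : ℝ) ≤ E.card := Nat.cast_le.mpr (Finset.card_le_card s1)
  have c2 : (E.card : ℝ) ≤ (qgvExt I' I Z t).card + (qgvBad I' I Z t).card := by
    exact_mod_cast (Finset.card_le_card s2).trans (Finset.card_union_le _ _)
  rw [abs_le] at h1 ⊢
  constructor <;> linarith [h1.1, h1.2]

lemma qgvG_succ (j : ℕ) :
    (j + 1) * (qgvG I' I Z (j + 1)).card = ∑ t ∈ qgvG I' I Z j, (qgvExt I' I Z t).card := by
  have : ∑ u ∈ qgvG I' I Z (j + 1), u.card = (j + 1) * (qgvG I' I Z (j + 1)).card := by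
    rw [Finset.sum_congr rfl (g := fun _ => j + 1), Finset.sum_const, smul_eq_mul, mul_comm]
    intro u hu
    simp only [qgvG, Finset.mem_filter, Finset.mem_powersetCard] at hu
    exact hu.1.2
  rw [← this, ← Finset.card_sigma, ← Finset.card_sigma]
  refine Finset.card_bij' (fun (p : (_ : Finset (ι → F × F)) × (ι → F × F)) _ => ⟨p.1.erase p.2, p.2⟩)
    (fun p _ => ⟨insert p.2 p.1, p.2⟩) ?_ ?_ ?_ ?_
  · rintro ⟨u, x⟩ hu
    simp only [Finset.mem_sigma, qgvG, qgvExt, Finset.mem_filter, Finset.mem_powersetCard] at hu ⊢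
    obtain ⟨⟨⟨h1, h2⟩, h3, h4⟩, h5⟩ := hu
    refine ⟨⟨⟨(Finset.erase_subset _ _).trans h1, ?_⟩, qgvGood_mono (Finset.erase_subset _ _) h3, ?_⟩,
      h1 h5, by simp, ?_, ?_⟩
    · rw [Finset.card_erase_of_mem h5, h2]; rfl
    · exact fun a ha b hb => h4 a (Finset.mem_of_mem_erase ha) b (Finset.mem_of_mem_erase hb)
    · rwa [Finset.insert_erase h5]
    · rwa [Finset.insert_erase h5]
  · rintro ⟨t, x⟩ hu
    simp only [Finset.mem_sigma, qgvG, qgvExt, Finset.mem_filter, Finset.mem_powersetCard] at hu ⊢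
    obtain ⟨⟨⟨h1, h2⟩, h3, h4⟩, h5, h6, h7, h8⟩ := hu
    refine ⟨⟨⟨Finset.insert_subset h5 h1, ?_⟩, h7, h8⟩, by simp⟩
    rw [Finset.card_insert_of_notMem h6, h2]
  · rintro ⟨u, x⟩ hu
    simp only [Finset.mem_sigma] at hu
    simp [Finset.insert_erase hu.2]
  · rintro ⟨t, x⟩ hu
    simp only [Finset.mem_sigma, qgvExt, Finset.mem_filter] at hu
    simp [Finset.erase_insert hu.2.2.1]

noncomputable def qgvNG (I' : Finset (ι → F × F)) (I Z : Set (ι → F × F)) (j : ℕ) :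
    Finset (Finset (ι → F × F)) :=
  (I'.powersetCard j).filter (fun t => ¬ qgvGood I Z t)

lemma QgvHyp.ng_card (H : QgvHyp I' I Z θ) (hθ : 0 ≤ θ) (r : ℕ) :
    ((qgvNG I' I Z r).card : ℝ) ≤ 2 * θ * (I'.card : ℝ) ^ r * ((Fintype.card F : ℝ) ^ r - 1) := by
  have hq : (2 : ℝ) ≤ Fintype.card F := by exact_mod_cast Fintype.one_lt_card
  induction r with
  | zero =>
    have : qgvNG I' I Z 0 = ∅ := by
      simp [qgvNG, qgvGood_empty]
    simp [this]
  | succ r ih =>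
    have hsub : qgvNG I' I Z (r + 1) ⊆
        ((qgvNG I' I Z r ×ˢ I').image (fun p => insert p.2 p.1)) ∪
        (((I'.powersetCard r).sigma (fun t => qgvBad I' I Z t)).image (fun p => insert p.2 p.1)) := by
      intro R hR
      simp only [qgvNG, Finset.mem_filter, Finset.mem_powersetCard] at hR
      obtain ⟨⟨h1, h2⟩, h3⟩ := hR
      obtain ⟨x, hx⟩ := Finset.card_pos.mp (by omega : 0 < R.card)
      have hxI := h1 hx
      have hc : (R.erase x).card = r := by rw [Finset.card_erase_of_mem hx, h2]; rfl
      have hs : R.erase x ⊆ I' := (Finset.erase_subset _ _).trans h1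
      rw [Finset.mem_union]
      by_cases hg : qgvGood I Z (R.erase x)
      · right
        rw [Finset.mem_image]
        refine ⟨⟨R.erase x, x⟩, ?_, Finset.insert_erase hx⟩
        simp only [Finset.mem_sigma, Finset.mem_powersetCard]
        refine ⟨⟨hs, hc⟩, ?_⟩
        by_contra hb
        have := (H.not_bad hg hxI hb).2
        rw [Finset.insert_erase hx] at this
        exact h3 this
      · left
        rw [Finset.mem_image]
        refine ⟨⟨R.erase x, x⟩, ?_, Finset.insert_erase hx⟩
        simp only [Finset.mem_product, qgvNG, Finset.mem_filter, Finset.mem_powersetCard]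
        exact ⟨⟨⟨hs, hc⟩, hg⟩, hxI⟩
    have hc := (Finset.card_le_card hsub).trans ((Finset.card_union_le _ _).trans
      (add_le_add Finset.card_image_le Finset.card_image_le))
    rw [Finset.card_product, Finset.card_sigma] at hc
    have hc' : ((qgvNG I' I Z (r + 1)).card : ℝ) ≤ (qgvNG I' I Z r).card * I'.card +
        ∑ t ∈ I'.powersetCard r, ((qgvBad I' I Z t).card : ℝ) := by exact_mod_cast hc
    have h2 : ∑ t ∈ I'.powersetCard r, ((qgvBad I' I Z t).card : ℝ) ≤
        (I'.card : ℝ) ^ r * (2 * θ * I'.card * (Fintype.card F : ℝ) ^ r) := by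
      have : ∀ t ∈ I'.powersetCard r, ((qgvBad I' I Z t).card : ℝ) ≤
          2 * θ * I'.card * (Fintype.card F : ℝ) ^ r := by
        intro t ht
        have := H.bad_card t
        rwa [(Finset.mem_powersetCard.mp ht).2] at this
      refine (Finset.sum_le_sum this).trans ?_
      rw [Finset.sum_const, nsmul_eq_mul, Finset.card_powersetCard]
      refine mul_le_mul_of_nonneg_right ?_ (by positivity)
      exact_mod_cast Nat.choose_le_pow _ _
    have h3 : ((qgvNG I' I Z r).card : ℝ) * I'.card ≤
      2 * θ * (I'.card : ℝ) ^ r * ((Fintype.card F : ℝ) ^ r - 1) * I'.card :=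
        mul_le_mul_of_nonneg_right ih (by positivity)
    refine hc'.trans ((add_le_add h3 h2).trans ?_)
    have : 0 ≤ 2 * θ * (I'.card : ℝ) ^ (r + 1) * (Fintype.card F : ℝ) ^ r * ((Fintype.card F : ℝ) - 2) :=
      mul_nonneg (by positivity) (by linarith)
    rw [pow_succ, pow_succ] at *
    nlinarith [this]

end Core2



section Core3

variable {F : Type} [Field F] [Fintype F] {ι : Type} [Fintype ι]
variable {I' : Finset (ι → F × F)} {I Z : Set (ι → F × F)} {θ : ℝ}

lemma qgv_bonf (J : ℕ) (hJ : Odd J) (N : ℕ) :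
    ∑ j ∈ range (J + 1), (-1 : ℝ) ^ j * (N.choose j : ℝ) ≤ if N = 0 then 1 else 0 := by
  have h : ∑ j ∈ range (J + 1), (-1 : ℤ) ^ j * (N.choose j : ℤ) ≤ if N = 0 then 1 else 0 := by
    rcases N with _ | n
    · rw [Finset.sum_range_succ']
      simp
    · have := Int.alternating_sum_range_choose_eq_choose (n := n) (m := J)
      rw [this, hJ.neg_one_pow]
      simp
  exact_mod_cast h

noncomputable def qgvT (I' : Finset (ι → F × F)) (A : Matrix ι ι F) : Finset (ι → F × F) :=
  I'.filter (fun x => A.mulVec (qgvAl x) = qgvBe x)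

lemma qgv_sum_choose (j : ℕ) :
    ∑ A ∈ qgvSym (∅ : Finset (ι → F × F)), (qgvT I' A).card.choose j =
      ∑ t ∈ I'.powersetCard j, (qgvSym t).card := by
  have h1 : ∀ A ∈ qgvSym (∅ : Finset (ι → F × F)), (qgvT I' A).card.choose j =
      ∑ t ∈ I'.powersetCard j, if A ∈ qgvSym t then 1 else 0 := by
    intro A hA
    simp only [qgvSym, Finset.mem_filter, Finset.mem_univ, true_and] at hA
    rw [← Finset.card_powersetCard, ← Finset.sum_filter, ← Finset.card_eq_sum_ones]
    congr 1
    ext t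
    simp only [Finset.mem_powersetCard, Finset.mem_filter, qgvSym, qgvT, Finset.mem_univ, true_and, hA.1]
    constructor
    · rintro ⟨h1, h2⟩
      refine ⟨⟨fun x hx => (Finset.mem_filter.mp (h1 hx)).1, h2⟩, fun x hx => (Finset.mem_filter.mp (h1 hx)).2⟩
    · rintro ⟨⟨h1, h2⟩, h3⟩
      exact ⟨fun x hx => Finset.mem_filter.mpr ⟨h1 hx, h3 x hx⟩, h2⟩
  rw [Finset.sum_congr rfl h1, Finset.sum_comm]
  refine Finset.sum_congr rfl fun t _ => ?_
  rw [← Finset.sum_filter, ← Finset.card_eq_sum_ones]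
  congr 1
  ext A
  simp [qgvSym]

lemma qgv_sym_iso {t : Finset (ι → F × F)} (h : ¬ qgvIso t) : (qgvSym t).card = 0 := by
  rw [Finset.card_eq_zero]
  by_contra hne
  apply h
  obtain ⟨A, hA⟩ := Finset.nonempty_iff_ne_empty.mpr hne
  simp only [qgvSym, Finset.mem_filter, Finset.mem_univ, true_and] at hA
  intro x hx y hy
  rw [qgvOm_eq, ← hA.2 x hx, ← hA.2 y hy, Matrix.dotProduct_mulVec, ← Matrix.mulVec_transpose,
      hA.1.eq, sub_self]

/-- m_j -/
noncomputable def qgvm (I' : Finset (ι → F × F)) (I Z : Set (ι → F × F)) (j : ℕ) : ℝ :=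
  (qgvG I' I Z j).card * (Fintype.card F : ℝ) ^ (j.choose 2) / (Fintype.card F : ℝ) ^ (j * Fintype.card ι)

lemma QgvHyp.sum_sym (H : QgvHyp I' I Z θ) (j : ℕ) :
    ∑ t ∈ I'.powersetCard j, ((qgvSym t).card : ℝ) =
      (qgvSym (∅ : Finset (ι → F × F))).card * qgvm I' I Z j + ∑ t ∈ qgvNG I' I Z j, ((qgvSym t).card : ℝ) := by
  have hq : (0 : ℝ) < Fintype.card F := by exact_mod_cast Fintype.card_pos
  rw [← Finset.sum_filter_add_sum_filter_not (I'.powersetCard j) (fun t => qgvGood I Z t)]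
  congr 1
  rw [← Finset.sum_filter_add_sum_filter_not _ (fun t => qgvIso t)]
  rw [Finset.sum_eq_zero (s := Finset.filter (fun t => ¬ qgvIso t) _), add_zero, Finset.filter_filter]
  · change ∑ t ∈ qgvG I' I Z j, _ = _
    rw [Finset.sum_congr rfl (g := fun _ => (qgvSym (∅ : Finset (ι → F × F))).card *
      (Fintype.card F : ℝ) ^ (j.choose 2) / (Fintype.card F : ℝ) ^ (j * Fintype.card ι))]
    · rw [Finset.sum_const, nsmul_eq_mul, qgvm]; ring
    · intro t ht
      simp only [qgvG, Finset.mem_filter, Finset.mem_powersetCard] at ht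
      have := qgv_sym_card t (H.good_indep ht.2.1) ht.2.2
      rw [ht.1.2] at this
      rw [eq_div_iff (by positivity)]
      exact_mod_cast this
  · intro t ht
    rw [qgv_sym_iso (Finset.mem_filter.mp ht).2]; simp

lemma QgvHyp.m_succ (H : QgvHyp I' I Z θ) (hθ : 0 ≤ θ) (J j : ℕ) (hj : j ≤ J) :
    |(j + 1) * qgvm I' I Z (j + 1) - I'.card / (Fintype.card F : ℝ) ^ (Fintype.card ι) * qgvm I' I Z j| ≤
      3 * θ * (Fintype.card F : ℝ) ^ (2 * J) *
        (I'.card / (Fintype.card F : ℝ) ^ (Fintype.card ι) * qgvm I' I Z j) := by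
  have hq : (1 : ℝ) ≤ Fintype.card F := by exact_mod_cast Fintype.card_pos
  set q : ℝ := (Fintype.card F : ℝ) with hqd
  set M := Fintype.card ι
  set N : ℝ := (I'.card : ℝ) with hN
  have hs : ((j : ℝ) + 1) * (qgvG I' I Z (j + 1)).card = ∑ t ∈ qgvG I' I Z j, ((qgvExt I' I Z t).card : ℝ) := by
    exact_mod_cast qgvG_succ (I' := I') (I := I) (Z := Z) j
  have hb : |∑ t ∈ qgvG I' I Z j, ((qgvExt I' I Z t).card : ℝ) - (qgvG I' I Z j).card * (N / q ^ j)| ≤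
      (qgvG I' I Z j).card * (θ * N + 2 * θ * N * q ^ j) := by
    have e : ∑ t ∈ qgvG I' I Z j, ((qgvExt I' I Z t).card : ℝ) - (qgvG I' I Z j).card * (N / q ^ j) =
      ∑ t ∈ qgvG I' I Z j, (((qgvExt I' I Z t).card : ℝ) - N / q ^ j) := by
      rw [Finset.sum_sub_distrib, Finset.sum_const, nsmul_eq_mul]
    rw [e]
    refine (Finset.abs_sum_le_sum_abs _ _).trans ?_
    rw [← nsmul_eq_mul, ← Finset.sum_const]
    refine Finset.sum_le_sum fun t ht => ?_
    simp only [qgvG, Finset.mem_filter, Finset.mem_powersetCard] at ht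
    have := H.ext_card ht.2.1 ht.2.2
    rwa [ht.1.2] at this
  rw [← hs] at hb
  set g : ℝ := ((qgvG I' I Z j).card : ℝ) with hg
  set g' : ℝ := ((qgvG I' I Z (j + 1)).card : ℝ) with hg'
  set D : ℝ := q ^ (j.choose 2) * q ^ j / (q ^ (j * M) * q ^ M) with hD
  have hD0 : 0 < D := by positivity
  have e1 : qgvm I' I Z (j + 1) = g' * D := by
    rw [qgvm, Nat.choose_succ_succ' j 1, Nat.choose_one_right, hD, add_mul, one_mul, pow_add, pow_add]
    ring
  have e2 : N / q ^ M * qgvm I' I Z j = g * (N / q ^ j) * D := by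
    rw [qgvm, hD, ← hqd, ← hg]
    change N / q ^ M * (g * q ^ j.choose 2 / q ^ (j * M)) = _
    field_simp
  rw [e1, e2, ← mul_assoc, ← sub_mul, abs_mul, abs_of_pos hD0, ← mul_assoc]
  refine mul_le_mul_of_nonneg_right (hb.trans ?_) hD0.le
  have h1 : θ * N + 2 * θ * N * q ^ j = N / q ^ j * θ * (q ^ j + 2 * q ^ (2 * j)) := by
    rw [show 2 * j = j + j by ring, pow_add]; field_simp
  rw [h1]
  have h2 : q ^ j + 2 * q ^ (2 * j) ≤ 3 * q ^ (2 * J) := by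
    have a1 : q ^ j ≤ q ^ (2 * J) := pow_le_pow_right₀ hq (by omega)
    have a2 : q ^ (2 * j) ≤ q ^ (2 * J) := pow_le_pow_right₀ hq (by omega)
    linarith
  have h3 : 0 ≤ g * (N / q ^ j * θ) := by positivity
  nlinarith [mul_le_mul_of_nonneg_left h2 h3]

lemma QgvHyp.m_bound (H : QgvHyp I' I Z θ) (hθ : 0 ≤ θ) (J : ℕ) (κ μ : ℝ)
    (hκ : κ = 3 * θ * (Fintype.card F : ℝ) ^ (2 * J)) (hκ1 : κ ≤ 1)
    (hμ : μ = I'.card / (Fintype.card F : ℝ) ^ (Fintype.card ι)) (j : ℕ) (hj : j ≤ J) :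
    |qgvm I' I Z j - μ ^ j / j.factorial| ≤ (2 ^ j - 1) * κ * (μ ^ j / j.factorial) := by
  have hμ0 : 0 ≤ μ := by rw [hμ]; positivity
  have hκ0 : 0 ≤ κ := by rw [hκ]; positivity
  induction j with
  | zero =>
    have : qgvG I' I Z 0 = {∅} := by
      ext t
      simp only [qgvG, Finset.powersetCard_zero, Finset.mem_filter, Finset.mem_singleton]
      constructor
      · exact fun h => h.1
      · rintro rfl
        exact ⟨rfl, qgvGood_empty, by intro x hx; simp at hx⟩
    simp [qgvm, this]
  | succ j ih =>
    have ih := ih (by omega)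
    have hs := H.m_succ hθ J j (by omega)
    rw [← hκ, ← hμ] at hs
    set a := qgvm I' I Z j
    set b := qgvm I' I Z (j + 1)
    set p := μ ^ j / j.factorial with hp
    have hp0 : 0 ≤ p := by positivity
    have e : μ ^ (j + 1) / (j + 1).factorial = μ * p / (j + 1) := by
      rw [hp, Nat.factorial_succ]; push_cast; field_simp; ring
    rw [e]
    have hj1 : (0 : ℝ) < (j : ℝ) + 1 := by positivity
    have hP : (1 : ℝ) ≤ 2 ^ j := one_le_pow₀ (by norm_num)
    have key : |(j + 1) * b - μ * p| ≤ (2 ^ (j + 1) - 1) * κ * (μ * p) := by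
      rw [abs_le] at hs ih ⊢
      have i1 := mul_le_mul_of_nonneg_left ih.1 hμ0
      have i2 := mul_le_mul_of_nonneg_left ih.2 hμ0
      have i3 := mul_le_mul_of_nonneg_left ih.2 (mul_nonneg hκ0 hμ0)
      have i4 : κ * ((2 ^ j - 1) * κ * (μ * p)) ≤ 1 * ((2 ^ j - 1) * κ * (μ * p)) := by
        apply mul_le_mul_of_nonneg_right hκ1
        have : (0 : ℝ) ≤ 2 ^ j - 1 := by linarith
        positivity
      rw [pow_succ]
      constructor <;> nlinarith [hs.1, hs.2]
    have e2 : b - μ * p / (j + 1) = ((j + 1) * b - μ * p) / (j + 1) := by field_simp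
    rw [e2, abs_div, abs_of_pos hj1, div_le_iff₀ hj1]
    refine key.trans (le_of_eq ?_)
    field_simp

lemma QgvHyp.ng_exists (H : QgvHyp I' I Z θ) (J j : ℕ) (hj : j ≤ J) (t : Finset (ι → F × F))
    (ht : t ∈ qgvNG I' I Z j) : ∃ r ∈ range (J + 1), ∃ R ∈ qgvNG I' I Z r,
      LinearIndepOn F (id : (ι → F × F) → (ι → F × F)) (R : Set (ι → F × F)) ∧
      (t : Set (ι → F × F)) ⊆ Submodule.span F (R : Set (ι → F × F)) ∧ R ⊆ t := by
  obtain ⟨b, hb1, -, hb2, hb3⟩ := exists_linearIndepOn_extension (K := F)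
    (v := (id : (ι → F × F) → (ι → F × F))) (s := ∅) (t := (t : Set (ι → F × F)))
    (linearIndepOn_empty F _) (Set.empty_subset _)
  have hbf : b.Finite := t.finite_toSet.subset hb1
  obtain ⟨R, rfl⟩ := hbf.exists_finset_coe
  have hRt : R ⊆ t := by exact_mod_cast hb1
  simp only [Set.image_id] at hb2
  simp only [qgvNG, Finset.mem_filter, Finset.mem_powersetCard] at ht
  have hc := Finset.card_le_card hRt
  refine ⟨R.card, Finset.mem_range.mpr (by omega), R, ?_, hb3, hb2, hRt⟩
  simp only [qgvNG, Finset.mem_filter, Finset.mem_powersetCard]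
  refine ⟨⟨hRt.trans ht.1.1, trivial⟩, fun hg => ht.2 ?_⟩
  have : t = R := by
    refine Finset.Subset.antisymm (fun x hx => ?_) hRt
    exact H.good_span hg (hRt.trans ht.1.1) (ht.1.1 hx) (hb2 hx)
  rwa [this]

lemma QgvHyp.ng_sum (H : QgvHyp I' I Z θ) (hθ : 0 ≤ θ) (J j : ℕ) (hj : j ≤ J) (μ : ℝ)
    (hμ : μ = I'.card / (Fintype.card F : ℝ) ^ (Fintype.card ι)) (hμJ : μ ≤ J) (hJ : 1 ≤ J) :
    ∑ t ∈ qgvNG I' I Z j, ((qgvSym t).card : ℝ) ≤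
      (qgvSym (∅ : Finset (ι → F × F))).card * (2 * θ * (Fintype.card F : ℝ) ^ (4 * J ^ 2)) := by
  have hq : (2 : ℝ) ≤ Fintype.card F := by exact_mod_cast Fintype.one_lt_card
  have hq1 : (1 : ℝ) ≤ Fintype.card F := by linarith
  have hμ0 : 0 ≤ μ := by rw [hμ]; positivity
  set q : ℝ := (Fintype.card F : ℝ) with hqd
  set W : ℝ := ((qgvSym (∅ : Finset (ι → F × F))).card : ℝ) with hW
  let L : ℕ → Finset (Finset (ι → F × F)) := fun r => (qgvNG I' I Z r).filter (fun R =>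
    LinearIndepOn F (id : (ι → F × F) → (ι → F × F)) (R : Set (ι → F × F)))
  have h1 : ∀ t ∈ qgvNG I' I Z j, ((qgvSym t).card : ℝ) ≤ ∑ r ∈ range (J + 1), ∑ R ∈ L r,
      if (t : Set (ι → F × F)) ⊆ Submodule.span F (R : Set (ι → F × F)) then ((qgvSym R).card : ℝ) else 0 := by
    intro t ht
    obtain ⟨r, hr, R, hR, hl, hs, hRt⟩ := H.ng_exists J j hj t ht
    have hle : ((qgvSym t).card : ℝ) ≤ (qgvSym R).card := by
      refine Nat.cast_le.mpr (Finset.card_le_card ?_)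
      intro A hA
      simp only [qgvSym, Finset.mem_filter, Finset.mem_univ, true_and] at hA ⊢
      exact ⟨hA.1, fun x hx => hA.2 x (hRt hx)⟩
    have hnn : ∀ R : Finset (ι → F × F), 0 ≤ if (t : Set (ι → F × F)) ⊆ Submodule.span F (R : Set (ι → F × F)) then ((qgvSym R).card : ℝ) else 0 := by
      intro R; split_ifs <;> positivity
    have hRL : R ∈ L r := Finset.mem_filter.mpr ⟨hR, hl⟩
    refine le_trans ?_ (Finset.single_le_sum (fun r _ => Finset.sum_nonneg fun R _ => hnn R) hr)
    refine le_trans ?_ (Finset.single_le_sum (fun R _ => hnn R) hRL)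
    rw [if_pos hs]
    exact hle
  refine (Finset.sum_le_sum h1).trans ?_
  rw [Finset.sum_comm]
  have h2 : ∀ r ∈ range (J + 1), ∑ t ∈ qgvNG I' I Z j, ∑ R ∈ L r,
      (if (t : Set (ι → F × F)) ⊆ Submodule.span F (R : Set (ι → F × F)) then ((qgvSym R).card : ℝ) else 0)
      ≤ W * (2 * θ * q ^ (3 * J ^ 2)) := by
    intro r hr
    have hrJ : r ≤ J := by simpa [Nat.lt_succ_iff] using hr
    rw [Finset.sum_comm]
    have h3 : ∀ R ∈ L r, ∑ t ∈ qgvNG I' I Z j,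
      (if (t : Set (ι → F × F)) ⊆ Submodule.span F (R : Set (ι → F × F)) then ((qgvSym R).card : ℝ) else 0)
        ≤ W * q ^ (r.choose 2) / q ^ (r * Fintype.card ι) * q ^ (J ^ 2) := by
      intro R hR
      simp only [L, qgvNG, Finset.mem_filter, Finset.mem_powersetCard] at hR
      have hRc := hR.1.1.2
      have c1 := qgv_sym_card_le R hR.2
      rw [hRc] at c1
      have c2 : ((qgvSym R).card : ℝ) ≤ W * q ^ (r.choose 2) / q ^ (r * Fintype.card ι) := by
        rw [le_div_iff₀ (by positivity), hW, hqd]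
        exact_mod_cast c1
      rw [← Finset.sum_filter, Finset.sum_const, nsmul_eq_mul, mul_comm]
      refine mul_le_mul c2 ?_ (by positivity) (by positivity)
      have hsub : (qgvNG I' I Z j).filter (fun t : Finset (ι → F × F) => (t : Set (ι → F × F)) ⊆ Submodule.span F (R : Set (ι → F × F)))
          ⊆ (univ.filter (fun x => x ∈ Submodule.span F (R : Set (ι → F × F)))).powersetCard j := by
        intro t ht
        simp only [qgvNG, Finset.mem_filter, Finset.mem_powersetCard] at ht ⊢
        refine ⟨fun x hx => ?_, ht.1.1.2⟩
        simpa using ht.2 hx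
      have hcard : (univ.filter (fun x => x ∈ Submodule.span F (R : Set (ι → F × F)))).card ≤ Fintype.card F ^ J := by
        have e := Module.card_eq_pow_finrank (K := F) (V := Submodule.span F (R : Set (ι → F × F)))
        rw [Fintype.card_subtype] at e
        rw [e]
        refine pow_le_pow_right₀ Fintype.card_pos ?_
        exact (finrank_span_finset_le_card R).trans (hRc.le.trans hrJ)
      have : ((qgvNG I' I Z j).filter (fun t : Finset (ι → F × F) => (t : Set (ι → F × F)) ⊆ Submodule.span F (R : Set (ι → F × F)))).card
          ≤ Fintype.card F ^ (J ^ 2) := by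
        refine (Finset.card_le_card hsub).trans ?_
        rw [Finset.card_powersetCard]
        refine (Nat.choose_le_pow _ _).trans ((Nat.pow_le_pow_left hcard j).trans ?_)
        rw [← pow_mul]
        exact pow_le_pow_right₀ Fintype.card_pos (by nlinarith)
      rw [hqd]
      exact_mod_cast this
    refine (Finset.sum_le_sum h3).trans ?_
    rw [Finset.sum_const, nsmul_eq_mul]
    have hL : ((L r).card : ℝ) ≤ 2 * θ * (I'.card : ℝ) ^ r * q ^ r := by
      refine le_trans (Nat.cast_le.mpr (Finset.card_le_card (Finset.filter_subset _ _))) ((H.ng_card hθ r).trans ?_)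
      refine mul_le_mul_of_nonneg_left ?_ (by positivity)
      rw [hqd]; linarith
    have hfin : 2 * θ * (I'.card : ℝ) ^ r * q ^ r * (W * q ^ (r.choose 2) / q ^ (r * Fintype.card ι) * q ^ (J ^ 2))
      = W * (2 * θ * (μ ^ r * q ^ (r + r.choose 2) * q ^ (J ^ 2))) := by
      rw [hμ, div_pow, ← pow_mul, pow_add, mul_comm r]
      field_simp
    refine (mul_le_mul_of_nonneg_right hL (by positivity)).trans ?_
    rw [hfin]
    refine mul_le_mul_of_nonneg_left ?_ (by positivity)
    refine mul_le_mul_of_nonneg_left ?_ (by positivity)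
    have b1 : μ ^ r ≤ q ^ (J ^ 2) := by
      have hJq : (J : ℝ) ≤ q ^ J := by
        have : (J : ℝ) ≤ 2 ^ J := by exact_mod_cast (Nat.lt_two_pow_self).le
        exact this.trans (pow_le_pow_left₀ (by norm_num) hq J)
      refine (pow_le_pow_left₀ hμ0 (hμJ.trans hJq) r).trans ?_
      rw [← pow_mul]
      exact pow_le_pow_right₀ hq1 (by nlinarith)
    have b2 : q ^ (r + r.choose 2) ≤ q ^ (J ^ 2) := by
      refine pow_le_pow_right₀ hq1 ?_
      rw [Nat.choose_two_right]
      have : r * (r - 1) / 2 * 2 ≤ r * (r - 1) := Nat.div_mul_le_self _ _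
      rcases r with _ | r
      · simp
      · simp only [Nat.add_sub_cancel] at this ⊢
        nlinarith
    calc μ ^ r * q ^ (r + r.choose 2) * q ^ (J ^ 2) ≤ q ^ (J ^ 2) * q ^ (J ^ 2) * q ^ (J ^ 2) := by gcongr
      _ = q ^ (3 * J ^ 2) := by ring
  refine (Finset.sum_le_sum h2).trans ?_
  rw [Finset.sum_const, nsmul_eq_mul, Finset.card_range]
  have hJ1 : ((J + 1 : ℕ) : ℝ) ≤ q ^ (J ^ 2) := by
    have : ((J + 1 : ℕ) : ℝ) ≤ 2 ^ J := by exact_mod_cast Nat.lt_two_pow_self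
    refine this.trans ((pow_le_pow_left₀ (by norm_num) hq J).trans (pow_le_pow_right₀ hq1 (by nlinarith)))
  calc ((J + 1 : ℕ) : ℝ) * (W * (2 * θ * q ^ (3 * J ^ 2))) ≤ q ^ (J ^ 2) * (W * (2 * θ * q ^ (3 * J ^ 2))) := by gcongr
    _ = _ := by ring

lemma qgv_exp_alt (J : ℕ) (hJ : 1 ≤ J) (μ : ℝ) (h0 : 0 ≤ μ) (hμ : 8 * μ ≤ J) :
    Real.exp (-μ) / 2 ≤ ∑ j ∈ range (J + 1), (-1 : ℝ) ^ j * (μ ^ j / j.factorial) := by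
  have hb := Complex.exp_bound' (x := ((-μ : ℝ) : ℂ)) (n := J + 1) (by
    rw [Complex.norm_real, Real.norm_eq_abs, abs_neg, abs_of_nonneg h0, div_le_div_iff₀ (by positivity) (by norm_num)]
    push_cast
    linarith)
  rw [Complex.norm_real, Real.norm_eq_abs, abs_neg, abs_of_nonneg h0] at hb
  have e : Complex.exp ((-μ : ℝ) : ℂ) - ∑ m ∈ range (J + 1), ((-μ : ℝ) : ℂ) ^ m / (m.factorial : ℂ) =
    ((Real.exp (-μ) - ∑ j ∈ range (J + 1), (-1 : ℝ) ^ j * (μ ^ j / j.factorial) : ℝ) : ℂ) := by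
    push_cast
    congr 1
    refine Finset.sum_congr rfl fun m _ => ?_
    rw [neg_pow]; ring
  rw [e, Complex.norm_real, Real.norm_eq_abs] at hb
  have h1 := le_of_abs_le hb
  have h2 := Real.pow_div_factorial_le_exp (8 * μ) (by linarith) (J + 1)
  have h3 : Real.exp (8 * μ) * Real.exp μ ≤ 4 ^ (J + 1) := by
    rw [← Real.exp_add]
    have : 8 * μ + μ ≤ (J + 1 : ℕ) * (9 / 8 : ℝ) := by push_cast; linarith
    refine (Real.exp_le_exp.mpr this).trans ?_
    rw [Real.exp_nat_mul]
    refine pow_le_pow_left₀ (Real.exp_pos _).le ?_ _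
    have h9 : Real.exp (9 / 8) ^ 8 ≤ 4 ^ 8 := by
      rw [← Real.exp_nat_mul]
      have : ((8 : ℕ) : ℝ) * (9 / 8) = (9 : ℕ) * 1 := by norm_num
      rw [this, Real.exp_nat_mul]
      refine (pow_le_pow_left₀ (Real.exp_pos _).le (show Real.exp 1 ≤ 2.7182818286 from Real.exp_one_lt_d9.le) 9).trans ?_
      norm_num
    exact le_of_pow_le_pow_left₀ (by norm_num) (by norm_num) h9
  have h4 : μ ^ (J + 1) / (J + 1).factorial * 2 ≤ Real.exp (-μ) / 2 := by
    rw [mul_pow, mul_div_assoc] at h2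
    set X := μ ^ (J + 1) / ((J + 1).factorial : ℝ)
    have h5 : 8 ^ (J + 1) * X * Real.exp μ ≤ 4 ^ (J + 1) :=
      (mul_le_mul_of_nonneg_right h2 (Real.exp_pos _).le).trans h3
    have h6 : (8 : ℝ) ^ (J + 1) = 2 ^ (J + 1) * 4 ^ (J + 1) := by rw [← mul_pow]; norm_num
    have h7 : (4 : ℝ) ≤ 2 ^ (J + 1) := by
      calc (4 : ℝ) = 2 ^ 2 := by norm_num
        _ ≤ _ := pow_le_pow_right₀ (by norm_num) (by omega)
    have h8 : 2 ^ (J + 1) * (X * Real.exp μ) ≤ 1 := by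
      rw [h6] at h5
      have : (0 : ℝ) < 4 ^ (J + 1) := by positivity
      nlinarith
    have hX : 0 ≤ X * Real.exp μ := by positivity
    have h9 : 4 * (X * Real.exp μ) ≤ 1 := by nlinarith
    rw [Real.exp_neg]
    have := Real.exp_pos μ
    rw [le_div_iff₀ (by norm_num), ← one_div, le_div_iff₀ this]
    linarith
  linarith

theorem QgvHyp.core (H : QgvHyp I' I Z θ) (hθ : 0 ≤ θ) (J : ℕ) (hJ : Odd J)
    (hμ : 8 * ((I'.card : ℝ) / (Fintype.card F : ℝ) ^ (Fintype.card ι)) ≤ J)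
    (hs : 20 * θ * (Fintype.card F : ℝ) ^ (7 * J ^ 2) ≤ 1) :
    ((qgvSym (∅ : Finset (ι → F × F))).card : ℝ) / (4 * (Fintype.card F : ℝ) ^ (2 * J)) ≤
      ((qgvSym (∅ : Finset (ι → F × F))).filter (fun A => (qgvT I' A).card = 0)).card := by
  have hq : (2 : ℝ) ≤ Fintype.card F := by exact_mod_cast Fintype.one_lt_card
  have hq1 : (1 : ℝ) ≤ Fintype.card F := by linarith
  have hJ1 : 1 ≤ J := hJ.pos
  set μ : ℝ := (I'.card : ℝ) / (Fintype.card F : ℝ) ^ (Fintype.card ι) with hμd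
  have hμ0 : 0 ≤ μ := by positivity
  have hmb := H.m_bound hθ J (3 * θ * (Fintype.card F : ℝ) ^ (2 * J)) μ rfl
  have hng := fun j hj => H.ng_sum hθ J j hj μ hμd (by linarith) hJ1
  have hss := H.sum_sym
  set q : ℝ := (Fintype.card F : ℝ) with hqd
  set W : ℝ := ((qgvSym (∅ : Finset (ι → F × F))).card : ℝ) with hW
  have hW0 : 0 ≤ W := by positivity
  set κ : ℝ := 3 * θ * q ^ (2 * J) with hκ
  have hκ0 : 0 ≤ κ := by positivity
  have hp : ∀ a b : ℕ, a ≤ b → q ^ a ≤ q ^ b := fun a b h => pow_le_pow_right₀ hq1 h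
  have hJJ : J ≤ J ^ 2 := by nlinarith
  have hκ1 : κ ≤ 1 := by
    have := mul_le_mul_of_nonneg_left (hp (2 * J) (7 * J ^ 2) (by omega)) hθ
    rw [hκ]; nlinarith [mul_nonneg hθ (pow_nonneg (by linarith : (0:ℝ) ≤ q) (7 * J ^ 2))]
  have hmb := hmb hκ1 hμd
  have h1 : ∑ A ∈ qgvSym (∅ : Finset (ι → F × F)), ∑ j ∈ range (J + 1), (-1 : ℝ) ^ j * ((qgvT I' A).card.choose j : ℝ)
      ≤ ((qgvSym (∅ : Finset (ι → F × F))).filter (fun A => (qgvT I' A).card = 0)).card := by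
    rw [Finset.card_eq_sum_ones, Finset.sum_filter]
    push_cast
    exact Finset.sum_le_sum fun A _ => qgv_bonf J hJ _
  refine le_trans ?_ h1
  rw [Finset.sum_comm]
  have h2 : ∀ j ∈ range (J + 1), W * ((-1 : ℝ) ^ j * (μ ^ j / j.factorial) - 2 ^ J * κ * (μ ^ j / j.factorial) - 2 * θ * q ^ (4 * J ^ 2))
      ≤ ∑ A ∈ qgvSym (∅ : Finset (ι → F × F)), (-1 : ℝ) ^ j * ((qgvT I' A).card.choose j : ℝ) := by
    intro j hj
    have hjJ : j ≤ J := by simpa [Nat.lt_succ_iff] using hj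
    rw [← Finset.mul_sum]
    have e : ∑ A ∈ qgvSym (∅ : Finset (ι → F × F)), ((qgvT I' A).card.choose j : ℝ) =
        ∑ t ∈ I'.powersetCard j, ((qgvSym t).card : ℝ) := by
      exact_mod_cast qgv_sum_choose (I' := I') j
    rw [e, hss j]
    have n1 := hng j hjJ
    have n0 : 0 ≤ ∑ t ∈ qgvNG I' I Z j, ((qgvSym t).card : ℝ) := Finset.sum_nonneg fun _ _ => Nat.cast_nonneg _
    have m1 := hmb j hjJ
    set S := ∑ t ∈ qgvNG I' I Z j, ((qgvSym t).card : ℝ)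
    set p := μ ^ j / (j.factorial : ℝ)
    have hp0 : 0 ≤ p := by positivity
    have hV0 : 0 ≤ 2 * θ * q ^ (4 * J ^ 2) := by positivity
    have m2 : (2 ^ j - 1) * κ * p ≤ 2 ^ J * κ * p := by
      have : (2 : ℝ) ^ j ≤ 2 ^ J := pow_le_pow_right₀ (by norm_num) hjJ
      have : (2 : ℝ) ^ j - 1 ≤ 2 ^ J := by linarith
      gcongr
    have m3 := abs_le.mp (m1.trans m2)
    have a1 := mul_le_mul_of_nonneg_left m3.1 hW0
    have a2 := mul_le_mul_of_nonneg_left m3.2 hW0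
    set b := qgvm I' I Z j
    set Y := 2 ^ J * κ * p
    set V := 2 * θ * q ^ (4 * J ^ 2)
    rcases neg_one_pow_eq_or ℝ j with h | h
    · rw [h, one_mul, one_mul, mul_sub, mul_sub]
      rw [mul_sub, mul_neg] at a1
      have := mul_nonneg hW0 hV0
      linarith
    · rw [h, neg_one_mul, neg_one_mul, mul_sub, mul_sub, mul_neg]
      rw [mul_sub] at a2
      linarith
  refine le_trans ?_ (Finset.sum_le_sum h2)
  rw [← Finset.mul_sum, Finset.sum_sub_distrib, Finset.sum_sub_distrib, Finset.sum_const, nsmul_eq_mul,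
    Finset.card_range, ← Finset.mul_sum]
  have x1 := qgv_exp_alt J hJ1 μ hμ0 hμ
  have x2 : ∑ i ∈ range (J + 1), μ ^ i / (i.factorial : ℝ) ≤ Real.exp μ := Real.sum_le_exp_of_nonneg hμ0 _
  have x3 : Real.exp μ ≤ q ^ J := by
    have : Real.exp μ ≤ Real.exp ((J : ℕ) * (1 / 8 : ℝ)) := Real.exp_le_exp.mpr (by linarith)
    refine this.trans ?_
    rw [Real.exp_nat_mul]
    refine pow_le_pow_left₀ (Real.exp_pos _).le ?_ _
    have h9 : Real.exp (1 / 8) ^ 8 ≤ 2 ^ 8 := by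
      rw [← Real.exp_nat_mul]
      have : ((8 : ℕ) : ℝ) * (1 / 8) = 1 := by norm_num
      rw [this]
      refine (show Real.exp 1 ≤ 2.7182818286 from Real.exp_one_lt_d9.le).trans ?_
      norm_num
    exact (le_of_pow_le_pow_left₀ (by norm_num) (by norm_num) h9).trans hq
  have x4 : 1 / q ^ (2 * J) ≤ Real.exp (-μ) := by
    rw [Real.exp_neg, one_div]
    exact inv_anti₀ (Real.exp_pos _) (x3.trans (hp _ _ (by omega)))
  have y1 : 2 ^ J * κ * ∑ i ∈ range (J + 1), μ ^ i / (i.factorial : ℝ) ≤ 3 * θ * q ^ (5 * J ^ 2) := by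
    calc 2 ^ J * κ * ∑ i ∈ range (J + 1), μ ^ i / (i.factorial : ℝ) ≤ q ^ J * κ * q ^ J := by
          gcongr; exact x2.trans x3
      _ = 3 * θ * q ^ (4 * J) := by rw [hκ]; ring
      _ ≤ _ := mul_le_mul_of_nonneg_left (hp _ _ (by omega)) (by positivity)
  have y2 : ((J + 1 : ℕ) : ℝ) * (2 * θ * q ^ (4 * J ^ 2)) ≤ 2 * θ * q ^ (5 * J ^ 2) := by
    have : ((J + 1 : ℕ) : ℝ) ≤ 2 ^ J := by exact_mod_cast Nat.lt_two_pow_self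
    have : ((J + 1 : ℕ) : ℝ) ≤ q ^ (J ^ 2) :=
      this.trans ((pow_le_pow_left₀ (by norm_num) hq J).trans (hp _ _ hJJ))
    calc _ ≤ q ^ (J ^ 2) * (2 * θ * q ^ (4 * J ^ 2)) := by gcongr
      _ = _ := by ring
  have y3 : 5 * θ * q ^ (5 * J ^ 2) ≤ 1 / q ^ (2 * J) / 4 := by
    rw [div_div, le_div_iff₀ (by positivity)]
    have : 5 * θ * q ^ (5 * J ^ 2) * (q ^ (2 * J) * 4) = 20 * θ * q ^ (5 * J ^ 2 + 2 * J) := by ring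
    rw [this]
    exact (mul_le_mul_of_nonneg_left (hp _ _ (by omega)) (by positivity)).trans hs
  have e : W / (4 * q ^ (2 * J)) = W * (1 / q ^ (2 * J) / 4) := by field_simp
  rw [e]
  refine mul_le_mul_of_nonneg_left ?_ hW0
  linarith

end Core3



section Est1

variable {n : ℕ} {α : Type} [AddCommGroup α] [Fintype α]

noncomputable def qgvSupp (x : Fin n → α) : Finset (Fin n) := univ.filter (fun i => x i ≠ 0)

noncomputable def qgvW (x : Fin n → α) : ℕ := (qgvSupp x).card

lemma qgvW_pow (u : ℝ) (x : Fin n → α) : u ^ qgvW x = ∏ i, if x i = 0 then 1 else u := by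
  rw [qgvW, qgvSupp, Finset.prod_ite]
  simp

lemma qgv_sum_prod (g : Fin n → α → ℝ) : ∑ s : Fin n → α, ∏ i, g i (s i) = ∏ i, ∑ a, g i a := by
  rw [Finset.prod_univ_sum]; simp

lemma qgv_sum_ite (u : ℝ) : ∑ a : α, (if a = 0 then 1 else u) = 1 + ((Fintype.card α : ℝ) - 1) * u := by
  have : ∀ a : α, (if a = 0 then (1:ℝ) else u) = u + if a = 0 then 1 - u else 0 := by
    intro a; split_ifs <;> ring
  simp only [this, Finset.sum_add_distrib, Finset.sum_const, Finset.card_univ, nsmul_eq_mul,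
    Finset.sum_ite_eq', Finset.mem_univ, if_true]
  ring

lemma qgv_sum_W (u : ℝ) : ∑ s : Fin n → α, u ^ qgvW s = (1 + ((Fintype.card α : ℝ) - 1) * u) ^ n := by
  simp only [qgvW_pow]
  rw [qgv_sum_prod (fun _ a => if a = 0 then (1:ℝ) else u)]
  simp only [qgv_sum_ite, Finset.prod_const, Finset.card_univ, Fintype.card_fin]

/-- Chernoff -/
lemma qgv_ball (m : ℕ) (y : ℝ) (hy0 : 0 < y) (hy1 : y ≤ 1) :
    ((univ.filter (fun s : Fin n → α => qgvW s ≤ m)).card : ℝ) ≤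
      (1 + ((Fintype.card α : ℝ) - 1) * y) ^ n / y ^ m := by
  rw [le_div_iff₀ (by positivity), ← qgv_sum_W, ← nsmul_eq_mul, ← Finset.sum_const]
  refine (Finset.sum_le_sum (g := fun s => y ^ qgvW s) fun s hs => ?_).trans
    (Finset.sum_le_sum_of_subset_of_nonneg (Finset.subset_univ _) fun _ _ _ => by positivity)
  exact pow_le_pow_of_le_one hy0.le hy1 (Finset.mem_filter.mp hs).2

lemma qgv_half (m : ℕ) (x : ℝ) (hy0 : 0 < x) (hy1 : x ≤ 1) :
    ((univ.filter (fun s : Fin n → α => 2 * qgvW s < m)).card : ℝ) ≤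
      (1 + ((Fintype.card α : ℝ) - 1) * x ^ 2) ^ n / (x ^ 2) ^ m * x ^ m := by
  have e : (1 + ((Fintype.card α : ℝ) - 1) * x ^ 2) ^ n / (x ^ 2) ^ m * x ^ m =
    (1 + ((Fintype.card α : ℝ) - 1) * x ^ 2) ^ n / x ^ m := by
    rw [← pow_mul, two_mul, pow_add]; field_simp
  rw [e, le_div_iff₀ (by positivity), ← qgv_sum_W, ← nsmul_eq_mul, ← Finset.sum_const]
  refine (Finset.sum_le_sum (g := fun s => (x ^ 2) ^ qgvW s) fun s hs => ?_).trans
    (Finset.sum_le_sum_of_subset_of_nonneg (Finset.subset_univ _) fun _ _ _ => by positivity)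
  rw [← pow_mul]
  exact pow_le_pow_of_le_one hy0.le hy1 (Finset.mem_filter.mp hs).2.le

lemma qgv_one_local (x : ℝ) (a : α) (ha : a ≠ 0) :
    ∑ b : α, (if b = 0 then 1 else x) * (if b + a = 0 then 1 else x) =
      2 * x + ((Fintype.card α : ℝ) - 2) * x ^ 2 := by
  have : ∀ b : α, (if b = 0 then 1 else x) * (if b + a = 0 then 1 else x) =
      x ^ 2 + (if b = 0 then x - x ^ 2 else 0) + (if b = -a then x - x ^ 2 else 0) := by
    intro b
    by_cases h1 : b = 0
    · have h2 : ¬ (b + a = 0) := by rw [h1, zero_add]; exact ha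
      have h3 : ¬ (b = -a) := fun h => h2 (by rw [h]; simp)
      simp only [if_pos h1, if_neg h2, if_neg h3]; ring
    · by_cases h2 : b = -a
      · have h3 : b + a = 0 := by rw [h2]; simp
        simp only [if_neg h1, if_pos h2, if_pos h3]; ring
      · have h3 : ¬ (b + a = 0) := fun h => h2 (eq_neg_of_add_eq_zero_left h)
        simp only [if_neg h1, if_neg h2, if_neg h3]; ring
  simp only [this, Finset.sum_add_distrib, Finset.sum_const, Finset.card_univ, nsmul_eq_mul,
    Finset.sum_ite_eq', Finset.mem_univ, if_true]
  ring

lemma qgv_one_local0 (x : ℝ) :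
    ∑ b : α, (if b = 0 then 1 else x) * (if b + 0 = 0 then 1 else x) =
      1 + ((Fintype.card α : ℝ) - 1) * x ^ 2 := by
  rw [← qgv_sum_ite]
  refine Finset.sum_congr rfl fun b _ => ?_
  rw [add_zero]; split_ifs <;> ring

lemma qgv_prod_supp (z : Fin n → α) (A B : ℝ) :
    ∏ i, (if z i = 0 then A else B) = A ^ (n - qgvW z) * B ^ qgvW z := by
  rw [Finset.prod_ite, Finset.prod_const, Finset.prod_const]
  have h := Finset.card_filter_add_card_filter_not (s := (univ : Finset (Fin n))) (fun i => z i = 0)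
  rw [Finset.card_univ, Fintype.card_fin] at h
  have e : (univ.filter (fun i => ¬ z i = 0)).card = qgvW z := by
    rw [qgvW, qgvSupp]
  rw [e] at h ⊢
  congr 2
  omega

lemma qgvW_le (z : Fin n → α) : qgvW z ≤ n := by
  have := Finset.card_le_univ (qgvSupp z)
  simpa [qgvW] using this

lemma qgv_prod_ratio (z : Fin n → α) (A B ρ : ℝ) (hA : 0 ≤ A) (hB : 0 ≤ B) (h : B ≤ A * ρ) :
    ∏ i, (if z i = 0 then A else B) ≤ A ^ n * ρ ^ qgvW z := by
  rw [qgv_prod_supp]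
  calc A ^ (n - qgvW z) * B ^ qgvW z ≤ A ^ (n - qgvW z) * (A * ρ) ^ qgvW z := by gcongr
    _ = A ^ n * ρ ^ qgvW z := by
      rw [mul_pow, ← mul_assoc, ← pow_add, Nat.sub_add_cancel (qgvW_le z)]

lemma qgv_shift (m : ℕ) (x ρ : ℝ) (hx0 : 0 < x) (hx1 : x ≤ 1) (hQ : 2 ≤ Fintype.card α)
    (hρ : 1 - (1 - x) ^ 2 / Fintype.card α ≤ ρ) (z : Fin n → α) :
    ((univ.filter (fun s : Fin n → α => qgvW s ≤ m ∧ qgvW (s + z) ≤ m)).card : ℝ) ≤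
      (1 + ((Fintype.card α : ℝ) - 1) * x ^ 2) ^ n / (x ^ 2) ^ m * ρ ^ qgvW z := by
  have hQ' : (2 : ℝ) ≤ Fintype.card α := by exact_mod_cast hQ
  set Q : ℝ := (Fintype.card α : ℝ) with hQd
  rw [div_mul_eq_mul_div, le_div_iff₀ (by positivity)]
  have h1 : ∑ s : Fin n → α, x ^ qgvW s * x ^ qgvW (s + z) ≤ (1 + (Q - 1) * x ^ 2) ^ n * ρ ^ qgvW z := by
    have e : ∀ s : Fin n → α, x ^ qgvW s * x ^ qgvW (s + z) =
        ∏ i, (if s i = 0 then 1 else x) * (if s i + z i = 0 then 1 else x) := by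
      intro s
      rw [qgvW_pow, qgvW_pow, ← Finset.prod_mul_distrib]; rfl
    simp only [e]
    rw [qgv_sum_prod (fun i a => (if a = 0 then 1 else x) * (if a + z i = 0 then 1 else x))]
    have e2 : ∀ i, ∑ a : α, (if a = 0 then 1 else x) * (if a + z i = 0 then 1 else x) =
        if z i = 0 then 1 + (Q - 1) * x ^ 2 else 2 * x + (Q - 2) * x ^ 2 := by
      intro i
      by_cases hz : z i = 0
      · rw [if_pos hz, hz, qgv_one_local0]
      · rw [if_neg hz, qgv_one_local _ _ hz]
    simp only [e2]
    have hA : 0 ≤ (Q - 1) * x ^ 2 := mul_nonneg (by linarith) (by positivity)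
    refine qgv_prod_ratio z _ _ ρ (by linarith) ?_ ?_
    · have : 0 ≤ (Q - 2) * x ^ 2 := mul_nonneg (by linarith) (by positivity)
      linarith
    · have hAQ : 1 + (Q - 1) * x ^ 2 ≤ Q := by nlinarith [pow_le_one₀ hx0.le hx1 (n := 2)]
      have : (1 + (Q - 1) * x ^ 2) * ((1 - x) ^ 2 / Q) ≤ (1 - x) ^ 2 := by
        rw [mul_div_assoc', div_le_iff₀ (by linarith)]
        nlinarith [sq_nonneg (1 - x)]
      nlinarith [mul_le_mul_of_nonneg_left hρ (by linarith : 0 ≤ 1 + (Q - 1) * x ^ 2)]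
  refine le_trans ?_ h1
  rw [← nsmul_eq_mul, ← Finset.sum_const]
  refine (Finset.sum_le_sum (g := fun s => x ^ qgvW s * x ^ qgvW (s + z)) fun s hs => ?_).trans
    (Finset.sum_le_sum_of_subset_of_nonneg (Finset.subset_univ _) fun _ _ _ => by positivity)
  rw [← pow_add, ← pow_mul]
  have := (Finset.mem_filter.mp hs).2
  exact pow_le_pow_of_le_one hx0.le hx1 (by omega)

lemma qgv_supp_sum {R : Type} [CommSemiring R] (g : Fin n → α → R) (hg : ∀ i, g i 0 = 1) (T : Finset (Fin n)) :
    ∑ s ∈ univ.filter (fun s : Fin n → α => qgvSupp s = T), ∏ i, g i (s i) =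
      ∏ i ∈ T, ∑ a ∈ univ.filter (fun a : α => a ≠ 0), g i a := by
  have e : univ.filter (fun s : Fin n → α => qgvSupp s = T) =
      Fintype.piFinset (fun i => if i ∈ T then univ.filter (fun a : α => a ≠ 0) else {0}) := by
    ext s
    simp only [Finset.mem_filter, Finset.mem_univ, true_and, Fintype.mem_piFinset, qgvSupp, Finset.ext_iff]
    refine forall_congr' fun i => ?_
    by_cases hi : i ∈ T <;> simp [hi]
  rw [e, ← Finset.prod_univ_sum]
  rw [← Finset.prod_subset (Finset.subset_univ T)]
  · refine Finset.prod_congr rfl fun i hi => ?_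
    rw [if_pos hi]
  · intro i _ hi
    rw [if_neg hi, Finset.sum_singleton, hg]

lemma qgv_sphere (j : ℕ) : (univ.filter (fun s : Fin n → α => qgvW s = j)).card =
    n.choose j * (Fintype.card α - 1) ^ j := by
  have h1 : ∀ T : Finset (Fin n), (univ.filter (fun s : Fin n → α => qgvSupp s = T)).card = (Fintype.card α - 1) ^ T.card := by
    intro T
    have := qgv_supp_sum (α := α) (fun _ _ => (1 : ℕ)) (fun _ => rfl) T
    simp only [Finset.prod_const_one, Finset.sum_const, smul_eq_mul, mul_one, Finset.prod_const] at this
    rw [this]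
    congr 1
    rw [Finset.filter_ne', Finset.card_erase_of_mem (Finset.mem_univ _), Finset.card_univ]
  rw [Finset.card_eq_sum_card_fiberwise (f := qgvSupp) (t := (univ : Finset (Fin n)).powersetCard j)]
  · rw [Finset.sum_congr rfl (g := fun _ => (Fintype.card α - 1) ^ j)]
    · simp
    · intro T hT
      rw [Finset.mem_powersetCard] at hT
      rw [← hT.2, ← h1 T, Finset.filter_filter]
      congr 1
      ext s
      simp only [Finset.mem_filter, Finset.mem_univ, true_and]
      constructor
      · exact fun h => h.2
      · exact fun h => ⟨by rw [qgvW, h], h⟩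
  · intro s hs
    simp only [Finset.coe_filter, Finset.mem_univ, true_and, Set.mem_setOf_eq] at hs
    simp [hs, ← hs, qgvW]

lemma qgv_ball_card (d : ℕ) : (univ.filter (fun s : Fin n → α => qgvW s < d)).card =
    ∑ i ∈ range d, n.choose i * (Fintype.card α - 1) ^ i := by
  rw [Finset.card_eq_sum_card_fiberwise (f := qgvW) (t := range d)]
  · refine Finset.sum_congr rfl fun i hi => ?_
    rw [← qgv_sphere, Finset.filter_filter]
    congr 1
    ext s
    simp only [Finset.mem_filter, Finset.mem_univ, true_and]
    have := Finset.mem_range.mp hi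
    omega
  · intro s hs
    simpa using hs

/-- character sums over balls -/
lemma qgv_char (m : ℕ) (y : ℝ) (hy0 : 0 < y) (hy1 : y ≤ 1) (g : Fin n → α → ℂ) (hg : ∀ i, g i 0 = 1)
    (c : Fin n → ℝ) (hc : ∀ i, ‖∑ a ∈ univ.filter (fun a : α => a ≠ 0), g i a‖ ≤ c i) :
    ‖∑ s ∈ univ.filter (fun s : Fin n → α => qgvW s ≤ m), ∏ i, g i (s i)‖ ≤ (∏ i, (1 + c i * y)) / y ^ m := by
  have hc0 : ∀ i, 0 ≤ c i := fun i => (norm_nonneg _).trans (hc i)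
  have e : ∑ s ∈ univ.filter (fun s : Fin n → α => qgvW s ≤ m), ∏ i, g i (s i) =
      ∑ T ∈ univ.filter (fun T : Finset (Fin n) => T.card ≤ m),
        ∏ i ∈ T, ∑ a ∈ univ.filter (fun a : α => a ≠ 0), g i a := by
    rw [← Finset.sum_fiberwise_of_maps_to (g := qgvSupp) (t := univ.filter (fun T : Finset (Fin n) => T.card ≤ m))]
    · refine Finset.sum_congr rfl fun T hT => ?_
      rw [← qgv_supp_sum g hg, Finset.filter_filter]
      refine Finset.sum_congr ?_ fun _ _ => rfl
      ext s
      simp only [Finset.mem_filter, Finset.mem_univ, true_and] at hT ⊢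
      constructor
      · exact fun h => h.2
      · exact fun h => ⟨by rw [qgvW, h]; exact hT, h⟩
    · intro s hs
      rw [Finset.mem_filter] at hs ⊢
      exact ⟨Finset.mem_univ _, hs.2⟩
  rw [e, le_div_iff₀ (by positivity)]
  have h1 : ‖∑ T ∈ univ.filter (fun T : Finset (Fin n) => T.card ≤ m),
        ∏ i ∈ T, ∑ a ∈ univ.filter (fun a : α => a ≠ 0), g i a‖ ≤
      ∑ T ∈ univ.filter (fun T : Finset (Fin n) => T.card ≤ m), ∏ i ∈ T, c i := by
    refine (norm_sum_le _ _).trans (Finset.sum_le_sum fun T _ => ?_)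
    rw [norm_prod]
    exact Finset.prod_le_prod (fun _ _ => norm_nonneg _) fun i _ => hc i
  refine (mul_le_mul_of_nonneg_right h1 (by positivity)).trans ?_
  rw [Finset.sum_mul, Finset.prod_one_add, Finset.powerset_univ]
  refine (Finset.sum_le_sum (g := fun T => ∏ i ∈ T, c i * y) fun T hT => ?_).trans
    (Finset.sum_le_sum_of_subset_of_nonneg (Finset.subset_univ _) fun T _ _ =>
      Finset.prod_nonneg fun i _ => mul_nonneg (hc0 i) hy0.le)
  rw [Finset.prod_mul_distrib, Finset.prod_const]
  refine mul_le_mul_of_nonneg_left ?_ (Finset.prod_nonneg fun i _ => hc0 i)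
  exact pow_le_pow_of_le_one hy0.le hy1 (Finset.mem_filter.mp hT).2

/-- the mode of the binomial distribution -/
lemma qgv_mode (n m : ℕ) (hm : m < n) (v : ℝ) (hv : v = m / (n - m)) :
    (1 + v) ^ n ≤ (n + 1) * (n.choose m * v ^ m) := by
  have hmn : (m : ℝ) < n := by exact_mod_cast hm
  have hv0 : 0 ≤ v := by rw [hv]; exact div_nonneg (by positivity) (by linarith)
  have hvm : v * (n - m) = m := by rw [hv]; exact div_mul_cancel₀ _ (by linarith)
  set f : ℕ → ℝ := fun j => n.choose j * v ^ j with hf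
  have hf0 : ∀ j, 0 ≤ f j := fun j => by positivity
  have hrec : ∀ j, j ≤ n → f (j + 1) * ((j + 1) * (n - m)) = f j * ((n - j) * m) := by
    intro j hj
    have h := Nat.choose_succ_right_eq n j
    have h' : (n.choose (j + 1) : ℝ) * ((j : ℝ) + 1) = (n.choose j : ℝ) * ((n : ℝ) - j) := by
      rw [← Nat.cast_sub hj]; exact_mod_cast h
    simp only [hf]
    rw [pow_succ]
    linear_combination (v ^ j * v * (n - m)) * h' + ((n.choose j : ℝ) * v ^ j * (n - j)) * hvm
  have up : ∀ j, m ≤ j → j ≤ n → f j ≤ f m := by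
    intro j hj
    induction j, hj using Nat.le_induction with
    | base => intro _; exact le_rfl
    | succ j hj ih =>
      intro hjn
      refine le_trans ?_ (ih (by omega))
      have hj' : (m : ℝ) ≤ j := by exact_mod_cast hj
      have hjn' : (j : ℝ) ≤ n := by exact_mod_cast (by omega : j ≤ n)
      have hr := hrec j (by omega)
      have hpos : (0 : ℝ) < (j + 1) * (n - m) := mul_pos (by positivity) (by linarith)
      refine le_of_mul_le_mul_right ?_ hpos
      rw [hr]
      refine mul_le_mul_of_nonneg_left ?_ (hf0 j)
      nlinarith
  have down : ∀ k, k ≤ m → f (m - k) ≤ f m := by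
    intro k
    induction k with
    | zero => intro _; exact le_rfl
    | succ k ih =>
      intro hk
      refine le_trans ?_ (ih (by omega))
      have hr := hrec (m - (k + 1)) (by omega)
      rw [show m - (k + 1) + 1 = m - k by omega] at hr
      have hj : ((m - (k + 1) : ℕ) : ℝ) + 1 ≤ m := by exact_mod_cast (by omega : m - (k + 1) + 1 ≤ m)
      set j := m - (k + 1)
      have hpos : (0 : ℝ) < (n - j) * m := by
        have : (0:ℝ) < m := by exact_mod_cast (by omega : 0 < m)
        exact mul_pos (by linarith) this
      refine le_of_mul_le_mul_right ?_ hpos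
      rw [← hr]
      refine mul_le_mul_of_nonneg_left ?_ (hf0 _)
      have : (0:ℝ) ≤ j := by positivity
      nlinarith
  rw [add_comm 1 v, add_pow]
  have : ∀ j ∈ range (n + 1), v ^ j * 1 ^ (n - j) * (n.choose j : ℝ) ≤ f m := by
    intro j hj
    have hjn : j ≤ n := by simpa [Nat.lt_succ_iff] using hj
    have e : v ^ j * 1 ^ (n - j) * (n.choose j : ℝ) = f j := by simp [hf]; ring
    rw [e]
    rcases le_total m j with h | h
    · exact up j h hjn
    · have := down (m - j) (by omega)
      rwa [show m - (m - j) = j by omega] at this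
  refine (Finset.sum_le_sum this).trans ?_
  rw [Finset.sum_const, nsmul_eq_mul, Finset.card_range]
  push_cast
  exact le_rfl

lemma qgv_mem_supp (x : Fin n → α) (i : Fin n) : i ∈ qgvSupp x ↔ x i ≠ 0 := by simp [qgvSupp]

lemma qgvW_eq_zero (x : Fin n → α) : qgvW x = 0 ↔ x = 0 := by
  rw [qgvW, Finset.card_eq_zero, qgvSupp, Finset.filter_eq_empty_iff]
  simp [funext_iff]

lemma qgv_sum_split {R : Type} [AddCommMonoid R] (m : ℕ) (f : (Fin n → α) → R) :
    ∑ s ∈ univ.filter (fun s : Fin n → α => qgvW s ≤ m), f s =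
      f 0 + ∑ s ∈ univ.filter (fun s : Fin n → α => 1 ≤ qgvW s ∧ qgvW s ≤ m), f s := by
  have h0 : (0 : Fin n → α) ∉ univ.filter (fun s : Fin n → α => 1 ≤ qgvW s ∧ qgvW s ≤ m) := by
    have := (qgvW_eq_zero (0 : Fin n → α)).mpr rfl
    simp [this]
  rw [← Finset.sum_insert h0]
  refine Finset.sum_congr ?_ fun _ _ => rfl
  ext s
  rw [Finset.mem_insert, Finset.mem_filter, Finset.mem_filter, ← qgvW_eq_zero]
  simp only [Finset.mem_univ, true_and]
  omega

lemma qgv_char' (m : ℕ) (y : ℝ) (hy0 : 0 < y) (hy1 : y ≤ 1) (g : Fin n → α → ℂ) (hg : ∀ i, g i 0 = 1)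
    (z : Fin n → α) (A B ζ : ℝ) (hA : 0 ≤ A) (hB : 0 ≤ B) (hAB : 1 + B * y ≤ (1 + A * y) * ζ)
    (hc : ∀ i, ‖∑ a ∈ univ.filter (fun a : α => a ≠ 0), g i a‖ ≤ if z i = 0 then A else B) :
    ‖∑ s ∈ univ.filter (fun s : Fin n → α => qgvW s ≤ m), ∏ i, g i (s i)‖ ≤
      (1 + A * y) ^ n / y ^ m * ζ ^ qgvW z := by
  refine (qgv_char m y hy0 hy1 g hg _ hc).trans ?_
  rw [div_mul_eq_mul_div]
  refine div_le_div_of_nonneg_right ?_ (by positivity)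
  have e : ∀ i, (1 + (if z i = 0 then A else B) * y) = if z i = 0 then 1 + A * y else 1 + B * y := by
    intro i; split_ifs <;> ring
  simp only [e]
  exact qgv_prod_ratio z _ _ ζ (by positivity) (by positivity) hAB

end Est1



section Est2

variable {n : ℕ} {F : Type} [Field F] [Fintype F]

noncomputable def qgvS (n m : ℕ) (F : Type) [Field F] [Fintype F] : Finset (Fin n → F × F) :=
  univ.filter (fun s => 1 ≤ qgvW s ∧ qgvW s ≤ m)

lemma qgv_char_local (χ : AddChar F ℂ) (hχ : χ ≠ 1) (b : F × F) :
    ‖∑ a ∈ univ.filter (fun a : F × F => a ≠ 0), χ (a.1 * b.2 - a.2 * b.1)‖ ≤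
      if b = 0 then (Fintype.card F : ℝ) ^ 2 - 1 else 1 := by
  split_ifs with hb
  · refine (norm_sum_le _ _).trans ?_
    simp only [AddChar.norm_apply, Finset.sum_const, nsmul_eq_mul, mul_one]
    rw [Finset.filter_ne', Finset.card_erase_of_mem (Finset.mem_univ _), Finset.card_univ, Fintype.card_prod,
      Nat.cast_sub (Nat.mul_pos Fintype.card_pos Fintype.card_pos)]
    push_cast
    rw [sq]
  · let f : F × F →+ F :=
      { toFun := fun a => a.1 * b.2 - a.2 * b.1
        map_zero' := by simp
        map_add' := by intro a c; simp; ring }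
    have hne : χ.compAddMonoidHom f ≠ 1 := by
      intro h
      apply hχ
      ext c
      have hsurj : ∃ a : F × F, a.1 * b.2 - a.2 * b.1 = c := by
        by_cases h2 : b.2 = 0
        · have h1 : b.1 ≠ 0 := fun h1 => hb (Prod.ext h1 h2)
          exact ⟨(0, -c / b.1), by simp [h1]⟩
        · exact ⟨(c / b.2, 0), by simp [h2]⟩
      obtain ⟨a, ha⟩ := hsurj
      have := DFunLike.congr_fun h a
      simp only [AddChar.compAddMonoidHom_apply, AddChar.one_apply] at this ⊢
      rw [← ha]; exact this
    have h0 := AddChar.sum_eq_zero_of_ne_one hne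
    rw [Finset.filter_ne', ← Finset.sum_erase_add _ _ (Finset.mem_univ (0 : F × F))] at *
    have h1 : χ.compAddMonoidHom f 0 = 1 := AddChar.map_zero_eq_one _
    rw [h1] at h0
    have : ∑ a ∈ univ.erase (0 : F × F), χ (a.1 * b.2 - a.2 * b.1) = -1 := eq_neg_of_add_eq_zero_left h0
    rw [this]; simp

lemma qgv_char_om {ι : Type} [Fintype ι] (χ : AddChar F ℂ) (s z : ι → F × F) :
    χ (qgvOm s z) = ∏ i, χ ((s i).1 * (z i).2 - (s i).2 * (z i).1) := by
  have : ∀ (f : ι → F) (t : Finset ι), χ (∑ i ∈ t, f i) = ∏ i ∈ t, χ (f i) := by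
    intro f t
    induction t using Finset.induction_on with
    | empty => simp
    | insert a t ha ih => rw [Finset.sum_insert ha, Finset.prod_insert ha, AddChar.map_add_eq_mul, ih]
  rw [qgvOm, this]

structure QgvEst (n m : ℕ) (F : Type) [Field F] [Fintype F] (η : ℝ) : Prop where
  e1 : ∀ z : Fin n → F × F, (((qgvS n m F).filter (fun s => 2 * qgvW (s + z) < m ∨ qgvAl (s + z) = 0)).card : ℝ) ≤
    η * (qgvS n m F).card
  e2 : ∀ z : Fin n → F × F, m ≤ 2 * qgvW z →
    (((qgvS n m F).filter (fun s => s + z ∈ qgvS n m F)).card : ℝ) ≤ η * (qgvS n m F).card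
  e3 : ∀ (χ : AddChar F ℂ), χ ≠ 1 → ∀ z : Fin n → F × F, m ≤ 2 * qgvW z →
    ‖∑ s ∈ qgvS n m F, χ (qgvOm s z)‖ ≤ η * (qgvS n m F).card
  e4 : 1 ≤ η * (qgvS n m F).card

lemma qgv_est (n m : ℕ) (F : Type) [Field F] [Fintype F] (hm : 1 ≤ m) (hmn : m < n) (x ζ : ℝ)
    (hx0 : 0 < x) (hx1 : x ≤ 1) (hζ1 : ζ ≤ 1)
    (hx : x ^ 2 = m / ((n - m) * ((Fintype.card F : ℝ) ^ 2 - 1)))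
    (z1 : x ≤ ζ) (z2 : 1 - (1 - x) ^ 2 / (Fintype.card F : ℝ) ^ 2 ≤ ζ)
    (z3 : 1 - x ^ 2 / (Fintype.card F : ℝ) ^ 2 ≤ ζ) :
    QgvEst n m F (2 * (n + 1) * ζ ^ (m / 2)) := by
  have hq : (2 : ℝ) ≤ Fintype.card F := by exact_mod_cast Fintype.one_lt_card
  have hcard : (Fintype.card (F × F) : ℝ) = (Fintype.card F : ℝ) ^ 2 := by
    rw [Fintype.card_prod]; push_cast; ring
  set q : ℝ := (Fintype.card F : ℝ) with hqd
  have hQ : 4 ≤ q ^ 2 := by nlinarith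
  have hζ0 : 0 < ζ := hx0.trans_le z1
  have hmn' : (m : ℝ) < n := by exact_mod_cast hmn
  set Ξ : ℝ := (1 + (q ^ 2 - 1) * x ^ 2) ^ n / (x ^ 2) ^ m with hΞ
  have hbase : 0 < 1 + (q ^ 2 - 1) * x ^ 2 := by
    have : 0 ≤ (q ^ 2 - 1) * x ^ 2 := mul_nonneg (by linarith) (by positivity)
    linarith
  have hΞ0 : 0 < Ξ := by positivity
  set h := m / 2 with hh
  -- half
  have F1 := qgv_half (n := n) (α := F × F) m x hx0 hx1
  rw [hcard, ← hΞ] at F1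
  have hxm : x ^ m ≤ ζ ^ h :=
    (pow_le_pow_left₀ hx0.le z1 m).trans (pow_le_pow_of_le_one hζ0.le hζ1 (by omega))
  have F1' : ((univ.filter (fun s : Fin n → F × F => 2 * qgvW s < m)).card : ℝ) ≤ Ξ * ζ ^ h :=
    F1.trans (mul_le_mul_of_nonneg_left hxm hΞ0.le)
  have hone : 1 ≤ Ξ * ζ ^ h := by
    refine le_trans ?_ F1'
    have : 0 < (univ.filter (fun s : Fin n → F × F => 2 * qgvW s < m)).card := by
      apply Finset.card_pos.mpr
      refine ⟨0, ?_⟩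
      rw [Finset.mem_filter]
      refine ⟨Finset.mem_univ _, ?_⟩
      simp [qgvW, qgvSupp]; omega
    exact_mod_cast this
  -- lower bound on S
  have hS : Ξ ≤ (n + 1) * (qgvS n m F).card := by
    have hmode := qgv_mode n m hmn ((q ^ 2 - 1) * x ^ 2) (by
      rw [hx]
      have h1 : (n : ℝ) - m ≠ 0 := by linarith
      have h2 : q ^ 2 - 1 ≠ 0 := by linarith
      field_simp)
    have hsph : (univ.filter (fun s : Fin n → F × F => qgvW s = m)).card ≤ (qgvS n m F).card := by
      apply Finset.card_le_card
      intro s hs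
      rw [qgvS, Finset.mem_filter] at *
      refine ⟨hs.1, ?_⟩
      have := hs.2
      omega
    rw [qgv_sphere] at hsph
    have hsph' : (n.choose m : ℝ) * (q ^ 2 - 1) ^ m ≤ (qgvS n m F).card := by
      have : ((n.choose m * (Fintype.card (F × F) - 1) ^ m : ℕ) : ℝ) ≤ (qgvS n m F).card := by exact_mod_cast hsph
      rw [Nat.cast_mul, Nat.cast_pow, Nat.cast_sub Fintype.card_pos, hcard] at this
      simpa using this
    rw [hΞ, div_le_iff₀ (by positivity)]
    refine hmode.trans ?_
    rw [mul_pow, ← mul_assoc, ← mul_assoc, mul_assoc ((n : ℝ) + 1)]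
    gcongr
  have hfin : 2 * (Ξ * ζ ^ h) ≤ 2 * (n + 1) * ζ ^ h * (qgvS n m F).card := by
    have := mul_le_mul_of_nonneg_right hS (pow_nonneg hζ0.le h)
    linarith
  have hbig : 1 + (q ^ 2 - 2) * x ^ 2 ≤ (1 + (q ^ 2 - 1) * x ^ 2) * ζ := by
    have a1 := mul_le_mul_of_nonneg_left z3 hbase.le
    have a2 : (1 + (q ^ 2 - 1) * x ^ 2) * (x ^ 2 / q ^ 2) ≤ x ^ 2 := by
      rw [mul_div_assoc', div_le_iff₀ (by positivity)]
      have : 1 + (q ^ 2 - 1) * x ^ 2 ≤ q ^ 2 := by nlinarith [pow_le_one₀ hx0.le hx1 (n := 2)]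
      nlinarith [sq_nonneg x]
    linarith
  have hx2 : x ^ 2 ≤ 1 := pow_le_one₀ hx0.le hx1
  have hpw : ∀ z : Fin n → F × F, m ≤ 2 * qgvW z → ζ ^ qgvW z ≤ ζ ^ h := fun z hz =>
    pow_le_pow_of_le_one hζ0.le hζ1 (by omega)
  refine ⟨?_, ?_, ?_, ?_⟩
  · intro z
    have F4 := qgv_ball (n := n) (α := F) m (x ^ 2) (by positivity) hx2
    have F4' : ((univ.filter (fun s : Fin n → F => qgvW s ≤ m)).card : ℝ) ≤ Ξ * ζ ^ h := by
      refine F4.trans ?_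
      rw [hΞ, div_mul_eq_mul_div]
      refine div_le_div_of_nonneg_right ?_ (by positivity)
      have : (1 + (q - 1) * x ^ 2) ^ n ≤ ((1 + (q ^ 2 - 1) * x ^ 2) * ζ) ^ n := by
        refine pow_le_pow_left₀ ?_ ?_ n
        · have : 0 ≤ (q - 1) * x ^ 2 := mul_nonneg (by linarith) (by positivity)
          linarith
        · refine le_trans ?_ hbig
          have : (q - 1) * x ^ 2 ≤ (q ^ 2 - 2) * x ^ 2 :=
            mul_le_mul_of_nonneg_right (by nlinarith) (by positivity)
          linarith
      refine this.trans ?_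
      rw [mul_pow]
      exact mul_le_mul_of_nonneg_left (pow_le_pow_of_le_one hζ0.le hζ1 (by omega)) (by positivity)
    have hsub : ((qgvS n m F).filter (fun s => 2 * qgvW (s + z) < m ∨ qgvAl (s + z) = 0)).card ≤
        (univ.filter (fun s : Fin n → F × F => 2 * qgvW s < m)).card +
        (univ.filter (fun s : Fin n → F => qgvW s ≤ m)).card := by
      rw [Finset.filter_or]
      refine (Finset.card_union_le _ _).trans (add_le_add ?_ ?_)
      · refine Finset.card_le_card_of_injOn (fun s => s + z) ?_ (fun a _ b _ h => add_right_cancel h)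
        intro s hs
        have := (Finset.mem_filter.mp hs).2
        exact Finset.mem_filter.mpr ⟨Finset.mem_univ _, this⟩
      · refine Finset.card_le_card_of_injOn (fun s => qgvBe s) ?_ ?_
        · intro s hs
          have h1 := (Finset.mem_filter.mp (Finset.mem_filter.mp hs).1).2.2
          refine Finset.mem_filter.mpr ⟨Finset.mem_univ _, le_trans ?_ h1⟩
          apply Finset.card_le_card
          intro i hi
          rw [qgv_mem_supp] at *
          refine fun h => hi ?_
          change (s i).2 = 0
          rw [h]; rfl
        · intro a ha b hb hab
          have h1 := (Finset.mem_filter.mp ha).2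
          have h2 := (Finset.mem_filter.mp hb).2
          rw [← sub_eq_zero]
          apply qgv_ext
          · rw [map_sub]
            rw [map_add] at h1 h2
            rw [sub_eq_zero]
            exact add_right_cancel (h1.trans h2.symm)
          · rw [map_sub, sub_eq_zero]; exact hab
    have : (((qgvS n m F).filter (fun s => 2 * qgvW (s + z) < m ∨ qgvAl (s + z) = 0)).card : ℝ) ≤
        (univ.filter (fun s : Fin n → F × F => 2 * qgvW s < m)).card +
        (univ.filter (fun s : Fin n → F => qgvW s ≤ m)).card := by exact_mod_cast hsub
    linarith
  · intro z hz
    have F3 := qgv_shift (n := n) (α := F × F) m x ζ hx0 hx1 Fintype.one_lt_card (by rw [hcard]; exact z2) z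
    rw [hcard, ← hΞ] at F3
    have F3' := F3.trans (mul_le_mul_of_nonneg_left (hpw z hz) hΞ0.le)
    have hsub : (qgvS n m F).filter (fun s => s + z ∈ qgvS n m F) ⊆
      univ.filter (fun s : Fin n → F × F => qgvW s ≤ m ∧ qgvW (s + z) ≤ m) := by
      intro s hs
      have h1 := Finset.mem_filter.mp hs
      have h2 := (Finset.mem_filter.mp h1.1).2
      have h3 := (Finset.mem_filter.mp h1.2).2
      exact Finset.mem_filter.mpr ⟨Finset.mem_univ _, h2.2, h3.2⟩
    have := Nat.cast_le (α := ℝ).mpr (Finset.card_le_card hsub)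
    linarith
  · intro χ hχ z hz
    have F2 := qgv_char' (n := n) (α := F × F) m (x ^ 2) (by positivity) hx2
      (fun i a => χ (a.1 * (z i).2 - a.2 * (z i).1)) (by intro i; simp) z (q ^ 2 - 1) 1 ζ
      (by linarith) (by norm_num) (le_trans (by nlinarith [sq_nonneg x]) hbig) (fun i => by
        have := qgv_char_local χ hχ (z i)
        convert this)
    rw [← hΞ] at F2
    have F2'' := F2.trans (mul_le_mul_of_nonneg_left (hpw z hz) hΞ0.le)
    rw [qgv_sum_split] at F2''
    change ‖_ + ∑ s ∈ qgvS n m F, _‖ ≤ _ at F2''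
    simp only [← qgv_char_om] at F2''
    have hz0 : ‖χ (qgvOm 0 z)‖ = 1 := AddChar.norm_apply _ _
    have := norm_sub_le (χ (qgvOm 0 z) + ∑ s ∈ qgvS n m F, χ (qgvOm s z)) (χ (qgvOm 0 z))
    rw [add_sub_cancel_left] at this
    linarith
  · linarith

end Est2


section Inst

variable {F : Type} [Field F] [Fintype F]

lemma qgv_reps {V : Type} [AddCommGroup V] [Module F V] [Fintype V] (I : Finset V) (h0 : (0 : V) ∉ I)
    (hI : ∀ c : F, c ≠ 0 → ∀ x ∈ I, c • x ∈ I) :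
    ∃ I' : Finset V, (∀ x ∈ I', x ∈ I) ∧ (∀ x ∈ I', ∀ y ∈ I', ∀ c : F, x = c • y → x = y) ∧
      ∀ P : V → Prop, (∀ c : F, c ≠ 0 → ∀ x, P x → P (c • x)) →
        ((I.filter P).card : ℝ) = ((Fintype.card F : ℝ) - 1) * (I'.filter P).card := by
  let R := MulAction.orbitRel Fˣ V
  let rp : V → V := fun x => (Quotient.mk R x).out
  have hrp : ∀ x, ∃ c : Fˣ, c • x = rp x := by
    intro x
    have : R (rp x) x := Quotient.mk_out (s := R) x
    exact this
  have hsame : ∀ x y : V, ∀ c : Fˣ, c • x = y → rp x = rp y := by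
    intro x y c h
    have : Quotient.mk R x = Quotient.mk R y := by
      apply Quotient.sound
      refine ⟨c⁻¹, ?_⟩
      simp [← h]
    simp only [rp, this]
  refine ⟨I.filter (fun x => rp x = x), fun x hx => (Finset.mem_filter.mp hx).1, ?_, ?_⟩
  · intro x hx y hy c hxy
    rw [Finset.mem_filter] at hx hy
    have hc : c ≠ 0 := by
      rintro rfl
      rw [zero_smul] at hxy
      exact h0 (hxy ▸ hx.1)
    have := hsame y x (Units.mk0 c hc) (by rw [hxy]; rfl)
    rw [hx.2, hy.2] at this
    exact this.symm
  · intro P hP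
    have hcard : (I.filter P).card = (((I.filter (fun x => rp x = x)).filter P) ×ˢ (univ : Finset Fˣ)).card := by
      symm
      refine Finset.card_bij (fun p _ => p.2 • p.1) ?_ ?_ ?_
      · rintro ⟨x, c⟩ h
        simp only [Finset.mem_product, Finset.mem_filter, Finset.mem_univ, and_true] at h ⊢
        exact ⟨hI c c.ne_zero x h.1.1, hP c c.ne_zero x h.2⟩
      · rintro ⟨x, c⟩ h ⟨y, d⟩ h' hxy
        simp only [Finset.mem_product, Finset.mem_filter, Finset.mem_univ, and_true] at h h' hxy
        have e1 := hsame x _ c hxy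
        have e2 := hsame y _ d rfl
        rw [← e2, h.1.2, h'.1.2] at e1
        subst e1
        have hx0 : x ≠ 0 := fun h0' => h0 (h0' ▸ h.1.1)
        have : (c : F) • x = (d : F) • x := hxy
        have := smul_left_injective F hx0 this
        rw [Units.ext this]
      · intro z hz
        rw [Finset.mem_filter] at hz
        obtain ⟨c, hc⟩ := hrp z
        refine ⟨(rp z, c⁻¹), ?_, ?_⟩
        · simp only [Finset.mem_product, Finset.mem_filter, Finset.mem_univ, and_true]
          refine ⟨⟨?_, ?_⟩, ?_⟩
          · rw [← hc]; exact hI c c.ne_zero z hz.1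
          · exact (hsame z _ c hc).symm
          · rw [← hc]; exact hP c c.ne_zero z hz.2
        · simp [← hc]
    rw [hcard, Finset.card_product, Finset.card_univ, Fintype.card_units]
    push_cast [Nat.cast_sub (Fintype.card_pos (α := F))]
    ring

lemma qgv_sum_lift {α R : Type} [Fintype α] [CommSemiring R] (n r : ℕ) (f : (Fin n → α) → R) (g : (Fin r → α) → R) :
    ∑ x : Fin n ⊕ Fin r → α, f (x ∘ Sum.inl) * g (x ∘ Sum.inr) = (∑ s, f s) * ∑ t, g t := by
  rw [Fintype.sum_mul_sum, ← Fintype.sum_prod_type']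
  refine Fintype.sum_equiv (Equiv.sumArrowEquivProdArrow _ _ _) _ _ fun x => ?_
  rfl

lemma qgv_card_lift {α : Type} [Fintype α] (n r : ℕ) (P : (Fin n → α) → Prop) :
    ((univ.filter (fun x : Fin n ⊕ Fin r → α => P (x ∘ Sum.inl))).card : ℝ) =
      (univ.filter P).card * (Fintype.card α : ℝ) ^ r := by
  have := qgv_sum_lift (α := α) (R := ℝ) n r (fun s => if P s then 1 else 0) (fun _ => 1)
  simp only [mul_one, Finset.sum_boole, Finset.sum_const, Finset.card_univ, nsmul_eq_mul] at this
  rw [this]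
  simp

lemma qgvW_smul {n : ℕ} (c : F) (hc : c ≠ 0) (x : Fin n → F × F) : qgvW (c • x) = qgvW x := by
  rw [qgvW, qgvW]
  congr 1
  ext i
  rw [qgv_mem_supp, qgv_mem_supp]
  simp [hc]

lemma qgv_om_sum {ι : Type} [Fintype ι] (t : Finset (ι → F × F)) (x : ι → F × F) (l : t → F) :
    qgvOm x (∑ y, l y • (y : ι → F × F)) = ∑ y, l y * qgvOm x y := by
  simp only [qgvOm_eq, map_sum, map_smul, dotProduct_sum, dotProduct_smul, smul_eq_mul, mul_sub,
    Finset.sum_sub_distrib]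

lemma qgv_om_smul {ι : Type} [Fintype ι] (x y : ι → F × F) (c : F) :
    qgvOm (c • x) y = c * qgvOm x y := by
  simp only [qgvOm_eq, map_smul, smul_dotProduct, smul_eq_mul, mul_sub]

lemma qgv_om_lift {n r : ℕ} (x y : Fin n ⊕ Fin r → F × F) :
    qgvOm x y = qgvOm (x ∘ Sum.inl) (y ∘ Sum.inl) + qgvOm (x ∘ Sum.inr) (y ∘ Sum.inr) := by
  simp only [qgvOm, Fintype.sum_sum_type, Function.comp]

lemma qgv_orth_count {ι : Type} [Fintype ι] (χ : AddChar F ℂ) (hχ : χ ≠ 1) (I t : Finset (ι → F × F)) (B : ℝ)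
    (hB : ∀ l : t → F, l ≠ 0 → ‖∑ x ∈ I, χ (qgvOm x (∑ y, l y • (y : ι → F × F)))‖ ≤ B) (hB0 : 0 ≤ B) :
    |((I.filter (fun x => ∀ y ∈ t, qgvOm x y = 0)).card : ℝ) - I.card / (Fintype.card F : ℝ) ^ t.card| ≤ B := by
  have hp : χ.IsPrimitive := AddChar.IsPrimitive.of_ne_one hχ
  set q : ℝ := (Fintype.card F : ℝ) with hq
  have hq0 : 0 < q := by rw [hq]; exact_mod_cast Fintype.card_pos
  have h1 : ∀ x : ι → F × F, ∑ l : t → F, χ (qgvOm x (∑ y, l y • (y : ι → F × F))) =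
      if ∀ y ∈ t, qgvOm x y = 0 then (q : ℂ) ^ t.card else 0 := by
    intro x
    have : ∀ l : t → F, χ (qgvOm x (∑ y, l y • (y : ι → F × F))) = ∏ y : t, χ (l y * qgvOm x y) := by
      intro l
      rw [qgv_om_sum]
      have key : ∀ (f : t → F) (u : Finset t), χ (∑ i ∈ u, f i) = ∏ i ∈ u, χ (f i) := by
        intro f u
        induction u using Finset.induction_on with
        | empty => simp
        | insert a u ha ih => rw [Finset.sum_insert ha, Finset.prod_insert ha, AddChar.map_add_eq_mul, ih]
      exact key _ _
    simp only [this]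
    rw [← Fintype.prod_sum (fun (y : t) (c : F) => χ (c * qgvOm x y))]
    simp only [AddChar.sum_mulShift _ hp]
    split_ifs with h
    · rw [Finset.prod_congr rfl (g := fun _ => (q : ℂ))]
      · simp
      · intro y _
        simp [h y y.2, hq]
    · push Not at h
      obtain ⟨y, hy, hy'⟩ := h
      exact Finset.prod_eq_zero (Finset.mem_univ ⟨y, hy⟩) (by simp [hy'])
  have h2 : ((I.filter (fun x => ∀ y ∈ t, qgvOm x y = 0)).card : ℂ) * (q : ℂ) ^ t.card =
      ∑ l : t → F, ∑ x ∈ I, χ (qgvOm x (∑ y, l y • (y : ι → F × F))) := by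
    rw [Finset.sum_comm]
    simp only [h1]
    rw [Finset.sum_ite]
    simp
  have h3 : ((I.filter (fun x => ∀ y ∈ t, qgvOm x y = 0)).card : ℂ) * (q : ℂ) ^ t.card - I.card =
      ∑ l ∈ univ.filter (fun l : t → F => l ≠ 0), ∑ x ∈ I, χ (qgvOm x (∑ y, l y • (y : ι → F × F))) := by
    rw [h2, ← Finset.sum_filter_add_sum_filter_not univ (fun l : t → F => l ≠ 0)]
    have : univ.filter (fun l : t → F => ¬ l ≠ 0) = {0} := by ext; simp
    rw [this, Finset.sum_singleton]
    have : ∀ x : ι → F × F, qgvOm x 0 = 0 := fun x => by simp [qgvOm]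
    simp [this]
  have h4 : |((I.filter (fun x => ∀ y ∈ t, qgvOm x y = 0)).card : ℝ) * q ^ t.card - I.card| ≤ q ^ t.card * B := by
    have : ‖((((I.filter (fun x => ∀ y ∈ t, qgvOm x y = 0)).card : ℝ) * q ^ t.card - I.card : ℝ) : ℂ)‖ ≤ q ^ t.card * B := by
      push_cast
      rw [h3]
      refine (norm_sum_le _ _).trans ((Finset.sum_le_card_nsmul _ _ B ?_).trans ?_)
      · intro l hl; exact hB l (Finset.mem_filter.mp hl).2
      · rw [nsmul_eq_mul]
        refine mul_le_mul_of_nonneg_right ?_ hB0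
        have := Finset.card_le_univ (univ.filter (fun l : t → F => l ≠ 0))
        rw [Fintype.card_fun, Fintype.card_coe] at this
        rw [hq]; exact_mod_cast this
    rwa [Complex.norm_real, Real.norm_eq_abs] at this
  have hqt : 0 < q ^ t.card := by positivity
  have e : ((I.filter (fun x => ∀ y ∈ t, qgvOm x y = 0)).card : ℝ) - I.card / q ^ t.card =
    (((I.filter (fun x => ∀ y ∈ t, qgvOm x y = 0)).card : ℝ) * q ^ t.card - I.card) / q ^ t.card := by
    field_simp
  rw [e, abs_div, abs_of_pos hqt, div_le_iff₀ hqt, mul_comm B]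
  exact h4

end Inst


section Inst2

variable {F : Type} [Field F] [Fintype F]

def qgvZ (n m r : ℕ) (F : Type) [Field F] [Fintype F] : Set (Fin n ⊕ Fin r → F × F) :=
  {y | 2 * qgvW (y ∘ Sum.inl) < m ∨ qgvAl (y ∘ Sum.inl) = 0}

def qgvI (n m r : ℕ) (F : Type) [Field F] [Fintype F] : Set (Fin n ⊕ Fin r → F × F) :=
  {y | y ∘ Sum.inl ∈ qgvS n m F}

lemma qgv_mem_S {n m : ℕ} (s : Fin n → F × F) : s ∈ qgvS n m F ↔ 1 ≤ qgvW s ∧ qgvW s ≤ m := by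
  rw [qgvS, Finset.mem_filter]
  simp

lemma qgv_lift_set {α : Type} [Fintype α] (n r : ℕ) (T : Finset (Fin n → α)) :
    ∃ I : Finset (Fin n ⊕ Fin r → α), (∀ x, x ∈ I ↔ x ∘ Sum.inl ∈ T) ∧
      ((I.card : ℝ) = T.card * (Fintype.card α : ℝ) ^ r) ∧
      ∀ (f : (Fin n → α) → ℂ) (g : (Fin r → α) → ℂ),
        ∑ x ∈ I, f (x ∘ Sum.inl) * g (x ∘ Sum.inr) = (∑ s ∈ T, f s) * ∑ t, g t := by
  refine ⟨univ.filter (fun x => x ∘ Sum.inl ∈ T), fun x => by simp, ?_, ?_⟩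
  · have := qgv_card_lift (α := α) n r (fun s => s ∈ T)
    have e : univ.filter (fun s => s ∈ T) = T := by ext; simp
    convert this
    ext; simp
  · intro f g
    have := qgv_sum_lift (α := α) n r (fun s => if s ∈ T then f s else 0) g
    rw [← Finset.sum_filter] at this
    rw [Finset.sum_filter]
    have e : univ.filter (fun s => s ∈ T) = T := by ext; simp
    rw [e] at this
    rw [← this]
    refine Finset.sum_congr rfl fun x _ => ?_
    split_ifs <;> simp

lemma qgv_mem_I (n m r : ℕ) (x : Fin n ⊕ Fin r → F × F) :
    x ∈ qgvI n m r F ↔ x ∘ Sum.inl ∈ qgvS n m F := Iff.rfl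

lemma qgv_mem_Z (n m r : ℕ) (x : Fin n ⊕ Fin r → F × F) :
    x ∈ qgvZ n m r F ↔ (2 * qgvW (x ∘ Sum.inl) < m ∨ qgvAl (x ∘ Sum.inl) = 0) := Iff.rfl

set_option maxHeartbeats 1000000 in
lemma qgv_inst (n m r : ℕ) (η : ℝ) (E : QgvEst n m F η) :
    ∃ I' : Finset (Fin n ⊕ Fin r → F × F),
      QgvHyp I' (qgvI n m r F) (qgvZ n m r F) (((Fintype.card F : ℝ) - 1) * η) ∧
      ((qgvS n m F).card : ℝ) * ((Fintype.card F : ℝ) ^ 2) ^ r = ((Fintype.card F : ℝ) - 1) * I'.card ∧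
      ∀ x ∈ qgvI n m r F, ∃ c : F, c ≠ 0 ∧ c • x ∈ I' := by
  have hq : (2 : ℝ) ≤ Fintype.card F := by exact_mod_cast Fintype.one_lt_card
  have hη : 0 ≤ η := by
    have := E.e4
    by_contra h
    push Not at h
    have : η * (qgvS n m F).card ≤ 0 := mul_nonpos_of_nonpos_of_nonneg h.le (by positivity)
    linarith [E.e4]
  set q : ℝ := (Fintype.card F : ℝ) with hqd
  have hQ : ((Fintype.card (F × F) : ℕ) : ℝ) = q ^ 2 := by
    rw [Fintype.card_prod]; push_cast; rw [sq]
  obtain ⟨I, hmem, hIcard, hIsum⟩ := qgv_lift_set (α := F × F) n r (qgvS n m F)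
  rw [hQ] at hIcard
  have h0 : (0 : Fin n ⊕ Fin r → F × F) ∉ I := by
    rw [hmem, qgv_mem_S]
    have : qgvW ((0 : Fin n ⊕ Fin r → F × F) ∘ Sum.inl) = 0 := (qgvW_eq_zero _).mpr rfl
    omega
  have hcomp : ∀ (c : F) (x : Fin n ⊕ Fin r → F × F), (c • x) ∘ Sum.inl = c • (x ∘ Sum.inl) := fun _ _ => rfl
  have hIs : ∀ c : F, c ≠ 0 → ∀ x ∈ I, c • x ∈ I := by
    intro c hc x hx
    rw [hmem, qgv_mem_S] at hx ⊢
    rwa [hcomp, qgvW_smul c hc]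
  obtain ⟨I', hsub, hprop, hcount⟩ := qgv_reps I h0 hIs
  have hI' : (I.card : ℝ) = (q - 1) * I'.card := by
    have := hcount (fun _ => True) (fun _ _ _ _ => trivial)
    simpa using this
  have hle : ∀ (P : (Fin n ⊕ Fin r → F × F) → Prop) (P' : (Fin n → F × F) → Prop),
      (∀ x, P x → P' (x ∘ Sum.inl)) → (((qgvS n m F).filter P').card : ℝ) ≤ η * (qgvS n m F).card →
      ((I'.filter P).card : ℝ) ≤ (q - 1) * η * I'.card := by
    intro P P' hP hP'
    obtain ⟨K, hKmem, hKcard, -⟩ := qgv_lift_set (α := F × F) n r ((qgvS n m F).filter P')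
    rw [hQ] at hKcard
    have e1 : ((I'.filter P).card : ℝ) ≤ K.card := by
      refine Nat.cast_le.mpr (Finset.card_le_card fun x hx => ?_)
      have hx := Finset.mem_filter.mp hx
      exact (hKmem x).mpr (Finset.mem_filter.mpr ⟨(hmem x).mp (hsub x hx.1), hP x hx.2⟩)
    calc _ ≤ _ := e1
      _ = _ := hKcard
      _ ≤ η * (qgvS n m F).card * (q ^ 2) ^ r := by gcongr
      _ = η * I.card := by rw [hIcard]; ring
      _ = _ := by rw [hI']; ring
  refine ⟨I', ⟨?_, ?_, ?_, ?_, ?_, ?_, ?_, ?_, ?_⟩, ?_, ?_⟩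
  · exact fun x hx => (hmem x).mp (hsub x hx)
  · exact fun h => h0 (hsub _ h)
  · intro x hx
    right
    funext i
    exact congrFun hx (Sum.inl i)
  · rintro c hc x (hx | hx)
    · left
      rwa [hcomp, qgvW_smul c hc]
    · right
      rw [hcomp, map_smul, hx, smul_zero]
  · intro c hc x hx
    exact (hmem _).mp (hIs c hc x ((hmem x).mpr hx))
  · exact hprop
  · intro y
    exact hle (fun x => x + y ∈ qgvZ n m r F)
      (fun s => 2 * qgvW (s + y ∘ Sum.inl) < m ∨ qgvAl (s + y ∘ Sum.inl) = 0)
      (fun x hx => (qgv_mem_Z n m r _).mp hx) (by convert E.e1 (y ∘ Sum.inl))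
  · intro y hy
    have hyW : m ≤ 2 * qgvW (y ∘ Sum.inl) := by
      by_contra h
      exact hy (Or.inl (by omega))
    refine hle (fun x => x + y ∈ qgvI n m r F) (fun s => s + y ∘ Sum.inl ∈ qgvS n m F)
      (fun x hx => (qgv_mem_I n m r _).mp hx) (by convert E.e2 (y ∘ Sum.inl) hyW)
  · intro t ht
    obtain ⟨χ, hχ⟩ := AddChar.exists_apply_ne_zero (α := F) |>.mpr (one_ne_zero (α := F))
    have hχ1 : χ ≠ 1 := by rintro rfl; simp at hχ
    have hB := qgv_orth_count χ hχ1 I t (η * I.card) ?_ (by positivity)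
    · have hs : ∀ c : F, c ≠ 0 → ∀ x : Fin n ⊕ Fin r → F × F, (∀ y ∈ t, qgvOm x y = 0) → ∀ y ∈ t, qgvOm (c • x) y = 0 := by
        intro c _ x hx y hy
        rw [qgv_om_smul, hx y hy, mul_zero]
      have hc := hcount _ hs
      have hB : |((I.filter (fun x => ∀ y ∈ t, qgvOm x y = 0)).card : ℝ) - I.card / q ^ t.card| ≤ η * I.card := by
        convert hB
      rw [show ((I.filter (fun x => ∀ y ∈ t, qgvOm x y = 0)).card : ℝ) = (q - 1) * (I'.filter (fun x => ∀ y ∈ t, qgvOm x y = 0)).card by convert hc, hI', mul_div_assoc, ← mul_sub, abs_mul, abs_of_nonneg (by linarith)] at hB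
      have h1 : 0 ≤ η * I'.card := by positivity
      have h2 : (q - 1) * |((I'.filter (fun x => ∀ y ∈ t, qgvOm x y = 0)).card : ℝ) - I'.card / q ^ t.card| ≤ (q - 1) * (η * I'.card) := by
        linarith
      have h3 := le_of_mul_le_mul_left h2 (by linarith)
      have h4 : |((I'.filter (fun x => ∀ y ∈ t, qgvOm x y = 0)).card : ℝ) - I'.card / q ^ t.card| ≤ (q - 1) * η * I'.card := by
        nlinarith
      convert h4
    · intro l hl
      have hy : (∑ y, l y • (y : Fin n ⊕ Fin r → F × F)) ∉ qgvZ n m r F := by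
        have := (ht (fun x => if h : x ∈ t then l ⟨x, h⟩ else 0) ?_).1
        · rw [← Finset.sum_coe_sort] at this
          simpa using this
        · obtain ⟨y, hy⟩ := Function.ne_iff.mp hl
          exact ⟨y, y.2, by simpa using hy⟩
      set z := ∑ y, l y • (y : Fin n ⊕ Fin r → F × F) with hz
      have hzW : m ≤ 2 * qgvW (z ∘ Sum.inl) := by
        by_contra h
        exact hy (Or.inl (by omega))
      have e3 := E.e3 χ hχ1 (z ∘ Sum.inl) hzW
      have e4 : ∑ x ∈ I, χ (qgvOm x z) = (∑ s ∈ qgvS n m F, χ (qgvOm s (z ∘ Sum.inl))) *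
          ∑ w : Fin r → F × F, χ (qgvOm w (z ∘ Sum.inr)) := by
        rw [← hIsum]
        refine Finset.sum_congr rfl fun x _ => ?_
        rw [qgv_om_lift, AddChar.map_add_eq_mul]
      rw [e4, norm_mul, hIcard, ← mul_assoc]
      refine mul_le_mul e3 ?_ (norm_nonneg _) (by positivity)
      refine (norm_sum_le _ _).trans ?_
      simp only [AddChar.norm_apply, Finset.sum_const, nsmul_eq_mul, mul_one, Finset.card_univ]
      rw [Fintype.card_fun, Fintype.card_fin]
      push_cast
      rw [hQ]
  · rw [← hIcard, hI']
  · intro x hx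
    have hx' : x ∈ I := (hmem x).mpr hx
    by_contra hcon
    push Not at hcon
    have hP := hcount (fun y => ∃ c : F, c ≠ 0 ∧ y = c • x) ?_
    · have e : ∀ y ∈ I', ¬ ∃ c : F, c ≠ 0 ∧ y = c • x := by
        rintro y hy ⟨c, hc, rfl⟩
        exact hcon c hc hy
      have e' : (I'.filter (fun y => ∃ c : F, c ≠ 0 ∧ y = c • x)).card = 0 := by
        rw [Finset.card_eq_zero]; exact Finset.filter_eq_empty_iff.mpr e
      have hP : ((I.filter (fun y => ∃ c : F, c ≠ 0 ∧ y = c • x)).card : ℝ) =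
          (q - 1) * (I'.filter (fun y => ∃ c : F, c ≠ 0 ∧ y = c • x)).card := by convert hP
      rw [e', Nat.cast_zero, mul_zero, Nat.cast_eq_zero, Finset.card_eq_zero] at hP
      exact Finset.filter_eq_empty_iff.mp hP hx' ⟨1, one_ne_zero, by simp⟩
    · rintro c hc y ⟨d, hd, rfl⟩
      exact ⟨c * d, mul_ne_zero hc hd, by rw [mul_smul]⟩

end Inst2


section Extract

variable {F : Type} [Field F] [Fintype F]

lemma qgv_extract (n r : ℕ) (hr : r ≤ n) (P : Matrix (Fin n) (Fin n) F) (Q : Matrix (Fin n) (Fin r) F)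
    (R : Matrix (Fin r) (Fin r) F) (hP : P.IsSymm)
    (hQ : ∀ h : Fin r → F, Q.mulVec h = 0 → h = 0) :
    ∃ C : Submodule F (Fin n → F × F), Module.finrank F C = n - r ∧
      (∀ x ∈ C, ∀ y ∈ C, qgvOm x y = 0) ∧
      ∀ x : Fin n → F × F, (∀ y ∈ C, qgvOm x y = 0) →
        ∃ h : Fin r → F, qgvBe x = P.mulVec (qgvAl x) + Q.mulVec h := by
  let φ : (Fin n → F) →ₗ[F] (Fin n → F × F) :=
    { toFun := fun a i => (a i, P.mulVec a i)
      map_add' := fun a b => by funext i; simp [Matrix.mulVec_add]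
      map_smul' := fun c a => by funext i; simp [Matrix.mulVec_smul] }
  have hal : ∀ a, qgvAl (φ a) = a := fun a => rfl
  have hbe : ∀ a, qgvBe (φ a) = P.mulVec a := fun a => rfl
  have hφ : Function.Injective φ := fun a b h => by rw [← hal a, h, hal]
  have hsym : ∀ a b : Fin n → F, a ⬝ᵥ P.mulVec b = P.mulVec a ⬝ᵥ b := by
    intro a b
    rw [Matrix.dotProduct_mulVec, ← Matrix.mulVec_transpose, hP.eq]
  refine ⟨(LinearMap.ker (Q.transpose.mulVecLin)).map φ, ?_, ?_, ?_⟩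
  · have e1 := (Submodule.equivMapOfInjective φ hφ (LinearMap.ker (Q.transpose.mulVecLin))).finrank_eq
    have e2 := LinearMap.finrank_range_add_finrank_ker (Q.transpose.mulVecLin)
    have e3 := LinearMap.finrank_range_of_inj (f := Q.mulVecLin) (by
      rw [← LinearMap.ker_eq_bot, LinearMap.ker_eq_bot']
      exact fun h hh => hQ h hh)
    have e4 := Q.rank_transpose
    rw [Matrix.rank, Matrix.rank] at e4
    rw [e4, e3] at e2
    simp only [Module.finrank_fin_fun] at e2
    omega
  · rintro _ ⟨a, ha, rfl⟩ _ ⟨b, hb, rfl⟩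
    rw [qgvOm_eq, hal, hal, hbe, hbe, hsym, sub_self]
  · intro x hx
    by_contra hcon
    push Not at hcon
    have hv : qgvBe x - P.mulVec (qgvAl x) ∉ Submodule.span F (Set.range Q.mulVecLin) := by
      rw [← LinearMap.coe_range, Submodule.span_eq]
      rintro ⟨h, hh⟩
      apply hcon h
      rw [Matrix.mulVecLin_apply] at hh
      rw [hh]; abel
    obtain ⟨f, hf1, hf2⟩ := qgv_dual _ _ hv
    have hf : Q.transpose.mulVec f = 0 := by
      apply dotProduct_eq_zero
      intro w
      have := hf2 _ ⟨w, rfl⟩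
      rw [Matrix.mulVecLin_apply, Matrix.dotProduct_mulVec, ← Matrix.mulVec_transpose] at this
      exact this
    have h1 := hx (φ f) ⟨f, hf, rfl⟩
    rw [qgvOm_eq, hal, hbe, hsym] at h1
    rw [dotProduct_sub, dotProduct_comm f, dotProduct_comm f, ← neg_sub, h1] at hf1
    simp at hf1


lemma qgv_mem_sym {ι : Type} [Fintype ι] (t : Finset (ι → F × F)) (A : Matrix ι ι F) :
    A ∈ qgvSym t ↔ A.IsSymm ∧ ∀ x ∈ t, A.mulVec (qgvAl x) = qgvBe x := by
  simp [qgvSym]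

lemma qgv_mem_T {ι : Type} [Fintype ι] (I' : Finset (ι → F × F)) (A : Matrix ι ι F) (x : ι → F × F) :
    x ∈ qgvT I' A ↔ x ∈ I' ∧ A.mulVec (qgvAl x) = qgvBe x := by
  simp [qgvT]

lemma qgv_pick {ι : Type} [Fintype ι] (I' X : Finset (ι → F × F)) (J : ℕ)
    (hX : (X.card : ℝ) * (4 * (Fintype.card F : ℝ) ^ (2 * J)) < (Fintype.card F : ℝ) ^ Fintype.card ι)
    (hcore : ((qgvSym (∅ : Finset (ι → F × F))).card : ℝ) / (4 * (Fintype.card F : ℝ) ^ (2 * J)) ≤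
      ((qgvSym (∅ : Finset (ι → F × F))).filter (fun A => (qgvT I' A).card = 0)).card) :
    ∃ A : Matrix ι ι F, A.IsSymm ∧ (∀ x ∈ I', A.mulVec (qgvAl x) ≠ qgvBe x) ∧
      ∀ x ∈ X, x ≠ 0 → A.mulVec (qgvAl x) ≠ qgvBe x := by
  have hq : (2 : ℝ) ≤ Fintype.card F := by exact_mod_cast Fintype.one_lt_card
  set q : ℝ := (Fintype.card F : ℝ) with hqd
  by_contra hcon
  push Not at hcon
  set Ω := (qgvSym (∅ : Finset (ι → F × F))).card with hΩd
  have hΩ : 0 < (Ω : ℝ) := by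
    have := qgv_sym_nonempty (F := F) (ι := ι)
    exact_mod_cast this
  have hsub : (qgvSym (∅ : Finset (ι → F × F))).filter (fun A => (qgvT I' A).card = 0) ⊆
      (X.filter (fun x => x ≠ 0)).biUnion (fun x => qgvSym {x}) := by
    intro A hA
    have hA := Finset.mem_filter.mp hA
    have hAs : A.IsSymm := ((qgv_mem_sym _ _).mp hA.1).1
    obtain ⟨x, hxX, hx0, hAx⟩ := hcon A hAs (fun x hx hx' => by
      have := (qgv_mem_T I' A x).mpr ⟨hx, hx'⟩
      rw [Finset.card_eq_zero.mp hA.2] at this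
      exact absurd this (Finset.notMem_empty _))
    rw [Finset.mem_biUnion]
    refine ⟨x, Finset.mem_filter.mpr ⟨hxX, hx0⟩, (qgv_mem_sym _ _).mpr ⟨hAs, ?_⟩⟩
    intro y hy
    rw [Finset.mem_singleton] at hy
    rw [hy]; exact hAx
  have hle : ∀ x ∈ X.filter (fun x => x ≠ 0), ((qgvSym {x}).card : ℝ) ≤ Ω / q ^ Fintype.card ι := by
    intro x hx
    have hx0 := (Finset.mem_filter.mp hx).2
    have := qgv_sym_card_le ({x} : Finset (ι → F × F)) (by
      rw [Finset.coe_singleton]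
      exact LinearIndepOn.singleton hx0)
    rw [Finset.card_singleton] at this
    simp only [one_mul, Nat.choose_succ_self, pow_zero, mul_one] at this
    rw [le_div_iff₀ (by positivity), hqd]
    exact_mod_cast this
  have h1 : (Ω : ℝ) / (4 * q ^ (2 * J)) ≤ X.card * (Ω / q ^ Fintype.card ι) := by
    refine hcore.trans ((Nat.cast_le.mpr (Finset.card_le_card hsub)).trans ?_)
    refine (Nat.cast_le.mpr Finset.card_biUnion_le).trans ?_
    push_cast
    refine (Finset.sum_le_card_nsmul _ _ _ hle).trans ?_
    rw [nsmul_eq_mul]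
    gcongr
    exact Finset.filter_subset _ _
  rw [← mul_div_assoc, div_le_div_iff₀ (by positivity) (by positivity)] at h1
  have h2 := mul_lt_mul_of_pos_left hX hΩ
  linarith

lemma qgv_exists (n m k : ℕ) (hk : k ≤ n) (η : ℝ) (E : QgvEst n m F η) (J : ℕ) (hJ : Odd J)
    (hμ : 8 * ((qgvS n m F).card : ℝ) ≤ J * (((Fintype.card F : ℝ) - 1) * (Fintype.card F : ℝ) ^ k))
    (hs : 20 * (((Fintype.card F : ℝ) - 1) * η) * (Fintype.card F : ℝ) ^ (7 * J ^ 2) ≤ 1)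
    (hx : 4 * (Fintype.card F : ℝ) ^ (2 * J) < (Fintype.card F : ℝ) ^ k) :
    ∃ C : Submodule F (Fin n → F × F), Module.finrank F C = k ∧
      (∀ x ∈ C, ∀ y ∈ C, qgvOm x y = 0) ∧
      ∀ x : Fin n → F × F, (∀ y ∈ C, qgvOm x y = 0) → x ≠ 0 → m < qgvW x := by
  have hq : (2 : ℝ) ≤ Fintype.card F := by exact_mod_cast Fintype.one_lt_card
  have hη : 0 ≤ η := by
    by_contra h
    push Not at h
    have : η * (qgvS n m F).card ≤ 0 := mul_nonpos_of_nonpos_of_nonneg h.le (by positivity)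
    linarith [E.e4]
  obtain ⟨r, rfl⟩ : ∃ r, n = r + k := ⟨n - k, by omega⟩
  obtain ⟨I', H, hcard, hrep⟩ := qgv_inst (r + k) m r η E
  set q : ℝ := (Fintype.card F : ℝ) with hqd
  have hι : Fintype.card (Fin (r + k) ⊕ Fin r) = 2 * r + k := by
    simp; ring
  have hθ : 0 ≤ (q - 1) * η := mul_nonneg (by linarith) hη
  have hcore := H.core hθ J hJ (by
    rw [hι, pow_add, pow_mul, ← mul_div_assoc, div_le_iff₀ (by positivity)]
    have h1 : (q - 1) * (8 * (I'.card : ℝ)) ≤ (q - 1) * (J * ((q ^ 2) ^ r * q ^ k)) := by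
      calc (q - 1) * (8 * (I'.card : ℝ)) = 8 * (((qgvS (r + k) m F).card : ℝ) * (q ^ 2) ^ r) := by
            rw [hcard]; ring
        _ = 8 * ((qgvS (r + k) m F).card : ℝ) * (q ^ 2) ^ r := by ring
        _ ≤ J * ((q - 1) * q ^ k) * (q ^ 2) ^ r := by gcongr
        _ = _ := by ring
    exact le_of_mul_le_mul_left h1 (by linarith)) hs
  obtain ⟨X, hX, hXcard, -⟩ := qgv_lift_set (α := F × F) (r + k) r {0}
  have hXcard : (X.card : ℝ) = (q ^ 2) ^ r := by
    rw [hXcard, Fintype.card_prod]; push_cast; simp [sq, hqd]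
  obtain ⟨A, hAs, hT, hno⟩ := qgv_pick I' X J (by
    rw [hXcard, hι, pow_add, pow_mul _ 2 r]
    have hq0 : 0 < (q ^ 2) ^ r := pow_pos (pow_pos (by linarith) _) _
    exact mul_lt_mul_of_pos_left hx hq0) hcore
  have hmv : ∀ (z : Fin (r + k) ⊕ Fin r → F × F),
      qgvBe z ∘ Sum.inl = A.toBlocks₁₁.mulVec (qgvAl z ∘ Sum.inl) + A.toBlocks₁₂.mulVec (qgvAl z ∘ Sum.inr) →
      qgvBe z ∘ Sum.inr = A.toBlocks₂₁.mulVec (qgvAl z ∘ Sum.inl) + A.toBlocks₂₂.mulVec (qgvAl z ∘ Sum.inr) →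
      A.mulVec (qgvAl z) = qgvBe z := by
    intro z h1 h2
    conv_lhs => rw [← Matrix.fromBlocks_toBlocks A]
    rw [Matrix.fromBlocks_mulVec, ← h1, ← h2, Sum.elim_comp_inl_inr]
  have hQ : ∀ h : Fin r → F, A.toBlocks₁₂.mulVec h = 0 → h = 0 := by
    intro h hh
    by_contra hne
    let z : Fin (r + k) ⊕ Fin r → F × F := Sum.elim (fun _ => 0) (fun i => (h i, A.toBlocks₂₂.mulVec h i))
    have e1 : qgvAl z ∘ Sum.inl = 0 := rfl
    have e2 : qgvAl z ∘ Sum.inr = h := rfl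
    have e3 : qgvBe z ∘ Sum.inl = 0 := rfl
    have e4 : qgvBe z ∘ Sum.inr = A.toBlocks₂₂.mulVec h := rfl
    refine hno z ((hX z).mpr ?_) ?_ (hmv z ?_ ?_)
    · rw [Finset.mem_singleton]; rfl
    · intro h0
      rw [h0] at e2
      apply hne
      rw [← e2]; rfl
    · rw [e1, e2, e3, hh]; simp
    · rw [e1, e2, e4]; simp
  obtain ⟨C, hC1, hC2, hC3⟩ := qgv_extract (r + k) r (by omega) A.toBlocks₁₁ A.toBlocks₁₂ A.toBlocks₂₂ (by
    ext i j
    exact congrFun (congrFun hAs.eq (Sum.inl i)) (Sum.inl j)) hQ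
  refine ⟨C, by rw [hC1]; omega, hC2, ?_⟩
  intro x hx hx0
  obtain ⟨h, hh⟩ := hC3 x hx
  by_contra hW
  push Not at hW
  let z : Fin (r + k) ⊕ Fin r → F × F := Sum.elim x
    (fun i => (h i, (A.toBlocks₂₁.mulVec (qgvAl x) + A.toBlocks₂₂.mulVec h) i))
  have hz : A.mulVec (qgvAl z) = qgvBe z := hmv z hh rfl
  have hzI : z ∈ qgvI (r + k) m r F := by
    rw [qgv_mem_I, qgv_mem_S]
    have e : z ∘ Sum.inl = x := rfl
    rw [e]
    have : qgvW x ≠ 0 := fun h => hx0 ((qgvW_eq_zero x).mp h)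
    omega
  obtain ⟨c, hc, hcz⟩ := hrep z hzI
  exact hT _ hcz (by rw [map_smul, map_smul, Matrix.mulVec_smul, hz])

end Extract


section Asym

set_option maxHeartbeats 2000000 in
lemma qgv_asym (q δ : ℝ) (hq : 2 ≤ q) (hδ0 : 0 < δ) (hδ1 : δ < 1 - 1 / q ^ 2) :
    ∃ c : ℝ, 0 < c ∧ ∃ N : ℕ, ∀ n : ℕ, N ≤ n → ∃ m J : ℕ, ∃ x ζ : ℝ,
      ⌊δ * (n : ℝ)⌋₊ = m + 1 ∧ 1 ≤ m ∧ m < n ∧ Odd J ∧ 0 < x ∧ x ≤ 1 ∧ ζ ≤ 1 ∧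
      x ^ 2 = m / ((n - m) * (q ^ 2 - 1)) ∧ x ≤ ζ ∧ 1 - (1 - x) ^ 2 / q ^ 2 ≤ ζ ∧ 1 - x ^ 2 / q ^ 2 ≤ ζ ∧
      16 * c * Real.sqrt n ≤ J ∧
      20 * ((q - 1) * (2 * (n + 1) * ζ ^ (m / 2))) * q ^ (7 * J ^ 2) ≤ 1 ∧
      8 * c * Real.sqrt n * ((q - 1) * (2 * (n + 1) * ζ ^ (m / 2))) * q ^ (2 * J) < 1 := by
  have hQ4 : 4 ≤ q ^ 2 := by nlinarith
  have hQpos : 0 < q ^ 2 := by linarith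
  have hδQ : δ * q ^ 2 < q ^ 2 - 1 := by
    have := mul_lt_mul_of_pos_right hδ1 hQpos
    rwa [sub_mul, one_mul, div_mul_cancel₀ _ hQpos.ne'] at this
  have hδlt : δ < 1 := by
    have : 0 < 1 / q ^ 2 := by positivity
    linarith
  set y1 : ℝ := δ / ((1 - δ) * (q ^ 2 - 1)) with hy1
  have hden : 0 < (1 - δ) * (q ^ 2 - 1) := mul_pos (by linarith) (by linarith)
  have hy1pos : 0 < y1 := div_pos hδ0 hden
  have hy1lt : y1 < 1 := by
    rw [hy1, div_lt_one hden]; nlinarith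
  set x1 := Real.sqrt y1 with hx1
  have hx1pos : 0 < x1 := Real.sqrt_pos.mpr hy1pos
  have hx1lt : x1 < 1 := by
    rw [hx1, Real.sqrt_lt' one_pos]; simpa using hy1lt
  set y0 : ℝ := δ / (2 * q ^ 2) with hy0
  have hy0pos : 0 < y0 := by positivity
  set ζ : ℝ := max x1 (max (1 - (1 - x1) ^ 2 / q ^ 2) (1 - y0 / q ^ 2)) with hζ
  have hζlt : ζ < 1 := by
    rw [hζ, max_lt_iff, max_lt_iff]
    have h1 : 0 < (1 - x1) ^ 2 / q ^ 2 := div_pos (pow_pos (by linarith) _) hQpos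
    have h2 : 0 < y0 / q ^ 2 := by positivity
    exact ⟨hx1lt, by linarith, by linarith⟩
  have hζ1 : x1 ≤ ζ := le_max_left _ _
  have hζ2 : 1 - (1 - x1) ^ 2 / q ^ 2 ≤ ζ := (le_max_left _ _).trans (le_max_right _ _)
  have hζ3 : 1 - y0 / q ^ 2 ≤ ζ := (le_max_right _ _).trans (le_max_right _ _)
  have hζpos : 0 < ζ := hx1pos.trans_le hζ1
  set γ : ℝ := -Real.log ζ * (δ / 8) with hγ
  have hlogζ : Real.log ζ < 0 := Real.log_neg hζpos hζlt
  have hγpos : 0 < γ := mul_pos (by linarith) (by positivity)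
  have hL : 0 < Real.log q := Real.log_pos (by linarith)
  set K : ℝ := Real.sqrt (γ / (14 * Real.log q)) with hK
  have hKpos : 0 < K := Real.sqrt_pos.mpr (by positivity)
  have hK2 : 7 * K ^ 2 * Real.log q = γ / 2 := by
    rw [hK, Real.sq_sqrt (by positivity)]; field_simp; norm_num
  set c : ℝ := K / 64 with hc
  have hcpos : 0 < c := by positivity
  clear_value c K γ ζ y0 x1 y1
  have htend := tendsto_pow_const_mul_const_pow_of_abs_lt_one 2 (r := Real.exp (-γ / 2)) (by
    rw [abs_of_pos (Real.exp_pos _), Real.exp_lt_one_iff]; linarith)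
  have hCpos : 0 < 1 / (200 * (q - 1) * (1 + c)) := by
    have : 0 < q - 1 := by linarith
    positivity
  obtain ⟨N0, hN0⟩ := Filter.eventually_atTop.mp (htend.eventually (gt_mem_nhds hCpos))
  refine ⟨c, hcpos, max N0 (max 1 (max ⌈8 / δ⌉₊ ⌈(4 / K) ^ 2⌉₊)), ?_⟩
  intro n hn
  simp only [max_le_iff] at hn
  obtain ⟨hnN0, hn1, hnδ, hnK⟩ := hn
  have hn1' : (1 : ℝ) ≤ n := by exact_mod_cast hn1
  have hδn : 8 ≤ δ * n := by
    have := Nat.ceil_le.mp hnδ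
    rw [div_le_iff₀ hδ0] at this; linarith
  have hKn : 4 ≤ K * Real.sqrt n := by
    have := Real.le_sqrt_of_sq_le (Nat.ceil_le.mp hnK)
    rw [div_le_iff₀ hKpos] at this; linarith
  have hfl1 := Nat.floor_le (show 0 ≤ δ * (n : ℝ) by positivity)
  have hfl2 := Nat.lt_floor_add_one (δ * (n : ℝ))
  obtain ⟨m, hm⟩ : ∃ m, ⌊δ * (n : ℝ)⌋₊ = m + 1 := by
    refine ⟨⌊δ * (n : ℝ)⌋₊ - 1, ?_⟩
    have : (1 : ℝ) ≤ (⌊δ * (n : ℝ)⌋₊ : ℝ) := by linarith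
    have : 1 ≤ ⌊δ * (n : ℝ)⌋₊ := by exact_mod_cast this
    omega
  rw [hm] at hfl1 hfl2
  push_cast at hfl1 hfl2
  have hmlo : δ * n / 2 ≤ m := by linarith
  have hmup : (m : ℝ) ≤ δ * n := by linarith
  have hm1 : 1 ≤ m := by
    have : (1 : ℝ) ≤ m := by linarith
    exact_mod_cast this
  have hmn' : δ * n < n := by
    have := mul_lt_mul_of_pos_right hδlt (show (0 : ℝ) < n by linarith)
    linarith
  have hmn : m < n := by
    have : (m : ℝ) < n := by linarith
    exact_mod_cast this
  have hmpos : (0 : ℝ) < m := by linarith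
  have hnm : 0 < ((n : ℝ) - m) * (q ^ 2 - 1) := mul_pos (by linarith) (by linarith)
  set y : ℝ := m / ((n - m) * (q ^ 2 - 1)) with hy
  have hypos : 0 < y := div_pos hmpos hnm
  have hyle : y ≤ y1 := by
    rw [hy, hy1, div_le_div_iff₀ hnm hden]
    have h1 : (m : ℝ) * (1 - δ) ≤ δ * (n - m) := by linarith
    have h2 : 0 ≤ q ^ 2 - 1 := by linarith
    have h3 := mul_le_mul_of_nonneg_right h1 h2
    linarith
  have hyge : y0 ≤ y := by
    rw [hy, hy0, div_le_div_iff₀ (by positivity) hnm]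
    have h1 : ((n : ℝ) - m) * (q ^ 2 - 1) ≤ n * q ^ 2 := by
      apply mul_le_mul <;> linarith
    have h2 := mul_le_mul_of_nonneg_left h1 hδ0.le
    have h3 := mul_le_mul_of_nonneg_right hmlo (show 0 ≤ 2 * q ^ 2 by positivity)
    linarith
  clear_value y
  have hxx1 : Real.sqrt y ≤ x1 := by rw [hx1]; exact Real.sqrt_le_sqrt hyle
  have hxsq : Real.sqrt y ^ 2 = y := Real.sq_sqrt hypos.le
  set J : ℕ := 2 * ⌊K * Real.sqrt n / 4⌋₊ + 1 with hJ
  have hg1 := Nat.floor_le (show 0 ≤ K * Real.sqrt n / 4 by positivity)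
  have hg2 := Nat.lt_floor_add_one (K * Real.sqrt n / 4)
  have hJr : (J : ℝ) = 2 * (⌊K * Real.sqrt n / 4⌋₊ : ℝ) + 1 := by rw [hJ]; push_cast; ring
  have hJodd : Odd J := ⟨_, hJ⟩
  have hJpos : 1 ≤ J := by omega
  clear_value J
  have hJlo : K * Real.sqrt n / 4 ≤ J := by linarith
  have hJup : (J : ℝ) ≤ K * Real.sqrt n := by linarith
  have hJ2 : (J : ℝ) ^ 2 ≤ K ^ 2 * n := by
    calc (J : ℝ) ^ 2 ≤ (K * Real.sqrt n) ^ 2 := by gcongr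
      _ = K ^ 2 * n := by rw [mul_pow, Real.sq_sqrt (Nat.cast_nonneg n)]
  have hqJ : q ^ (7 * J ^ 2) ≤ Real.exp (γ / 2 * n) := by
    rw [← Real.log_le_iff_le_exp (by positivity), Real.log_pow]
    push_cast
    rw [← hK2]
    have h1 := mul_le_mul_of_nonneg_right hJ2 hL.le
    linarith
  have hζm : ζ ^ (m / 2) ≤ Real.exp (-γ * n) := by
    rw [← Real.log_le_iff_le_exp (by positivity), Real.log_pow]
    have h1 : (m : ℝ) - 1 ≤ 2 * ((m / 2 : ℕ) : ℝ) := by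
      have : m ≤ 2 * (m / 2) + 1 := by omega
      have : (m : ℝ) ≤ 2 * ((m / 2 : ℕ) : ℝ) + 1 := by exact_mod_cast this
      linarith
    have h2 : δ * n / 8 ≤ ((m / 2 : ℕ) : ℝ) := by linarith
    have h3 := mul_le_mul_of_nonneg_right h2 (show 0 ≤ -Real.log ζ by linarith)
    rw [hγ]
    linarith
  have hsmall := hN0 n hnN0
  rw [lt_div_iff₀ (by have : 0 < q - 1 := by linarith
                      positivity)] at hsmall
  have hexp : Real.exp (-γ * n) * Real.exp (γ / 2 * n) = Real.exp (-γ / 2) ^ n := by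
    rw [← Real.exp_add, ← Real.exp_nat_mul]; congr 1; ring
  set e : ℝ := Real.exp (-γ / 2) ^ n with he
  have hepos : 0 < e := by positivity
  set T : ℝ := (q - 1) * (2 * (n + 1) * ζ ^ (m / 2)) * q ^ (7 * J ^ 2) with hT
  have hq1 : 0 < q - 1 := by linarith
  have hTle : T ≤ 4 * (q - 1) * n * e := by
    calc T = (q - 1) * (2 * (n + 1)) * (ζ ^ (m / 2) * q ^ (7 * J ^ 2)) := by rw [hT]; ring
      _ ≤ (q - 1) * (2 * (n + 1)) * (Real.exp (-γ * n) * Real.exp (γ / 2 * n)) := by gcongr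
      _ = (q - 1) * (2 * (n + 1)) * e := by rw [hexp]
      _ ≤ (q - 1) * (2 * (n + n)) * e := by gcongr
      _ = _ := by ring
  have hkey : 50 * T * (n * (1 + c)) < 1 := by
    have h1 : T * (n * (1 + c)) ≤ 4 * (q - 1) * n * e * (n * (1 + c)) := by gcongr
    have h2 : 50 * (4 * (q - 1) * n * e * (n * (1 + c))) = (n : ℝ) ^ 2 * e * (200 * (q - 1) * (1 + c)) := by ring
    linarith
  have hTpos : 0 < T := by positivity
  have hsqrt : Real.sqrt n ≤ n := by
    rw [Real.sqrt_le_left (by positivity), sq]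
    exact le_mul_of_one_le_left (by linarith) hn1'
  refine ⟨m, J, Real.sqrt y, ζ, hm, hm1, hmn, hJodd, Real.sqrt_pos.mpr hypos, by linarith, hζlt.le, hxsq.trans hy,
    hxx1.trans hζ1, ?_, ?_, ?_, ?_, ?_⟩
  · refine le_trans ?_ hζ2
    have : (1 - x1) ^ 2 ≤ (1 - Real.sqrt y) ^ 2 := by
      apply pow_le_pow_left₀ <;> linarith
    have := div_le_div_of_nonneg_right this hQpos.le
    linarith
  · refine le_trans ?_ hζ3
    rw [hxsq]
    have := div_le_div_of_nonneg_right hyge hQpos.le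
    linarith
  · rw [hc]; linarith
  · have h1 : 1 ≤ n * (1 + c) := one_le_mul_of_one_le_of_one_le hn1' (by linarith)
    have : T * 1 ≤ T * (n * (1 + c)) := by gcongr
    have e1 : 20 * ((q - 1) * (2 * (n + 1) * ζ ^ (m / 2))) * q ^ (7 * J ^ 2) = 20 * T := by rw [hT]; ring
    rw [e1]; linarith
  · have hJ1 : 2 * J ≤ 7 * J ^ 2 := by
      nlinarith
    have hp : q ^ (2 * J) ≤ q ^ (7 * J ^ 2) := pow_le_pow_right₀ (by linarith) hJ1
    calc 8 * c * Real.sqrt n * ((q - 1) * (2 * (n + 1) * ζ ^ (m / 2))) * q ^ (2 * J)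
        ≤ 8 * c * n * ((q - 1) * (2 * (n + 1) * ζ ^ (m / 2))) * q ^ (7 * J ^ 2) := by gcongr
      _ = 8 * T * (n * c) := by rw [hT]; ring
      _ ≤ 50 * T * (n * (1 + c)) := by
        have : (n : ℝ) * c ≤ n * (1 + c) := by linarith
        apply mul_le_mul _ this (by positivity) (by positivity)
        linarith
      _ < 1 := hkey

end Asym


lemma qgv_final (F : Type) [Field F] [Fintype F] 
    (δ : ℝ) (hδ0 : 0 < δ) (hδ1 : δ < 1 - 1 / (Fintype.card F : ℝ) ^ 2) :
    ∃ c : ℝ, 0 < c ∧ ∃ N : ℕ, ∀ n : ℕ, N ≤ n → ∀ k : ℕ, 1 ≤ k → k ≤ n →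
      ((Fintype.card F : ℝ) ^ (2 * n - k) - 1) / ((Fintype.card F : ℝ) - 1) <
        c * Real.sqrt n * (Fintype.card F : ℝ) ^ (2 * n) /
          (∑ i ∈ Finset.range ⌊δ * (n : ℝ)⌋₊, (n.choose i : ℝ) * ((Fintype.card F : ℝ) ^ 2 - 1) ^ i) →
      ∃ C : Submodule F (Fin n → F × F), Module.finrank F C = k ∧
        (∀ x ∈ C, ∀ y ∈ C, qgvOm x y = 0) ∧
        ∀ x : Fin n → F × F, (∀ c' ∈ C, qgvOm x c' = 0) → x ≠ 0 →
          ⌊δ * (n : ℝ)⌋₊ ≤ qgvW x := by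
  have hq : (2 : ℝ) ≤ Fintype.card F := by exact_mod_cast Fintype.one_lt_card
  obtain ⟨c, hc, N, hN⟩ := qgv_asym (Fintype.card F : ℝ) δ hq hδ0 hδ1
  refine ⟨c, hc, N, fun n hn k hk1 hkn hyp => ?_⟩
  obtain ⟨m, J, x, ζ, hfl, hm1, hmn, hJ, hx0, hx1, hζ1, hxsq, z1, z2, z3, hcJ, hs, hs2⟩ := hN n hn
  have E := qgv_est n m F hm1 hmn x ζ hx0 hx1 hζ1 hxsq z1 z2 z3
  set η : ℝ := 2 * (n + 1) * ζ ^ (m / 2) with hη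
  clear_value η
  rw [hfl] at hyp ⊢
  set V : ℝ := ∑ i ∈ Finset.range (m + 1), (n.choose i : ℝ) * ((Fintype.card F : ℝ) ^ 2 - 1) ^ i with hV
  have hVcard : ((univ.filter (fun s : Fin n → F × F => qgvW s < m + 1)).card : ℝ) = V := by
    have := qgv_ball_card (α := F × F) (n := n) (m + 1)
    have h1 : 1 ≤ Fintype.card F * Fintype.card F := Nat.mul_pos Fintype.card_pos Fintype.card_pos
    have h2 : ((univ.filter (fun s : Fin n → F × F => qgvW s < m + 1)).card : ℝ) =
        ((∑ i ∈ range (m + 1), n.choose i * (Fintype.card (F × F) - 1) ^ i : ℕ) : ℝ) := by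
      rw [← this]
    rw [h2, hV, Fintype.card_prod]
    push_cast [Nat.cast_sub h1]
    simp only [sq]
  have hSV : ((qgvS n m F).card : ℝ) ≤ V := by
    rw [← hVcard]
    refine Nat.cast_le.mpr (Finset.card_le_card fun s hs => ?_)
    have := (qgv_mem_S s).mp hs
    exact Finset.mem_filter.mpr ⟨Finset.mem_univ _, by omega⟩
  have he4 := E.e4
  have hVpos : 0 < V := by
    have h0 : (0 : ℝ) ≤ (qgvS n m F).card := by positivity
    have : (0 : ℝ) ≠ (qgvS n m F).card := by
      intro h; rw [← h] at he4; norm_num at he4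
    exact (lt_of_le_of_ne h0 this).trans_le hSV
  have hη0 : 0 ≤ η := by
    by_contra h
    push Not at h
    have : η * (qgvS n m F).card ≤ 0 := mul_nonpos_of_nonpos_of_nonneg h.le (by positivity)
    linarith
  clear_value V
  set q : ℝ := (Fintype.card F : ℝ) with hqd
  have hq1 : 0 < q - 1 := by linarith
  have hkey : V < 2 * ((q - 1) * c * Real.sqrt n * q ^ k) := by
    rw [div_lt_div_iff₀ hq1 hVpos] at hyp
    obtain ⟨p, hp⟩ : ∃ p, 2 * n = p + k := ⟨2 * n - k, by omega⟩
    have hp1 : p ≠ 0 := by omega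
    rw [hp, Nat.add_sub_cancel, pow_add] at hyp
    have h2 : 2 ≤ q ^ p := hq.trans (le_self_pow₀ (by linarith) hp1)
    have h3 : q ^ p * V ≤ 2 * ((q ^ p - 1) * V) := by nlinarith
    have h4 : q ^ p * V < q ^ p * (2 * ((q - 1) * c * Real.sqrt n * q ^ k)) := by nlinarith
    exact lt_of_mul_lt_mul_left h4 (by linarith)
  obtain ⟨C, h1, h2, h3⟩ := qgv_exists n m k hkn η E J hJ (by
      have hA : 8 * (qgvS n m F).card ≤ (16 * c * Real.sqrt n) * ((q - 1) * q ^ k) := by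
        linarith
      refine hA.trans ?_
      have : 0 < (q - 1) * q ^ k := by positivity
      gcongr) hs (by
      have hB : 1 ≤ η * (2 * ((q - 1) * c * Real.sqrt n * q ^ k)) :=
        he4.trans (mul_le_mul_of_nonneg_left (hSV.trans hkey.le) hη0)
      have hqJ : 0 < 4 * q ^ (2 * J) := by positivity
      have hqk : 0 < q ^ k := by positivity
      calc 4 * q ^ (2 * J) ≤ 4 * q ^ (2 * J) * (η * (2 * ((q - 1) * c * Real.sqrt n * q ^ k))) :=
            le_mul_of_one_le_right hqJ.le hB
        _ = (8 * c * Real.sqrt n * ((q - 1) * η) * q ^ (2 * J)) * q ^ k := by ring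
        _ < 1 * q ^ k := mul_lt_mul_of_pos_right hs2 hqk
        _ = q ^ k := one_mul _)
  exact ⟨C, h1, h2, fun x hx hx0 => h3 x hx hx0⟩

lemma qgv_wt {F : Type} [Field F] [Fintype F] [DecidableEq F] {n : ℕ} (x : Fin n → F × F) : sympWt x = qgvW x := by
  rw [sympWt, qgvW, hammingNorm]
  congr 1
  ext i
  rw [qgv_mem_supp]
  simp


/-- For a prime power `q` (realized as the cardinality of a finite field `F`)
and a constant `δ ∈ (0, 1 - 1/q²)`, there is a constant `c_δ > 0` such that for all
sufficiently large `n`, with `d = ⌊δn⌋`: if `1 ≤ k ≤ n` satisfies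
`(q^{2n-k} - 1)/(q - 1) < c_δ·√n·q^{2n} / ∑_{i=0}^{d-1} C(n,i)(q²-1)^i`, then there exists a
`k`-dimensional symplectic self-orthogonal subspace `C` of `F^{2n}` such that every nonzero
vector of the symplectic dual `C^{⊥_S}` has symplectic weight at least `d`. -/
theorem quantum_gv_bound_sqrt_improvement
    (q : ℕ) (F : Type) [Field F] [Fintype F] [DecidableEq F] (hF : Fintype.card F = q)
    (δ : ℝ) (hδ0 : 0 < δ) (hδ1 : δ < 1 - 1 / (q : ℝ) ^ 2) :
    ∃ c : ℝ, 0 < c ∧ ∃ N : ℕ, ∀ n : ℕ, N ≤ n → ∀ k : ℕ, 1 ≤ k → k ≤ n →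
      ((q : ℝ) ^ (2 * n - k) - 1) / ((q : ℝ) - 1) <
        c * Real.sqrt n * (q : ℝ) ^ (2 * n) /
          (∑ i ∈ Finset.range ⌊δ * (n : ℝ)⌋₊, (n.choose i : ℝ) * ((q : ℝ) ^ 2 - 1) ^ i) →
      ∃ C : Submodule F (Fin n → F × F), Module.finrank F C = k ∧
        (∀ x ∈ C, ∀ y ∈ C, sympInner x y = 0) ∧
        ∀ x : Fin n → F × F, (∀ c' ∈ C, sympInner x c' = 0) → x ≠ 0 →
          ⌊δ * (n : ℝ)⌋₊ ≤ sympWt x := by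
  subst hF
  obtain ⟨c, hc, N, hN⟩ := qgv_final F δ hδ0 hδ1
  refine ⟨c, hc, N, fun n hn k hk1 hkn hyp => ?_⟩
  obtain ⟨C, h1, h2, h3⟩ := hN n hn k hk1 hkn hyp
  refine ⟨C, h1, fun x hx y hy => h2 x hx y hy, fun x hx hx0 => ?_⟩
  rw [qgv_wt]
  exact h3 x (fun y hy => hx y hy) hx0
end

section
/- Let q be a prime power and let δ ∈ (0, 1 − 1/q) be a constant. There exists a constant h_δ ∈ (0,1), depending only on q and δ, such that for all sufficiently large n the following holds with d − 1 = ⌊δn⌋: let G be a uniformly random k × n matrix over 𝔽_q, and let x_1, …, x_r ∈ 𝔽_q^k (with r ≤ n) be nonzero vectors that are pairwise non-proportional (no one is a scalar multiple of another), such that {x_1, …, x_s} is a maximal linearly independent subset of {x_1, …, x_r} with s < r. Then the probability that wt(x_i G) ≤ d − 1 for every i ∈ {1,…,r} is at most (Vol_q(n, d−1)/q^n)^s · 2^{−h_δ n}. -/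
open Finset
open scoped Classical

lemma wt_pow {n : ℕ} {F : Type} [Field F] [DecidableEq F] (l : ℝ) (y : Fin n → F) :
    ∏ i, (if y i = 0 then 1 else l) = l ^ hammingNorm y := by
  rw [Finset.prod_ite]
  simp [hammingNorm]

lemma coord_sum {F : Type} [Field F] [Fintype F] [DecidableEq F] (l t : ℝ) (hl0 : 0 < l)
    (hl1 : l < 1) (ht0 : 0 < t) (ht1 : t < 1) (a b c : F) (ha : a ≠ 0) (hb : b ≠ 0) :
    ∑ p : F × F, (if p.1 = 0 then 1 else l) * (if p.2 = 0 then 1 else l) *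
      (if a * p.1 + b * p.2 + c = 0 then 1 else t) ≤
    t * (1 + ((Fintype.card F : ℝ) - 1) * l) ^ 2 +
      (1 - t) * (l * (1 + ((Fintype.card F : ℝ) - 1) * l) + (1 - l)) := by
  set Z : ℝ := 1 + ((Fintype.card F : ℝ) - 1) * l with hZ
  have hw : ∀ x : F, (if x = 0 then (1:ℝ) else l) = l + (1 - l) * (if x = 0 then 1 else 0) := by
    intro x; split_ifs <;> ring
  have hsum : ∑ x : F, (if x = 0 then (1:ℝ) else l) = Z := by
    simp_rw [hw]
    rw [Finset.sum_add_distrib, ← Finset.mul_sum]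
    simp [hZ]; ring
  have ht : ∀ x : F, (if x = 0 then (1:ℝ) else t) = t + (1 - t) * (if x = 0 then 1 else 0) := by
    intro x; split_ifs <;> ring
  have h1 : ∀ y : F, ∑ x : F, (if x = 0 then (1:ℝ) else l) *
      (if a * x + b * y + c = 0 then 1 else 0) = if b * y + c = 0 then 1 else l := by
    intro y
    rw [Finset.sum_eq_single (-(b * y + c) / a)]
    · have : a * (-(b * y + c) / a) + b * y + c = 0 := by field_simp; ring
      rw [if_pos this]
      simp [ha, div_eq_zero_iff]
      congr 1
      apply propext
      constructor
      · intro h; linear_combination -h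
      · intro h; linear_combination -h
    · intro x _ hx
      have hne : ¬ (a * x + b * y + c = 0) := by
        intro h
        apply hx
        field_simp
        linear_combination h
      rw [if_neg hne, mul_zero]
    · simp
  have h2 : ∑ y : F, (if y = 0 then (1:ℝ) else l) * (if b * y + c = 0 then 1 else 0) ≤ 1 := by
    rw [Finset.sum_eq_single (-c / b)]
    · have : b * (-c / b) + c = 0 := by field_simp; ring
      rw [if_pos this]
      split_ifs <;> linarith
    · intro x _ hx
      have hne : ¬ (b * x + c = 0) := by
        intro h
        apply hx
        field_simp
        linear_combination h
      rw [if_neg hne, mul_zero]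
    · simp
  have h3 : ∑ p : F × F, (if p.1 = 0 then (1:ℝ) else l) * (if p.2 = 0 then 1 else l) = Z ^ 2 := by
    rw [Fintype.sum_prod_type, sq, ← hsum, Finset.sum_mul_sum]
  have h4 : ∑ p : F × F, (if p.1 = 0 then (1:ℝ) else l) * (if p.2 = 0 then 1 else l) *
      (if a * p.1 + b * p.2 + c = 0 then 1 else 0) ≤ l * Z + (1 - l) := by
    rw [Fintype.sum_prod_type_right]
    calc _ = ∑ y : F, (if y = 0 then (1:ℝ) else l) * (if b * y + c = 0 then 1 else l) := by
          apply Finset.sum_congr rfl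
          intro y _
          rw [← h1 y, Finset.mul_sum]
          apply Finset.sum_congr rfl
          intro x _
          ring
      _ = l * Z + (1 - l) * ∑ y : F, (if y = 0 then (1:ℝ) else l) *
            (if b * y + c = 0 then 1 else 0) := by
          rw [← hsum, Finset.mul_sum, Finset.mul_sum, ← Finset.sum_add_distrib]
          apply Finset.sum_congr rfl
          intro y _
          rw [hw (b * y + c)]
          ring
      _ ≤ _ := by nlinarith
  calc _ = t * Z ^ 2 + (1 - t) * ∑ p : F × F, (if p.1 = 0 then (1:ℝ) else l) *
        (if p.2 = 0 then 1 else l) * (if a * p.1 + b * p.2 + c = 0 then 1 else 0) := by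
        rw [← h3, Finset.mul_sum, Finset.mul_sum, ← Finset.sum_add_distrib]
        apply Finset.sum_congr rfl
        intro p _
        rw [ht (a * p.1 + b * p.2 + c)]
        ring
    _ ≤ _ := by nlinarith

lemma pair_bound {n : ℕ} {F : Type} [Field F] [Fintype F] [DecidableEq F] (l t : ℝ) (hl0 : 0 < l)
    (hl1 : l < 1) (ht0 : 0 < t) (ht1 : t < 1) (a b : F) (z : Fin n → F)
    (ha : a ≠ 0) (hb : b ≠ 0) (ρ : ℕ) :
    ((univ.filter fun p : Fin n → F × F => hammingNorm (fun i => (p i).1) ≤ ρ ∧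
      hammingNorm (fun i => (p i).2) ≤ ρ ∧
      hammingNorm (fun i => a * (p i).1 + b * (p i).2 + z i) ≤ ρ).card : ℝ) *
      (l ^ ρ * l ^ ρ * t ^ ρ) ≤
    (t * (1 + ((Fintype.card F : ℝ) - 1) * l) ^ 2 +
      (1 - t) * (l * (1 + ((Fintype.card F : ℝ) - 1) * l) + (1 - l))) ^ n := by
  calc _ = ∑ p ∈ (univ.filter fun p : Fin n → F × F => hammingNorm (fun i => (p i).1) ≤ ρ ∧
      hammingNorm (fun i => (p i).2) ≤ ρ ∧
      hammingNorm (fun i => a * (p i).1 + b * (p i).2 + z i) ≤ ρ), (l ^ ρ * l ^ ρ * t ^ ρ) := by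
        rw [Finset.sum_const, nsmul_eq_mul]
    _ ≤ ∑ p ∈ (univ.filter fun p : Fin n → F × F => hammingNorm (fun i => (p i).1) ≤ ρ ∧
      hammingNorm (fun i => (p i).2) ≤ ρ ∧
      hammingNorm (fun i => a * (p i).1 + b * (p i).2 + z i) ≤ ρ),
        ∏ i, ((if (p i).1 = 0 then 1 else l) * (if (p i).2 = 0 then 1 else l) *
          (if a * (p i).1 + b * (p i).2 + z i = 0 then 1 else t)) := by
        apply Finset.sum_le_sum
        intro p hp
        obtain ⟨h1, h2, h3⟩ := (Finset.mem_filter.1 hp).2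
        rw [Finset.prod_mul_distrib, Finset.prod_mul_distrib, wt_pow l (fun i => (p i).1),
          wt_pow l (fun i => (p i).2), wt_pow t (fun i => a * (p i).1 + b * (p i).2 + z i)]
        have e1 := pow_le_pow_of_le_one hl0.le hl1.le h1
        have e2 := pow_le_pow_of_le_one hl0.le hl1.le h2
        have e3 := pow_le_pow_of_le_one ht0.le ht1.le h3
        gcongr
    _ ≤ ∑ p : Fin n → F × F,
        ∏ i, ((if (p i).1 = 0 then 1 else l) * (if (p i).2 = 0 then 1 else l) *
          (if a * (p i).1 + b * (p i).2 + z i = 0 then 1 else t)) := by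
        apply Finset.sum_le_sum_of_subset_of_nonneg (Finset.filter_subset _ _)
        intro p _ _
        apply Finset.prod_nonneg
        intro i _
        split_ifs <;> positivity
    _ = ∏ i : Fin n, ∑ p : F × F, ((if p.1 = 0 then 1 else l) * (if p.2 = 0 then 1 else l) *
          (if a * p.1 + b * p.2 + z i = 0 then 1 else t)) := by
        rw [Finset.prod_univ_sum, Fintype.piFinset_univ]
    _ ≤ ∏ i : Fin n, (t * (1 + ((Fintype.card F : ℝ) - 1) * l) ^ 2 +
      (1 - t) * (l * (1 + ((Fintype.card F : ℝ) - 1) * l) + (1 - l))) := by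
        apply Finset.prod_le_prod
        · intro i _
          apply Finset.sum_nonneg
          intro p _
          split_ifs <;> positivity
        · intro i _
          exact coord_sum l t hl0 hl1 ht0 ht1 a b (z i) ha hb
    _ = _ := by simp

lemma ball_card {n : ℕ} {F : Type} [Field F] [Fintype F] [DecidableEq F] (ρ : ℕ) :
    ((univ.filter fun y : Fin n → F => hammingNorm y ≤ ρ).card : ℝ) =
      ∑ i ∈ Finset.range (ρ + 1), (n.choose i : ℝ) * ((Fintype.card F : ℝ) - 1) ^ i := by
  have hS : ∀ S : Finset (Fin n), ((univ.filter fun y : Fin n → F =>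
      (univ.filter fun i => y i ≠ 0) = S).card : ℝ) = ((Fintype.card F : ℝ) - 1) ^ S.card := by
    intro S
    have : (univ.filter fun y : Fin n → F => (univ.filter fun i => y i ≠ 0) = S) =
      Fintype.piFinset (fun i => if i ∈ S then univ.erase (0 : F) else {0}) := by
      ext y
      simp only [mem_filter, mem_univ, true_and, Fintype.mem_piFinset, Finset.ext_iff]
      apply forall_congr'
      intro i
      by_cases h : i ∈ S <;> simp [h]
    rw [this, Fintype.card_piFinset]
    have hq : ((univ.erase (0:F)).card : ℝ) = (Fintype.card F : ℝ) - 1 := by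
      rw [Finset.card_erase_of_mem (mem_univ _), Nat.cast_sub]
      · simp
      · exact Finset.card_pos.2 ⟨0, mem_univ _⟩
    rw [← hq]
    have : ∀ i, (if i ∈ S then univ.erase (0 : F) else {0}).card =
      if i ∈ S then (univ.erase (0 : F)).card else 1 := by
      intro i; split_ifs <;> simp
    simp_rw [this]
    rw [Finset.prod_ite]
    simp
  have h1 : ∀ i, ((univ.filter fun y : Fin n → F => hammingNorm y = i).card : ℝ) =
      (n.choose i : ℝ) * ((Fintype.card F : ℝ) - 1) ^ i := by
    intro i
    rw [Finset.card_eq_sum_card_fiberwise (f := fun y : Fin n → F => (univ.filter fun j => y j ≠ 0))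
      (t := Finset.powersetCard i univ)]
    · push_cast
      rw [Finset.sum_congr rfl (g := fun S => ((Fintype.card F : ℝ) - 1) ^ i)]
      · simp
      · intro S hS'
        have hc := (Finset.mem_powersetCard.1 hS').2
        rw [← hc, ← hS S, Finset.filter_filter]
        congr 2
        ext y
        simp only [mem_filter, mem_univ, true_and, hammingNorm]
        constructor
        · rintro ⟨_, h⟩; exact h
        · intro h; exact ⟨by rw [← h], h⟩
    · intro y hy
      simp only [Finset.coe_filter, mem_univ, true_and, Set.mem_ofPred_eq] at hy
      simp [Finset.mem_powersetCard, ← hy, hammingNorm]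
  rw [Finset.card_eq_sum_card_fiberwise (f := fun y : Fin n → F => hammingNorm y)
      (t := Finset.range (ρ + 1))]
  · push_cast
    apply Finset.sum_congr rfl
    intro i hi
    rw [← h1, Finset.filter_filter]
    congr 2
    ext y
    simp only [mem_filter, mem_univ, true_and]
    have := Finset.mem_range.1 hi
    omega
  · intro y hy
    simp at hy ⊢
    omega

lemma vol_lower (n : ℕ) (δ : ℝ) (h0 : 0 < δ) (h1 : δ < 1) :
    (1 + δ / (1 - δ)) ^ n ≤ ((n : ℝ) + 1) * (1 / (1 - δ)) *
      ((n.choose ⌊δ * n⌋₊ : ℝ) * (δ / (1 - δ)) ^ ⌊δ * (n : ℝ)⌋₊) := by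
  set g : ℝ := δ / (1 - δ) with hg
  have hd : 0 < 1 - δ := by linarith
  have hg0 : 0 < g := by positivity
  have hgd : g * (1 - δ) = δ := by rw [hg]; field_simp
  set ρ := ⌊δ * (n : ℝ)⌋₊ with hρ
  have hn0 : (0:ℝ) ≤ n := Nat.cast_nonneg n
  have hρ1 : (ρ : ℝ) ≤ δ * n := Nat.floor_le (by positivity)
  have hρ2 : δ * n < (ρ : ℝ) + 1 := Nat.lt_floor_add_one _
  set T : ℕ → ℝ := fun i => (n.choose i : ℝ) * g ^ i with hT
  have hT0 : ∀ i, 0 ≤ T i := fun i => by simp only [hT]; positivity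
  have hch : ∀ i : ℕ, (n.choose (i+1) : ℝ) * ((i : ℝ) + 1) = n.choose i * ((n : ℝ) - i) := by
    intro i
    have := Nat.choose_succ_right_eq n i
    rcases le_or_gt i n with h | h
    · have h2 : ((n.choose (i+1) * (i+1) : ℕ) : ℝ) = ((n.choose i * (n - i) : ℕ) : ℝ) := by
        rw [this]
      push_cast [Nat.cast_sub h] at h2
      exact h2
    · rw [Nat.choose_eq_zero_of_lt h, Nat.choose_eq_zero_of_lt (by omega)]; simp
  have hstep : ∀ i : ℕ, T (i+1) * (((i:ℝ) + 1) * (1 - δ)) = T i * (((n:ℝ) - i) * δ) := by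
    intro i
    simp only [hT, pow_succ]
    calc _ = ((n.choose (i+1) : ℝ) * ((i : ℝ) + 1)) * (g ^ i * (g * (1 - δ))) := by ring
      _ = _ := by rw [hch, hgd]; ring
  have hup : ∀ i : ℕ, i + 1 ≤ ρ → T i ≤ T (i+1) := by
    intro i hi
    have hi' : (i : ℝ) + 1 ≤ ρ := by exact_mod_cast hi
    have hpos : 0 < ((i:ℝ) + 1) * (1 - δ) := by positivity
    refine le_of_mul_le_mul_right ?_ hpos
    rw [hstep]
    exact mul_le_mul_of_nonneg_left (by nlinarith) (hT0 i)
  have hdown : ∀ i : ℕ, ρ + 1 ≤ i → T (i+1) ≤ T i := by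
    intro i hi
    have hi' : (ρ : ℝ) + 1 ≤ i := by exact_mod_cast hi
    have hpos : 0 < ((i:ℝ) + 1) * (1 - δ) := by positivity
    refine le_of_mul_le_mul_right ?_ hpos
    rw [hstep]
    exact mul_le_mul_of_nonneg_left (by nlinarith) (hT0 i)
  have hmid : T (ρ + 1) ≤ 1 / (1 - δ) * T ρ := by
    have hpos : 0 < ((ρ:ℝ) + 1) * (1 - δ) := by positivity
    refine le_of_mul_le_mul_right ?_ hpos
    rw [hstep]
    have : 1 / (1 - δ) * T ρ * (((ρ:ℝ) + 1) * (1 - δ)) = T ρ * ((ρ:ℝ) + 1) := by field_simp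
    rw [this]
    have : (0:ℝ) ≤ ρ := Nat.cast_nonneg _
    exact mul_le_mul_of_nonneg_left (by nlinarith) (hT0 ρ)
  have hK : 1 ≤ 1 / (1 - δ) := by rw [le_div_iff₀ hd]; linarith
  have hall : ∀ i, T i ≤ 1 / (1 - δ) * T ρ := by
    intro i
    rcases le_or_gt i ρ with h | h
    · have : T i ≤ T ρ := by
        induction h using Nat.decreasingInduction with
        | self => exact le_rfl
        | of_succ k hk ih => exact (hup k hk).trans ih
      nlinarith [hT0 ρ]
    · induction i, h using Nat.le_induction with
      | base => exact hmid
      | succ k hk ih => exact (hdown k hk).trans ih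
  rw [add_comm, add_pow]
  calc _ ≤ ∑ i ∈ Finset.range (n+1), 1 / (1 - δ) * T ρ := by
        apply Finset.sum_le_sum
        intro i _
        have := hall i
        simp only [one_pow, mul_one]
        rw [mul_comm]; exact this
    _ = _ := by rw [Finset.sum_const, Finset.card_range, nsmul_eq_mul]; push_cast; ring

lemma count_G {n k s : ℕ} {F : Type} [Field F] [Fintype F] [DecidableEq F]
    (X : Fin s → Fin k → F) (hX : LinearIndependent F X)
    (P : Matrix (Fin s) (Fin n) F → Prop) :
    (univ.filter fun G : Matrix (Fin k) (Fin n) F => P (Matrix.of X * G)).card *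
      Fintype.card F ^ (s * n) = (univ.filter P).card * Fintype.card F ^ (k * n) := by
  obtain ⟨N, hN⟩ : ∃ N : Matrix (Fin k) (Fin s) F, Matrix.of X * N = 1 := by
    have hinj := linearIndependent_iff_injective_fintypeLinearCombination.1 hX
    obtain ⟨φ, hφ⟩ := LinearMap.exists_leftInverse_of_injective _ (LinearMap.ker_eq_bot.2 hinj)
    refine ⟨Matrix.of fun i j => φ (Pi.single i 1) j, ?_⟩
    ext i j
    have h1 := congrFun (LinearMap.congr_fun hφ (Pi.single i 1)) j
    simp only [LinearMap.comp_apply, Fintype.linearCombination_apply_single, one_smul,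
      LinearMap.id_apply] at h1
    have h2 : X i = ∑ l, X i l • (Pi.single l 1 : Fin k → F) := pi_eq_sum_univ' (X i)
    rw [h2, map_sum] at h1
    simp only [map_smul, Finset.sum_apply, Pi.smul_apply, smul_eq_mul] at h1
    rw [Matrix.mul_apply]
    simp only [Matrix.of_apply]
    rw [h1, Matrix.one_apply, Pi.single_apply]
    simp [eq_comm]
  let L : Matrix (Fin k) (Fin n) F →+ Matrix (Fin s) (Fin n) F :=
    { toFun := fun G => Matrix.of X * G
      map_zero' := Matrix.mul_zero _
      map_add' := fun a b => Matrix.mul_add _ a b }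
  have hsurj : ∀ Y, Y ∈ Set.range L := by
    intro Y
    refine ⟨N * Y, ?_⟩
    change Matrix.of X * (N * Y) = Y
    rw [← Matrix.mul_assoc, hN, Matrix.one_mul]
  set f := (univ.filter fun G => L G = 0).card with hf
  have hfib : ∀ Y, (univ.filter fun G => L G = Y).card = f := fun Y =>
    AddMonoidHom.card_fiber_eq_of_mem_range L (hsurj Y) (hsurj 0)
  have hP : ∀ P : Matrix (Fin s) (Fin n) F → Prop,
      (univ.filter fun G : Matrix (Fin k) (Fin n) F => P (L G)).card = (univ.filter P).card * f := by
    intro P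
    rw [Finset.card_eq_sum_card_fiberwise (f := L) (t := univ.filter P)]
    · rw [Finset.sum_congr rfl (g := fun _ => f)]
      · simp
      · intro Y hY
        have hPY := (Finset.mem_filter.1 hY).2
        rw [← hfib Y, Finset.filter_filter]
        congr 1
        ext G
        simp only [mem_filter, mem_univ, true_and]
        constructor
        · rintro ⟨_, h⟩; exact h
        · intro h; exact ⟨by rw [h]; exact hPY, h⟩
    · intro G hG
      simpa using hG
  have htot := hP (fun _ => True)
  have hmc : ∀ m : ℕ, Fintype.card (Matrix (Fin m) (Fin n) F) = Fintype.card F ^ (m * n) := by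
    intro m
    rw [Fintype.card_congr (Matrix.of (m := Fin m) (n := Fin n) (α := F)).symm]
    simp [← pow_mul, mul_comm]
  simp only [Finset.filter_true, Finset.card_univ, hmc] at htot
  have := hP P
  change (univ.filter fun G : Matrix (Fin k) (Fin n) F => P (L G)).card * _ = _
  rw [this, htot]
  ring

lemma rows_bound {n s : ℕ} {F : Type} [Field F] [Fintype F] [DecidableEq F] (ρ : ℕ)
    (a : Fin s → F) (i j : Fin s) (hij : i ≠ j) (M : ℕ)
    (hM : ∀ z : Fin n → F, (univ.filter fun p : Fin n → F × F => hammingNorm (fun i => (p i).1) ≤ ρ ∧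
      hammingNorm (fun i => (p i).2) ≤ ρ ∧
      hammingNorm (fun l => a i * (p l).1 + a j * (p l).2 + z l) ≤ ρ).card ≤ M) :
    (univ.filter fun Y : Matrix (Fin s) (Fin n) F => (∀ l, hammingNorm (Y l) ≤ ρ) ∧
      hammingNorm (∑ l, a l • Y l) ≤ ρ).card ≤
      M * (univ.filter fun y : Fin n → F => hammingNorm y ≤ ρ).card ^ (s - 2) := by
  have hcard : Fintype.card {l : Fin s // l ≠ i ∧ l ≠ j} = s - 2 := by
    rw [Fintype.card_subtype]
    have : (univ.filter fun l : Fin s => l ≠ i ∧ l ≠ j) = univ \ {i, j} := by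
      ext l; simp
    rw [this, Finset.card_sdiff_of_subset (Finset.subset_univ _), Finset.card_pair hij]
    simp
  have hpi : (Fintype.piFinset (fun _ : {l : Fin s // l ≠ i ∧ l ≠ j} =>
      (univ.filter fun y : Fin n → F => hammingNorm y ≤ ρ))).card =
      (univ.filter fun y : Fin n → F => hammingNorm y ≤ ρ).card ^ (s - 2) := by
    rw [Fintype.card_piFinset, Finset.prod_const, Finset.card_univ, hcard]
  rw [← hpi]
  refine Finset.card_le_mul_card_image_of_maps_to
    (f := fun (Y : Matrix (Fin s) (Fin n) F) (l : {l : Fin s // l ≠ i ∧ l ≠ j}) => Y l.1) ?_ M ?_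
  · intro Y hY
    simp only [mem_filter, mem_univ, true_and, Fintype.mem_piFinset] at hY ⊢
    intro l
    exact hY.1 l
  · intro W _
    refine le_trans ?_ (hM (∑ l : {l : Fin s // l ≠ i ∧ l ≠ j}, a l.1 • W l))
    refine Finset.card_le_card_of_injOn (fun Y l => (Y i l, Y j l)) ?_ ?_
    · intro Y hY
      simp only [Finset.coe_filter, mem_filter, mem_univ, true_and, Set.mem_ofPred_eq] at hY ⊢
      obtain ⟨⟨h1, h2⟩, rfl⟩ := hY
      refine ⟨h1 i, h1 j, ?_⟩
      convert h2 using 2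
      have h3 : ∑ l, a l • Y l = a i • Y i + a j • Y j +
          ∑ l : {l : Fin s // l ≠ i ∧ l ≠ j}, a l.1 • Y l.1 := by
        rw [← Finset.sum_subtype (univ.filter fun l : Fin s => l ≠ i ∧ l ≠ j) (by simp)
          (fun l => a l • Y l)]
        have : (univ.filter fun l : Fin s => l ≠ i ∧ l ≠ j) = univ \ {i, j} := by
          ext l; simp
        rw [this, ← Finset.sum_pair (f := fun l => a l • Y l) hij, add_comm,
          Finset.sum_sdiff (Finset.subset_univ _)]
      rw [h3]
      rfl
    · intro Y hY Y' hY' h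
      simp only [Finset.coe_filter, mem_filter, mem_univ, true_and, Set.mem_ofPred_eq] at hY hY'
      funext l
      by_cases hi : l = i
      · subst hi; funext m; exact congrArg Prod.fst (congrFun h m)
      by_cases hj : l = j
      · subst hj; funext m; exact congrArg Prod.snd (congrFun h m)
      have := congrFun (hY.2.trans hY'.2.symm) ⟨l, hi, hj⟩
      exact this

lemma theta_lt (δ ε : ℝ) (h0 : 0 < δ) (h1 : δ < 1) (he : 0 < ε) (he1 : ε < 1 - δ) :
    (1 + ε) ^ δ * (1 / (1 + ε) + (1 - 1 / (1 + ε)) * (1 - δ - ε)) < 1 := by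
  have hb := rpow_one_add_le_one_add_mul_self (s := ε) (by linarith) h0.le h1.le
  have hk : 1 / (1 + ε) + (1 - 1 / (1 + ε)) * (1 - δ - ε) = (1 + ε * (1 - δ - ε)) / (1 + ε) := by
    field_simp; ring
  rw [hk, ← mul_div_assoc, div_lt_one (by linarith)]
  have : 0 < 1 + ε * (1 - δ - ε) := by nlinarith
  calc _ ≤ (1 + δ * ε) * (1 + ε * (1 - δ - ε)) := by
        apply mul_le_mul_of_nonneg_right hb this.le
    _ < 1 + ε := by
      have : δ * (1 - δ - ε) < 1 := by nlinarith
      have he2 : 0 < ε ^ 2 := by positivity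
      nlinarith

lemma decay (K θ : ℝ) (hθ0 : 0 < θ) (hθ1 : θ < 1) (hK : 0 < K) :
    ∃ h : ℝ, 0 < h ∧ h < 1 ∧ ∃ N : ℕ, ∀ n : ℕ, N ≤ n →
      K * ((n : ℝ) + 1) ^ 2 * θ ^ n ≤ (2 : ℝ) ^ (-(h * (n : ℝ))) := by
  have hl : Real.logb 2 θ < 0 := Real.logb_neg (by norm_num) hθ0 hθ1
  refine ⟨min (1/2) (-Real.logb 2 θ / 2), by apply lt_min <;> linarith,
    (min_le_left _ _).trans_lt (by norm_num), ?_⟩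
  set h := min (1/2) (-Real.logb 2 θ / 2) with hh
  have h2 : h ≤ -Real.logb 2 θ / 2 := min_le_right _ _
  set ψ : ℝ := (2:ℝ) ^ (-h) with hψ
  have hψ0 : 0 < ψ := by positivity
  have hψθ : θ < ψ := by
    rw [hψ, ← Real.logb_lt_iff_lt_rpow (by norm_num) hθ0]
    linarith
  have hr1 : |θ / ψ| < 1 := by
    rw [abs_of_pos (by positivity), div_lt_one hψ0]; exact hψθ
  have ht := (tendsto_pow_const_mul_const_pow_of_abs_lt_one 2 hr1).const_mul (4 * K)
  rw [mul_zero] at ht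
  obtain ⟨N, hN⟩ := Filter.eventually_atTop.1 (ht.eventually (eventually_le_nhds one_pos))
  refine ⟨max N 1, fun n hn => ?_⟩
  have h3 := hN n (le_trans (le_max_left _ _) hn)
  have hn1 : (1:ℝ) ≤ n := by exact_mod_cast le_trans (le_max_right _ _) hn
  have h4 : (2 : ℝ) ^ (-(h * (n : ℝ))) = ψ ^ n := by
    rw [hψ, ← Real.rpow_natCast, ← Real.rpow_mul (by norm_num)]; ring_nf
  rw [h4]
  rw [div_pow] at h3
  have hp : 0 < ψ ^ n := by positivity
  have h5 : 4 * K * ((n:ℝ) ^ 2 * (θ ^ n / ψ ^ n)) = (4 * K * (n:ℝ)^2 * θ ^ n) / ψ ^ n := by ring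
  rw [h5, div_le_one hp] at h3
  refine le_trans ?_ h3
  apply mul_le_mul_of_nonneg_right _ (by positivity)
  nlinarith [mul_nonneg hK.le (by nlinarith : (0:ℝ) ≤ 4 * n^2 - (n+1)^2)]

/-- For a prime power `q` (realized as the cardinality of a finite field `F`)
and a constant `δ ∈ (0, 1 - 1/q)`, there is a constant `h_δ ∈ (0,1)` such that for all
sufficiently large `n`, with `d - 1 = ⌊δn⌋`: for a uniformly random `k × n` matrix `G` over
`F`, and nonzero pairwise non-proportional vectors `x_1, …, x_r ∈ F^k` (`r ≤ n`) whose first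
`s` members form a maximal linearly independent subset with `s < r`, the probability that
`wt(x_i G) ≤ d - 1` for every `i` is at most `(Vol_q(n, d-1)/q^n)^s · 2^{-h_δ n}`
(expressed by counting matrices, the total number of matrices being `q^{kn}`). -/
theorem dependent_low_weight_codewords_bound
    (q : ℕ) (F : Type) [Field F] [Fintype F] [DecidableEq F] (hF : Fintype.card F = q)
    (δ : ℝ) (hδ0 : 0 < δ) (hδ1 : δ < 1 - 1 / (q : ℝ)) :
    ∃ h : ℝ, 0 < h ∧ h < 1 ∧ ∃ N : ℕ, ∀ n : ℕ, N ≤ n →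
      ∀ k r s : ℕ, r ≤ n → ∀ hsr : s < r,
      ∀ x : Fin r → Fin k → F,
        (∀ i, x i ≠ 0) →
        (∀ i j, i ≠ j → ∀ t : F, x i ≠ t • x j) →
        LinearIndependent F (fun i : Fin s => x (Fin.castLE hsr.le i)) →
        (∀ j, x j ∈ Submodule.span F (Set.range fun i : Fin s => x (Fin.castLE hsr.le i))) →
        (((Finset.univ : Finset (Matrix (Fin k) (Fin n) F)).filter fun G =>
            ∀ i, hammingNorm (Matrix.vecMul (x i) G) ≤ ⌊δ * (n : ℝ)⌋₊).card : ℝ) ≤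
          ((∑ i ∈ Finset.range (⌊δ * (n : ℝ)⌋₊ + 1), (n.choose i : ℝ) * ((q : ℝ) - 1) ^ i) /
              (q : ℝ) ^ n) ^ s *
            (2 : ℝ) ^ (-(h * (n : ℝ))) * (q : ℝ) ^ (k * n) := by
  classical
  have hq2 : 1 < q := by rw [← hF]; exact Fintype.one_lt_card
  have hq0 : (0:ℝ) < q := by positivity
  have hq1 : (0:ℝ) < (q:ℝ) - 1 := by
    have : (1:ℝ) < q := by exact_mod_cast hq2
    linarith
  have hδlt : δ < 1 := by
    have : 0 < 1 / (q:ℝ) := by positivity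
    linarith
  have hd : 0 < 1 - δ := by linarith
  set l : ℝ := δ / (1 - δ) / ((q:ℝ) - 1) with hl
  have hl0 : 0 < l := by positivity
  have hl1 : l < 1 := by
    rw [hl, div_div, div_lt_one (by positivity)]
    have : δ * q < q - 1 := by
      have := mul_lt_mul_of_pos_right hδ1 hq0
      have e : (1 - 1 / (q:ℝ)) * q = q - 1 := by field_simp
      linarith
    nlinarith
  have hgl : ((q:ℝ) - 1) * l = δ / (1 - δ) := by rw [hl]; field_simp
  have hZ : 1 + ((q:ℝ) - 1) * l = 1 / (1 - δ) := by rw [hgl]; field_simp; ring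
  set ε : ℝ := δ * (1 - δ) * (1 - l) with hε
  have hε0 : 0 < ε := by
    have : 0 < 1 - l := by linarith
    positivity
  have hε1 : ε < 1 - δ := by
    have h1 : δ * (1 - l) < 1 := by nlinarith
    have : ε = (1 - δ) * (δ * (1 - l)) := by rw [hε]; ring
    rw [this]; nlinarith
  set t : ℝ := 1 / (1 + ε) with ht
  have ht0 : 0 < t := by positivity
  have ht1 : t < 1 := by rw [ht, div_lt_one (by positivity)]; linarith
  set κ : ℝ := t + (1 - t) * (1 - δ - ε) with hκ
  have hκ0 : 0 < κ := by
    have : 0 ≤ (1 - t) * (1 - δ - ε) := mul_nonneg (by linarith) (by linarith)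
    linarith
  set θ : ℝ := (1 + ε) ^ δ * κ with hθ
  have hθ1 : θ < 1 := theta_lt δ ε hδ0 hδlt hε0 hε1
  have hθ0 : 0 < θ := by positivity
  obtain ⟨h, hh0, hh1, N, hN⟩ := decay ((1 / (1 - δ)) ^ 2) θ hθ0 hθ1 (by positivity)
  refine ⟨h, hh0, hh1, N, ?_⟩
  intro n hn k r s _ hsr x hx0 hxp hli hspan
  have hNn := hN n hn
  set ρ := ⌊δ * (n : ℝ)⌋₊ with hρ
  set V : ℝ := ∑ i ∈ Finset.range (ρ + 1), (n.choose i : ℝ) * ((q : ℝ) - 1) ^ i with hV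
  have hV0 : 0 ≤ V := Finset.sum_nonneg fun i _ => by positivity
  have hρ1 : (ρ : ℝ) ≤ δ * n := Nat.floor_le (by positivity)
  -- lower bound on the volume
  have hVlow : (1 / (1 - δ)) ^ n ≤ ((n:ℝ) + 1) * (1 / (1 - δ)) * (l ^ ρ * V) := by
    have h1 := vol_lower n δ hδ0 hδlt
    rw [← hgl, hZ] at h1
    refine h1.trans ?_
    apply mul_le_mul_of_nonneg_left _ (by positivity)
    have h2 : (n.choose ρ : ℝ) * ((q : ℝ) - 1) ^ ρ ≤ V :=
      Finset.single_le_sum (f := fun i => (n.choose i : ℝ) * ((q : ℝ) - 1) ^ i)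
        (fun i _ => by positivity) (Finset.self_mem_range_succ ρ)
    calc (n.choose ρ : ℝ) * (((q:ℝ) - 1) * l) ^ ρ
        = l ^ ρ * ((n.choose ρ : ℝ) * ((q : ℝ) - 1) ^ ρ) := by rw [mul_pow]; ring
      _ ≤ l ^ ρ * V := by gcongr
  have hbase : t * (1 + ((q : ℝ) - 1) * l) ^ 2 +
      (1 - t) * (l * (1 + ((q : ℝ) - 1) * l) + (1 - l)) = (1 / (1 - δ)) ^ 2 * κ := by
    rw [hZ, hκ, hε]
    field_simp
    ring
  have htρ : κ ^ n ≤ θ ^ n * t ^ ρ := by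
    rw [hθ, mul_pow]
    have e1 : (1:ℝ) ≤ ((1 + ε) ^ δ) ^ n * t ^ ρ := by
      rw [ht, one_div, inv_pow, ← div_eq_mul_inv, one_le_div (by positivity),
        ← Real.rpow_natCast, ← Real.rpow_natCast, ← Real.rpow_mul (by positivity)]
      exact Real.rpow_le_rpow_of_exponent_le (by linarith) hρ1
    have : 0 < κ ^ n := by positivity
    nlinarith
  have hpair : ∀ (a b : F) (z : Fin n → F), a ≠ 0 → b ≠ 0 →
      ((univ.filter fun p : Fin n → F × F => hammingNorm (fun i => (p i).1) ≤ ρ ∧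
      hammingNorm (fun i => (p i).2) ≤ ρ ∧
      hammingNorm (fun i => a * (p i).1 + b * (p i).2 + z i) ≤ ρ).card : ℝ) ≤
      V ^ 2 * (2 : ℝ) ^ (-(h * (n : ℝ))) := by
    intro a b z ha hb
    have h1 := pair_bound l t hl0 hl1 ht0 ht1 a b z ha hb ρ
    rw [hF, hbase] at h1
    have hpos : 0 < l ^ ρ * l ^ ρ * t ^ ρ := by positivity
    refine le_of_mul_le_mul_right (h1.trans ?_) hpos
    calc ((1 / (1 - δ)) ^ 2 * κ) ^ n = ((1 / (1 - δ)) ^ n) ^ 2 * κ ^ n := by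
          rw [mul_pow, ← pow_mul, ← pow_mul, mul_comm 2 n]
      _ ≤ (((n:ℝ) + 1) * (1 / (1 - δ)) * (l ^ ρ * V)) ^ 2 * (θ ^ n * t ^ ρ) := by gcongr
      _ = ((1 / (1 - δ)) ^ 2 * ((n:ℝ) + 1) ^ 2 * θ ^ n) * (V ^ 2 * (l ^ ρ * l ^ ρ * t ^ ρ)) := by
          ring
      _ ≤ (2 : ℝ) ^ (-(h * (n : ℝ))) * (V ^ 2 * (l ^ ρ * l ^ ρ * t ^ ρ)) := by gcongr
      _ = _ := by ring
  -- a dependent vector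
  set X : Fin s → Fin k → F := fun i => x (Fin.castLE hsr.le i) with hXdef
  obtain ⟨a, ha⟩ := (Submodule.mem_span_range_iff_exists_fun F).1 (hspan ⟨s, hsr⟩)
  have hne : ∀ i : Fin s, (⟨s, hsr⟩ : Fin r) ≠ Fin.castLE hsr.le i := by
    intro i hi
    have := congrArg Fin.val hi
    simp at this
    omega
  obtain ⟨i, hi⟩ : ∃ i, a i ≠ 0 := by
    by_contra hcon
    push Not at hcon
    apply hx0 ⟨s, hsr⟩
    rw [← ha]
    simp [hcon]
  obtain ⟨j, hji, hj⟩ : ∃ j, j ≠ i ∧ a j ≠ 0 := by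
    by_contra hcon
    push Not at hcon
    apply hxp _ _ (hne i) (a i)
    rw [← ha, Finset.sum_eq_single i]
    · intro j _ hji
      rw [hcon j hji, zero_smul]
    · simp
  set M := ⌊V ^ 2 * (2 : ℝ) ^ (-(h * (n : ℝ)))⌋₊ with hM
  have hrows := rows_bound (n := n) ρ a i j hji.symm M
    (fun z => Nat.le_floor (hpair (a i) (a j) z hi hj))
  have hMle : (M : ℝ) ≤ V ^ 2 * (2 : ℝ) ^ (-(h * (n : ℝ))) := Nat.floor_le (by positivity)
  have hs2 : 2 ≤ s := by
    have h1 := i.2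
    have h2 := j.2
    have h3 : j.val ≠ i.val := fun h => hji (Fin.ext h)
    omega
  have hcount := count_G (n := n) X hli (fun Y => (∀ l, hammingNorm (Y l) ≤ ρ) ∧
      hammingNorm (∑ l, a l • Y l) ≤ ρ)
  have hball := ball_card (n := n) (F := F) ρ
  rw [hF] at hball hcount
  rw [← hV] at hball
  set A := (univ.filter fun Y : Matrix (Fin s) (Fin n) F => (∀ l, hammingNorm (Y l) ≤ ρ) ∧
      hammingNorm (∑ l, a l • Y l) ≤ ρ).card with hA
  have hAle : (A : ℝ) ≤ V ^ s * (2 : ℝ) ^ (-(h * (n : ℝ))) := by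
    have h1 : (A : ℝ) ≤ M * V ^ (s - 2) := by rw [← hball]; exact_mod_cast hrows
    calc (A : ℝ) ≤ M * V ^ (s - 2) := h1
      _ ≤ (V ^ 2 * (2 : ℝ) ^ (-(h * (n : ℝ)))) * V ^ (s - 2) := by gcongr
      _ = V ^ (2 + (s - 2)) * (2 : ℝ) ^ (-(h * (n : ℝ))) := by rw [pow_add]; ring
      _ = _ := by rw [Nat.add_sub_cancel' hs2]
  have hsub : ((Finset.univ : Finset (Matrix (Fin k) (Fin n) F)).filter fun G =>
      ∀ i, hammingNorm (Matrix.vecMul (x i) G) ≤ ρ).card ≤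
      (univ.filter fun G : Matrix (Fin k) (Fin n) F =>
        (∀ l, hammingNorm ((Matrix.of X * G) l) ≤ ρ) ∧
        hammingNorm (∑ l, a l • (Matrix.of X * G) l) ≤ ρ).card := by
    apply Finset.card_le_card
    intro G hG
    simp only [mem_filter, mem_univ, true_and] at hG ⊢
    have hrow : ∀ l, (Matrix.of X * G) l = Matrix.vecMul (X l) G := by
      intro l
      funext m
      rfl
    refine ⟨fun l => by rw [hrow]; exact hG _, ?_⟩
    have h1 := hG ⟨s, hsr⟩
    rw [← ha, Matrix.sum_vecMul] at h1
    simp_rw [Matrix.smul_vecMul] at h1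
    simp_rw [hrow]
    exact h1
  have hcR : ((univ.filter fun G : Matrix (Fin k) (Fin n) F =>
        (∀ l, hammingNorm ((Matrix.of X * G) l) ≤ ρ) ∧
        hammingNorm (∑ l, a l • (Matrix.of X * G) l) ≤ ρ).card : ℝ) * (q:ℝ) ^ (s * n) =
      A * (q:ℝ) ^ (k * n) := by
    have hc : (univ.filter fun G : Matrix (Fin k) (Fin n) F =>
        (∀ l, hammingNorm ((Matrix.of X * G) l) ≤ ρ) ∧
        hammingNorm (∑ l, a l • (Matrix.of X * G) l) ≤ ρ).card * q ^ (s * n) =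
        A * q ^ (k * n) := by
      rw [hA]
      convert hcount
    exact_mod_cast hc
  have hqs : (0:ℝ) < (q:ℝ) ^ (s * n) := by positivity
  refine le_trans (Nat.cast_le.2 hsub) ?_
  refine le_of_mul_le_mul_right ?_ hqs
  rw [hcR]
  calc (A:ℝ) * (q:ℝ) ^ (k * n) ≤ (V ^ s * (2 : ℝ) ^ (-(h * (n : ℝ)))) * (q:ℝ) ^ (k * n) := by gcongr
    _ = _ := by
      rw [div_pow, ← pow_mul, mul_comm n s]
      field_simp
end
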